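/- arXiv:2104.12960 — 3 statements merged into one kernel-verified Lean document; each statement's English description precedes it below -/
import Mathlib

section
/- Let (Φ₁,Φ₂) be any branching mechanism. Then there exist positive reals (γ_k)_{k≥1} and two-type offspring laws (g_{k,1},g_{k,2})_{k≥1} such that conditions (A), (C) and (D) hold with Φ_{k,1}(λ₁,λ₂) → Φ₁(λ₁,λ₂) and e^{λ₂}Φ_{k,2}(λ₁,λ₂) → Φ₂(λ₁,λ₂) for all (λ₁,λ₂) ∈ [0,∞)² as k → ∞. -/
open MeasureTheory Filter Set

noncomputable section

/-- The state space `𝕄 = [0,∞) × ℕ`, as a subset of `ℝ²`. -/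
def Mset : Set (ℝ × ℝ) := {z | 0 ≤ z.1 ∧ ∃ n : ℕ, z.2 = (n : ℝ)}

/-- The space `𝕄₋₁ = [0,∞) × (ℕ ∪ {-1})`, as a subset of `ℝ²`. -/
def Mm1set : Set (ℝ × ℝ) := {z | 0 ≤ z.1 ∧ ∃ n : ℤ, (-1 : ℤ) ≤ n ∧ z.2 = (n : ℝ)}

/-- The data of a branching mechanism `(Φ₁, Φ₂)` of a mixed state branching process. -/
structure BranchingMechanism where
  a11 : ℝ
  a21 : ℝ
  alpha : ℝ
  a21_nonneg : 0 ≤ a21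
  alpha_nonneg : 0 ≤ alpha
  n1 : Measure (ℝ × ℝ)
  n2 : Measure (ℝ × ℝ)
  n1_sigmaFinite : SigmaFinite n1
  n2_sigmaFinite : SigmaFinite n2
  /-- `n₁` is supported on `𝕄` -/
  n1_supp : n1 Msetᶜ = 0
  /-- `n₂` is supported on `𝕄₋₁` -/
  n2_supp : n2 Mm1setᶜ = 0
  /-- `n₁` does not charge the origin -/
  n1_zero : n1 {0} = 0
  /-- `n₂` does not charge the origin -/
  n2_zero : n2 {0} = 0
  /-- `n₂([0,∞) × {-1}) < ∞` -/
  n2_neg1 : n2 {z : ℝ × ℝ | z.2 = -1} ≠ ⊤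
  /-- `∫ (z₁ ∧ z₁² + z₂) n₁(dz) < ∞` -/
  n1_moment : ∫⁻ z, ENNReal.ofReal (min z.1 (z.1 ^ 2) + z.2) ∂n1 ≠ ⊤
  /-- `∫ (z₁ + |z₂|) n₂(dz) < ∞` -/
  n2_moment : ∫⁻ z, ENNReal.ofReal (z.1 + |z.2|) ∂n2 ≠ ⊤

/-- `Φ₁(λ) = -a₁₁λ₁ - αλ₁² - ∫ (e^{-⟨λ,z⟩} - 1 + λ₁z₁) n₁(dz)`. -/
def mPhi1 (B : BranchingMechanism) (l : ℝ × ℝ) : ℝ :=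
  -B.a11 * l.1 - B.alpha * l.1 ^ 2 -
    ∫ z, (Real.exp (-(l.1 * z.1 + l.2 * z.2)) - 1 + l.1 * z.1) ∂B.n1

/-- `Φ₂(λ) = a₂₁λ₁ + ∫ (1 - e^{-⟨λ,z⟩}) n₂(dz)`. -/
def mPhi2 (B : BranchingMechanism) (l : ℝ × ℝ) : ℝ :=
  B.a21 * l.1 + ∫ z, (1 - Real.exp (-(l.1 * z.1 + l.2 * z.2))) ∂B.n2


/-- Generating function of a two-type offspring distribution on `ℕ²`. -/
def pgf2 (p : ℕ × ℕ → ℝ) (s : ℝ × ℝ) : ℝ :=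
  ∑' i : ℕ × ℕ, p i * s.1 ^ i.1 * s.2 ^ i.2

/-- `Φ_{k,1}(λ) = kγ_k (e^{-λ₁/k} - g_{k,1}(e^{-λ₁/k}, e^{-λ₂}))`; the index `k ≥ 1`
of the paper corresponds to `k + 1` here. -/
def Phik1 (γ : ℕ → ℝ) (g1 : ℕ → ℝ × ℝ → ℝ) (k : ℕ) (l : ℝ × ℝ) : ℝ :=
  (k + 1 : ℝ) * γ k *
    (Real.exp (-l.1 / (k + 1 : ℝ)) - g1 k (Real.exp (-l.1 / (k + 1 : ℝ)), Real.exp (-l.2)))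

/-- `Φ_{k,2}(λ) = γ_k (e^{-λ₂} - g_{k,2}(e^{-λ₁/k}, e^{-λ₂}))`; the index `k ≥ 1`
of the paper corresponds to `k + 1` here. -/
def Phik2 (γ : ℕ → ℝ) (g2 : ℕ → ℝ × ℝ → ℝ) (k : ℕ) (l : ℝ × ℝ) : ℝ :=
  γ k * (Real.exp (-l.2) - g2 k (Real.exp (-l.1 / (k + 1 : ℝ)), Real.exp (-l.2)))

/-!
Give particles of the first type mass `1/K`. For a finite measure `μ` on `ℕ²` and `c` large, the
offspring law that puts mass `μ {i} / c` on `i` and leaves the particle unchanged otherwise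
satisfies `c (s^b - g(s)) = ∫ (s^b - s^i) μ(di)`, so it suffices to approximate `Φ₁` and
`e^{-λ₂}Φ₂` by such integrals at `s = (e^{-λ₁/K}, e^{-λ₂})`; a common `γ_K` dominating the masses
and `K` then does for both types. Take for `μ` the jump measure, restricted to a set of finite
measure and with jumps rounded down to multiples of `1/K`, plus atoms at `(0, 0)` and `(2, 0)`
producing drift, compensation and the quadratic term. The remaining integrals converge, with
Lipschitz constants uniform in `K`, by dominated convergence, because the difference of two values
of the integrand is at most a constant multiple of the weight `z₁ ∧ z₁² + z₂` (respectively `z₁ +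
|z₂|`) times the distance of the arguments.
-/

section EquiLipschitz

variable {X : Type*} [PseudoMetricSpace X] {f g : ℕ → X → ℝ} {φ ψ : X → ℝ} {s : Set X}

/-- The sequence `f` converges to `φ` pointwise on `s` and is Lipschitz on `s` uniformly in the
index. For `s` a bounded rectangle this is what conditions (C) and (D) ask of `Φ_{k,1}` and
`e^{λ₂}Φ_{k,2}`. -/
structure EquiLipschitzTendstoOn (f : ℕ → X → ℝ) (φ : X → ℝ) (s : Set X) : Prop where
  lipschitz : ∃ L : NNReal, ∀ k, LipschitzOnWith L (f k) s
  tendsto : ∀ x ∈ s, Tendsto (fun k => f k x) atTop (nhds (φ x))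

namespace EquiLipschitzTendstoOn

theorem congr (hf : EquiLipschitzTendstoOn f φ s) (h : ∀ k, EqOn (f k) (g k) s) :
    EquiLipschitzTendstoOn g φ s := by
  obtain ⟨L, hL⟩ := hf.lipschitz
  refine ⟨⟨L, fun k => ?_⟩, fun x hx => (hf.tendsto x hx).congr fun k => h k hx⟩
  exact fun x hx y hy => by simpa only [h k hx, h k hy] using hL k hx hy

theorem of_tendsto_const {c : ℕ → ℝ} {a : ℝ} (h : Tendsto c atTop (nhds a)) :
    EquiLipschitzTendstoOn (fun k (_ : X) => c k) (fun _ => a) s :=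
  ⟨⟨0, fun _ => LipschitzWith.const _ |>.lipschitzOnWith⟩, fun _ _ => h⟩

theorem add (hf : EquiLipschitzTendstoOn f φ s) (hg : EquiLipschitzTendstoOn g ψ s) :
    EquiLipschitzTendstoOn (fun k x => f k x + g k x) (fun x => φ x + ψ x) s := by
  obtain ⟨L, hL⟩ := hf.lipschitz
  obtain ⟨M, hM⟩ := hg.lipschitz
  exact ⟨⟨L + M, fun k => (hL k).add (hM k)⟩, fun x hx => (hf.tendsto x hx).add (hg.tendsto x hx)⟩

theorem sub (hf : EquiLipschitzTendstoOn f φ s) (hg : EquiLipschitzTendstoOn g ψ s) :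
    EquiLipschitzTendstoOn (fun k x => f k x - g k x) (fun x => φ x - ψ x) s := by
  obtain ⟨L, hL⟩ := hf.lipschitz
  obtain ⟨M, hM⟩ := hg.lipschitz
  exact ⟨⟨L + M, fun k => (hL k).sub (hM k)⟩, fun x hx => (hf.tendsto x hx).sub (hg.tendsto x hx)⟩

theorem exists_abs_le (hf : EquiLipschitzTendstoOn f φ s) (hs : Bornology.IsBounded s) :
    ∃ M, ∀ k, ∀ x ∈ s, |f k x| ≤ M := by
  obtain rfl | ⟨x₀, hx₀⟩ := s.eq_empty_or_nonempty
  · exact ⟨0, by simp⟩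
  obtain ⟨L, hL⟩ := hf.lipschitz
  obtain ⟨C, hC⟩ := (Metric.isBounded_range_of_tendsto _ (hf.tendsto x₀ hx₀)).exists_norm_le
  refine ⟨C + L * Metric.diam s, fun k x hx => ?_⟩
  calc |f k x| ≤ |f k x₀| + |f k x - f k x₀| := by
        simpa using abs_add_le (f k x₀) (f k x - f k x₀)
    _ ≤ C + L * dist x x₀ :=
        add_le_add (hC _ (mem_range_self k)) ((hL k).dist_le_mul x hx x₀ hx₀)
    _ ≤ C + L * Metric.diam s := by
        gcongr
        exact Metric.dist_le_diam_of_mem hs hx hx₀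

theorem mul (hf : EquiLipschitzTendstoOn f φ s) (hg : EquiLipschitzTendstoOn g ψ s)
    (hs : Bornology.IsBounded s) :
    EquiLipschitzTendstoOn (fun k x => f k x * g k x) (fun x => φ x * ψ x) s := by
  obtain ⟨L, hL⟩ := hf.lipschitz
  obtain ⟨M, hM⟩ := hg.lipschitz
  obtain ⟨A, hA⟩ := hf.exists_abs_le hs
  obtain ⟨B, hB⟩ := hg.exists_abs_le hs
  refine ⟨⟨(A * M + B * L).toNNReal, fun k => LipschitzOnWith.of_dist_le' fun x hx y hy => ?_⟩,
    fun x hx => (hf.tendsto x hx).mul (hg.tendsto x hx)⟩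
  have hfk := (hL k).dist_le_mul x hx y hy
  have hgk := (hM k).dist_le_mul x hx y hy
  rw [Real.dist_eq] at hfk hgk ⊢
  have hA₀ : 0 ≤ A := (abs_nonneg _).trans (hA k x hx)
  calc |f k x * g k x - f k y * g k y|
      = |f k x * (g k x - g k y) + g k y * (f k x - f k y)| := by congr 1; ring
    _ ≤ |f k x| * |g k x - g k y| + |g k y| * |f k x - f k y| := by
        rw [← abs_mul, ← abs_mul]; exact abs_add_le _ _
    _ ≤ A * (M * dist x y) + B * (L * dist x y) := by
        gcongr
        exacts [hA k x hx, (abs_nonneg _).trans (hB k y hy), hB k y hy]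
    _ = (A * M + B * L) * dist x y := by ring

variable {α : Type*} [MeasurableSpace α] {μ : Measure α} {F : ℕ → X → α → ℝ} {Flim : X → α → ℝ}
  {G : α → ℝ} {x₀ : X}

theorem integral (hx₀ : x₀ ∈ s) (hG : Integrable G μ)
    (hmeas : ∀ k x, AEStronglyMeasurable (F k x) μ) (hzero : ∀ k z, F k x₀ z = 0)
    (hlip : ∀ k, ∀ x ∈ s, ∀ y ∈ s, ∀ᵐ z ∂μ, |F k x z - F k y z| ≤ G z * dist x y)
    (hlim : ∀ x ∈ s, ∀ᵐ z ∂μ, Tendsto (fun k => F k x z) atTop (nhds (Flim x z))) :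
    EquiLipschitzTendstoOn (fun k x => ∫ z, F k x z ∂μ) (fun x => ∫ z, Flim x z ∂μ) s := by
  have hbound : ∀ k, ∀ x ∈ s, ∀ᵐ z ∂μ, ‖F k x z‖ ≤ G z * dist x x₀ := fun k x hx => by
    simpa only [hzero, sub_zero, Real.norm_eq_abs] using hlip k x hx x₀ hx₀
  have hint : ∀ k, ∀ x ∈ s, Integrable (F k x) μ := fun k x hx =>
    (hG.mul_const _).mono' (hmeas k x) (hbound k x hx)
  refine ⟨⟨(∫ z, G z ∂μ).toNNReal, fun k => LipschitzOnWith.of_dist_le' fun x hx y hy => ?_⟩,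
    fun x hx => tendsto_integral_of_dominated_convergence _ (fun k => hmeas k x)
      (hG.mul_const _) (fun k => hbound k x hx) (hlim x hx)⟩
  rw [Real.dist_eq, ← integral_sub (hint k x hx) (hint k y hy), ← integral_mul_const]
  exact norm_integral_le_of_norm_le (f := fun z => F k x z - F k y z) (hG.mul_const _)
    (hlip k x hx y hy)

theorem setIntegral {E : ℕ → Set α} (hE : ∀ k, MeasurableSet (E k))
    (hcover : ∀ᵐ z ∂μ, ∀ᶠ k in atTop, z ∈ E k) (hx₀ : x₀ ∈ s) (hG : Integrable G μ)
    (hG₀ : ∀ᵐ z ∂μ, 0 ≤ G z) (hmeas : ∀ k x, AEStronglyMeasurable (F k x) μ)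
    (hzero : ∀ k z, F k x₀ z = 0)
    (hlip : ∀ k, ∀ x ∈ s, ∀ y ∈ s, ∀ᵐ z ∂μ, z ∈ E k → |F k x z - F k y z| ≤ G z * dist x y)
    (hlim : ∀ x ∈ s, ∀ᵐ z ∂μ, Tendsto (fun k => F k x z) atTop (nhds (Flim x z))) :
    EquiLipschitzTendstoOn (fun k x => ∫ z in E k, F k x z ∂μ) (fun x => ∫ z, Flim x z ∂μ) s := by
  simp only [← fun k x => integral_indicator (f := F k x) (μ := μ) (hE k)]
  refine integral hx₀ hG (fun k x => (hmeas k x).indicator (hE k)) ?_ ?_ ?_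
  · simp [indicator, hzero]
  · intro k x hx y hy
    filter_upwards [hlip k x hx y hy, hG₀] with z hz hGz
    by_cases hzE : z ∈ E k
    · simpa only [indicator_of_mem hzE] using hz hzE
    · simpa only [indicator_of_notMem hzE, sub_self, abs_zero] using mul_nonneg hGz dist_nonneg
  · intro x hx
    filter_upwards [hlim x hx, hcover] with z hz hzE
    exact hz.congr' (hzE.mono fun k hk => (indicator_of_mem hk _).symm)

end EquiLipschitzTendstoOn

end EquiLipschitz

section OffspringLaw

theorem hasSum_measureReal_singleton_mul {ι : Type*} [Countable ι] [MeasurableSpace ι]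
    [MeasurableSingletonClass ι] {μ : Measure ι} {f : ι → ℝ} (hf : Integrable f μ) :
    HasSum (fun i => μ.real {i} * f i) (∫ i, f i ∂μ) := by
  have h := hasSum_integral_measure (μ := fun i => μ {i} • Measure.dirac i) (f := f)
    (by rwa [Measure.sum_smul_dirac])
  simpa only [Measure.sum_smul_dirac, integral_smul_measure, integral_dirac, smul_eq_mul,
    ← measureReal_def] using h

/-- The offspring law, for branching at total rate `c`, under which a particle of type `b` turns
into `i` at rate `μ {i}`; the remaining mass `c - μ univ` goes to `b` itself, where nothing
happens. -/
def offspringLaw {ι : Type*} [MeasurableSpace ι] [DecidableEq ι] (μ : Measure ι) (b : ι) (c : ℝ)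
    (i : ι) : ℝ :=
  (μ.real {i} + if i = b then c - μ.real univ else 0) / c

section Countable

variable {ι : Type*} [MeasurableSpace ι] [DecidableEq ι] {μ : Measure ι} {b : ι} {c : ℝ}

theorem offspringLaw_nonneg (hc : 0 ≤ c) (hμ : μ.real univ ≤ c) (i : ι) :
    0 ≤ offspringLaw μ b c i := by
  refine div_nonneg (add_nonneg measureReal_nonneg ?_) hc
  split_ifs
  exacts [sub_nonneg.2 hμ, le_rfl]

variable [Countable ι] [MeasurableSingletonClass ι]

theorem hasSum_offspringLaw_mul [IsFiniteMeasure μ] (hc : c ≠ 0) {f : ι → ℝ}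
    (hf : Integrable f μ) :
    HasSum (fun i => offspringLaw μ b c i * f i) (f b - (∫ i, (f b - f i) ∂μ) / c) := by
  have hstay : HasSum (fun i => if i = b then (c - μ.real univ) * f b else 0)
      ((c - μ.real univ) * f b) := hasSum_ite_eq b _
  convert! ((hasSum_measureReal_singleton_mul hf).add hstay).div_const c using 1
  · funext i
    rw [offspringLaw]
    split_ifs with hi
    · rw [hi]; ring
    · ring
  · rw [integral_sub (integrable_const _) hf, integral_const, smul_eq_mul]
    field_simp
    ring

theorem hasSum_offspringLaw [IsFiniteMeasure μ] (hc : c ≠ 0) : HasSum (offspringLaw μ b c) 1 := by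
  simpa using hasSum_offspringLaw_mul (b := b) hc (integrable_const (μ := μ) (1 : ℝ))

end Countable

/-- The monomial `s₁^{i₁} s₂^{i₂}`. -/
def biMonomial (s : ℝ × ℝ) (i : ℕ × ℕ) : ℝ := s.1 ^ i.1 * s.2 ^ i.2

/-- For the branching particle system in which a particle of type `b` turns into `i` at rate
`μ {i}`: minus the generator applied to `i ↦ s^i`, evaluated at a single particle `b`. -/
def branchingGenerator (μ : Measure (ℕ × ℕ)) (b : ℕ × ℕ) (s : ℝ × ℝ) : ℝ :=
  ∫ i, (biMonomial s b - biMonomial s i) ∂μ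

variable {μ ν : Measure (ℕ × ℕ)} {b : ℕ × ℕ} {s : ℝ × ℝ}

theorem integrable_biMonomial [IsFiniteMeasure μ] (hs : s ∈ Icc 0 1) :
    Integrable (biMonomial s) μ := by
  obtain ⟨⟨h₁, h₂⟩, h₁', h₂'⟩ := hs
  refine Integrable.of_bound (C := 1) (measurable_of_countable _).aestronglyMeasurable
    (ae_of_all _ fun i => ?_)
  rw [biMonomial, Real.norm_of_nonneg (mul_nonneg (pow_nonneg h₁ _) (pow_nonneg h₂ _))]
  exact mul_le_one₀ (pow_le_one₀ h₁ h₁') (pow_nonneg h₂ _) (pow_le_one₀ h₂ h₂')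

theorem integrable_biMonomial_sub [IsFiniteMeasure μ] (hs : s ∈ Icc 0 1) :
    Integrable (fun i => biMonomial s b - biMonomial s i) μ :=
  (integrable_const _).sub (integrable_biMonomial hs)

theorem mul_biMonomial_sub_pgf2_offspringLaw [IsFiniteMeasure μ] {c : ℝ} (hc : c ≠ 0)
    (hs : s ∈ Icc 0 1) :
    c * (biMonomial s b - pgf2 (offspringLaw μ b c) s) = branchingGenerator μ b s := by
  have hpgf : pgf2 (offspringLaw μ b c) s = biMonomial s b - branchingGenerator μ b s / c := by
    simpa only [pgf2, mul_assoc, biMonomial, branchingGenerator] using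
      (hasSum_offspringLaw_mul hc (integrable_biMonomial hs)).tsum_eq
  rw [hpgf, sub_sub_cancel, mul_div_cancel₀ _ hc]

theorem branchingGenerator_add [IsFiniteMeasure μ] [IsFiniteMeasure ν] (hs : s ∈ Icc 0 1) :
    branchingGenerator (μ + ν) b s = branchingGenerator μ b s + branchingGenerator ν b s :=
  integral_add_measure (integrable_biMonomial_sub hs) (integrable_biMonomial_sub hs)

theorem branchingGenerator_smul_dirac {c : ℝ} (hc : 0 ≤ c) (i : ℕ × ℕ) :
    branchingGenerator (c.toNNReal • Measure.dirac i) b s =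
      c * (biMonomial s b - biMonomial s i) := by
  rw [branchingGenerator, integral_smul_nnreal_measure, integral_dirac, NNReal.smul_def,
    Real.coe_toNNReal c hc, smul_eq_mul]

theorem branchingGenerator_map {α : Type*} [MeasurableSpace α] {κ : Measure α} {T : α → ℕ × ℕ}
    (hT : Measurable T) :
    branchingGenerator (κ.map T) b s = ∫ z, (biMonomial s b - biMonomial s (T z)) ∂κ :=
  integral_map hT.aemeasurable (measurable_of_countable _).aestronglyMeasurable

end OffspringLaw

section LatticeApproximation

theorem abs_exp_sub_exp_le {c p q : ℝ} (hp : p ≤ c) (hq : q ≤ c) :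
    |Real.exp p - Real.exp q| ≤ Real.exp c * |p - q| :=
  Convex.norm_image_sub_le_of_norm_hasDerivWithin_le (s := Iic c)
    (fun x _ => (Real.hasDerivAt_exp x).hasDerivWithinAt)
    (fun x hx => by rw [Real.norm_of_nonneg (Real.exp_pos x).le]; exact Real.exp_le_exp.2 hx)
    (convex_Iic c) hq hp

theorem abs_mul_add_mul_le_dist (l l' : ℝ × ℝ) (x y : ℝ) :
    |(l.1 - l'.1) * x + (l.2 - l'.2) * y| ≤ (|x| + |y|) * dist l l' := by
  calc |(l.1 - l'.1) * x + (l.2 - l'.2) * y|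
      ≤ |l.1 - l'.1| * |x| + |l.2 - l'.2| * |y| := by
        rw [← abs_mul, ← abs_mul]; exact abs_add_le _ _
    _ ≤ dist l l' * |x| + dist l l' * |y| := by
        gcongr
        exacts [le_max_left _ _, le_max_right _ _]
    _ = (|x| + |y|) * dist l l' := by ring

theorem tendsto_natCast_add_one_atTop : Tendsto (fun k : ℕ => (k : ℝ) + 1) atTop atTop :=
  tendsto_atTop_add_const_right _ _ tendsto_natCast_atTop_atTop

/-- What the Laplace variable `a` becomes for particles of mass `1/K`: `K (1 - e^{-a/K})`, the
value of `K(1 - s)` at `s = e^{-a/K}`. -/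
def latticeRate (K a : ℝ) : ℝ := K * (1 - Real.exp (-a / K))

theorem abs_latticeRate_sub_le {K a a' : ℝ} (hK : 0 < K) (ha : 0 ≤ a) (ha' : 0 ≤ a') :
    |latticeRate K a - latticeRate K a'| ≤ |a - a'| := by
  have hexp : |Real.exp (-a' / K) - Real.exp (-a / K)| ≤ Real.exp 0 * |-a' / K - -a / K| :=
    abs_exp_sub_exp_le (div_nonpos_of_nonpos_of_nonneg (neg_nonpos.2 ha') hK.le)
      (div_nonpos_of_nonpos_of_nonneg (neg_nonpos.2 ha) hK.le)
  calc |latticeRate K a - latticeRate K a'|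
      = K * |Real.exp (-a' / K) - Real.exp (-a / K)| := by
        rw [← abs_of_pos hK, ← abs_mul, abs_of_pos hK, latticeRate, latticeRate]; ring_nf
    _ ≤ K * (Real.exp 0 * |-a' / K - -a / K|) := by gcongr
    _ = K * (|a - a'| / K) := by
        rw [Real.exp_zero, one_mul, ← sub_div, abs_div, abs_of_pos hK, neg_sub_neg]
    _ = |a - a'| := mul_div_cancel₀ _ hK.ne'

theorem tendsto_latticeRate_atTop (a : ℝ) : Tendsto (latticeRate · a) atTop (nhds a) := by
  have hderiv : HasDerivAt (fun t => -Real.exp (-a * t)) a 0 := by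
    simpa using! (((hasDerivAt_id (0 : ℝ)).const_mul (-a)).exp).neg
  refine (hderiv.tendsto_slope_zero_right.comp tendsto_inv_atTop_nhdsGT_zero).congr fun K => ?_
  simp only [Function.comp_apply, latticeRate, zero_add, inv_inv, mul_zero, Real.exp_zero,
    smul_eq_mul, div_eq_mul_inv]
  ring

theorem equiLipschitzTendstoOn_latticeRate {s : Set (ℝ × ℝ)} (hs : ∀ l ∈ s, 0 ≤ l.1) :
    EquiLipschitzTendstoOn (fun k l => latticeRate (k + 1) l.1) (fun l => l.1) s where
  lipschitz := ⟨1, fun k => LipschitzOnWith.of_dist_le_mul fun l hl l' hl' => by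
    rw [NNReal.coe_one, one_mul]
    exact (abs_latticeRate_sub_le k.cast_add_one_pos (hs l hl) (hs l' hl')).trans
      (le_max_left _ _)⟩
  tendsto l _ := (tendsto_latticeRate_atTop l.1).comp tendsto_natCast_add_one_atTop

/-- The argument `(e^{-λ₁/K}, e^{-λ₂})` at which the generating functions are evaluated. -/
def expPoint (K : ℝ) (l : ℝ × ℝ) : ℝ × ℝ := (Real.exp (-l.1 / K), Real.exp (-l.2))

theorem expPoint_mem_Icc {K : ℝ} (hK : 0 < K) {l : ℝ × ℝ} (hl : 0 ≤ l) :
    expPoint K l ∈ Icc 0 1 :=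
  ⟨⟨(Real.exp_pos _).le, (Real.exp_pos _).le⟩,
    Real.exp_le_one_iff.2 (div_nonpos_of_nonpos_of_nonneg (neg_nonpos.2 hl.1) hK.le),
    Real.exp_le_one_iff.2 (neg_nonpos.2 hl.2)⟩

theorem biMonomial_expPoint (K : ℝ) (l : ℝ × ℝ) (i : ℕ × ℕ) :
    biMonomial (expPoint K l) i = Real.exp (-(l.1 * (i.1 / K) + l.2 * i.2)) := by
  rw [biMonomial, expPoint, ← Real.exp_nat_mul, ← Real.exp_nat_mul, ← Real.exp_add]
  ring_nf

/-- The offspring of a particle of type `b` at a jump `z`: the `⌊K z₁⌋` particles of mass `1/K`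
that make up the increment `z₁`, and the `z₂` particles of the second type, all on top of `b`. -/
def offspringCount (K : ℝ) (b : ℕ × ℕ) (z : ℝ × ℝ) : ℕ × ℕ :=
  (⌊K * z.1⌋₊ + b.1, ⌊z.2 + b.2⌋₊)

theorem measurable_offspringCount (K : ℝ) (b : ℕ × ℕ) : Measurable (offspringCount K b) :=
  ((Nat.measurable_floor.comp (measurable_fst.const_mul K)).add_const b.1).prodMk
    (Nat.measurable_floor.comp (measurable_snd.add_const _))

/-- The first coordinate of `offspringCount K b z`, in units of mass, paired with the unchanged
second coordinate of `z`. -/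
def gridPoint (K : ℝ) (b : ℕ × ℕ) (z : ℝ × ℝ) : ℝ × ℝ :=
  ((offspringCount K b z).1 / K, z.2)

theorem measurable_gridPoint (K : ℝ) (b : ℕ × ℕ) : Measurable (gridPoint K b) :=
  (((measurable_of_countable _).comp (measurable_offspringCount K b).fst).div_const K).prodMk
    measurable_snd

theorem tendsto_gridPoint_atTop (b : ℕ × ℕ) {z : ℝ × ℝ} (hz : 0 ≤ z.1) :
    Tendsto (gridPoint · b z) atTop (nhds z) := by
  have hfloor : Tendsto (fun K : ℝ => (⌊z.1 * K⌋₊ : ℝ) / K + b.1 / K) atTop (nhds (z.1 + 0)) :=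
    (tendsto_nat_floor_mul_div_atTop hz).add (tendsto_id.const_div_atTop _)
  refine Tendsto.prodMk_nhds ?_ tendsto_const_nhds
  simpa only [add_zero, ← add_div, offspringCount, Nat.cast_add, mul_comm z.1] using hfloor

theorem gridPoint_fst_nonneg {K : ℝ} (hK : 0 < K) (b : ℕ × ℕ) (z : ℝ × ℝ) :
    0 ≤ (gridPoint K b z).1 :=
  div_nonneg (Nat.cast_nonneg _) hK.le

theorem gridPoint_fst_le {K : ℝ} (hK : 0 < K) (b : ℕ × ℕ) {z : ℝ × ℝ} (hz : 0 ≤ z.1) :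
    (gridPoint K b z).1 ≤ z.1 + b.1 / K := by
  rw [gridPoint, offspringCount, Nat.cast_add, add_div, add_le_add_iff_right, div_le_iff₀' hK]
  exact Nat.floor_le (by positivity)

theorem biMonomial_expPoint_offspringCount {K : ℝ} {b : ℕ × ℕ} {z : ℝ × ℝ} {n : ℕ}
    (hn : z.2 + b.2 = n) (l : ℝ × ℝ) :
    biMonomial (expPoint K l) (offspringCount K b z) =
      Real.exp (-(l.1 * (gridPoint K b z).1 + l.2 * (z.2 + b.2))) := by
  simp only [biMonomial_expPoint, gridPoint, offspringCount, hn, Nat.floor_natCast]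

end LatticeApproximation

section Kernels

/-- The integrand `1 - e^{-⟨λ,w⟩}` of `Φ₂`. -/
def laplaceKernel (l w : ℝ × ℝ) : ℝ := 1 - Real.exp (-(l.1 * w.1 + l.2 * w.2))

theorem abs_laplaceKernel_sub_le {c : ℝ} {l l' w : ℝ × ℝ}
    (h : -(l.1 * w.1 + l.2 * w.2) ≤ c) (h' : -(l'.1 * w.1 + l'.2 * w.2) ≤ c) :
    |laplaceKernel l w - laplaceKernel l' w| ≤
      Real.exp c * |(l.1 - l'.1) * w.1 + (l.2 - l'.2) * w.2| := by
  convert abs_exp_sub_exp_le h' h using 2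
  · rw [laplaceKernel, laplaceKernel, sub_sub_sub_cancel_left]
  · congr 1
    ring

/-- The negative of the integrand `e^{-⟨λ,w⟩} - 1 + λ₁w₁` of `Φ₁`, with `λ₁` in the compensating
term replaced by its version for particles of mass `1/K`. -/
def compensatedKernel (K : ℝ) (l w : ℝ × ℝ) : ℝ := laplaceKernel l w - w.1 * latticeRate K l.1

theorem hasDerivAt_compensatedKernel_fst {K : ℝ} (hK : K ≠ 0) (w : ℝ × ℝ) (a b : ℝ) :
    HasDerivAt (fun a => compensatedKernel K (a, b) w)
      (w.1 * (Real.exp (-(a * w.1 + b * w.2)) - Real.exp (-a / K))) a := by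
  have hlaplace : HasDerivAt (fun a => laplaceKernel (a, b) w)
      (-(Real.exp (-(a * w.1 + b * w.2)) * -(1 * w.1))) a :=
    ((((hasDerivAt_id a).mul_const w.1).add_const (b * w.2)).fun_neg).exp.const_sub 1
  have hrate : HasDerivAt (latticeRate K) (K * -(Real.exp (-a / K) * (-1 / K))) a :=
    ((((hasDerivAt_id a).fun_neg).div_const K).exp.const_sub 1).const_mul K
  refine (hlaplace.sub (hrate.const_mul w.1)).congr_deriv ?_
  field_simp

theorem abs_compensatedKernel_sub_le_of_snd_eq {K R : ℝ} (hK : 0 < K) {w : ℝ × ℝ}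
    (hw₁ : 1 / K ≤ w.1) (hw₂ : 0 ≤ w.2) {a a' b : ℝ} (ha : a ∈ Icc 0 R) (ha' : a' ∈ Icc 0 R)
    (hb : b ∈ Icc 0 R) :
    |compensatedKernel K (a, b) w - compensatedKernel K (a', b) w| ≤
      w.1 * (1 - Real.exp (-(R * (w.1 + w.2)))) * |a - a'| := by
  have hx : 0 ≤ w.1 := (one_div_pos.2 hK).le.trans hw₁
  refine Convex.norm_image_sub_le_of_norm_hasDerivWithin_le
    (f := fun u => compensatedKernel K (u, b) w)
    (fun u _ => (hasDerivAt_compensatedKernel_fst hK.ne' w u b).hasDerivWithinAt) ?_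
    (convex_Icc 0 R) ha' ha
  rintro u ⟨hu, huR⟩
  have hlower : Real.exp (-(R * (w.1 + w.2))) ≤ Real.exp (-(u * w.1 + b * w.2)) := by
    rw [mul_add]
    gcongr
    exact hb.2
  have hdiff : Real.exp (-(u * w.1 + b * w.2)) ≤ Real.exp (-u / K) := by
    have hmono : u * (1 / K) ≤ u * w.1 := by gcongr
    have hnonneg : 0 ≤ b * w.2 := mul_nonneg hb.1 hw₂
    rw [Real.exp_le_exp, neg_div, div_eq_mul_one_div]
    linarith
  have hupper : Real.exp (-u / K) ≤ 1 :=
    Real.exp_le_one_iff.2 (div_nonpos_of_nonpos_of_nonneg (neg_nonpos.2 hu) hK.le)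
  rw [norm_mul, Real.norm_of_nonneg hx, Real.norm_of_nonpos (sub_nonpos.2 hdiff)]
  gcongr
  linarith

theorem abs_compensatedKernel_sub_le {K R : ℝ} (hK : 0 < K) {w : ℝ × ℝ} (hw₁ : 1 / K ≤ w.1)
    (hw₂ : 0 ≤ w.2) {l l' : ℝ × ℝ} (hl : l ∈ Icc 0 (R, R)) (hl' : l' ∈ Icc 0 (R, R)) :
    |compensatedKernel K l w - compensatedKernel K l' w| ≤
      (w.1 * (1 - Real.exp (-(R * (w.1 + w.2)))) + w.2) * dist l l' := by
  obtain ⟨⟨ha, hb⟩, haR, hbR⟩ := hl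
  obtain ⟨⟨ha', hb'⟩, haR', -⟩ := hl'
  have hx : 0 ≤ w.1 := (one_div_pos.2 hK).le.trans hw₁
  have hR : 0 ≤ R := ha.trans haR
  have hfst : |compensatedKernel K (l.1, l.2) w - compensatedKernel K (l'.1, l.2) w| ≤
      w.1 * (1 - Real.exp (-(R * (w.1 + w.2)))) * |l.1 - l'.1| :=
    abs_compensatedKernel_sub_le_of_snd_eq hK hw₁ hw₂ ⟨ha, haR⟩ ⟨ha', haR'⟩ ⟨hb, hbR⟩
  have hsnd : |compensatedKernel K (l'.1, l.2) w - compensatedKernel K (l'.1, l'.2) w| ≤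
      w.2 * |l.2 - l'.2| := by
    have h := abs_laplaceKernel_sub_le (c := 0) (l := (l'.1, l.2)) (l' := l') (w := w)
      (neg_nonpos.2 (add_nonneg (mul_nonneg ha' hx) (mul_nonneg hb hw₂)))
      (neg_nonpos.2 (add_nonneg (mul_nonneg ha' hx) (mul_nonneg hb' hw₂)))
    rwa [Real.exp_zero, one_mul, sub_self, zero_mul, zero_add, abs_mul, abs_of_nonneg hw₂,
      mul_comm, ← sub_sub_sub_cancel_right _ _ (w.1 * latticeRate K l'.1)] at h
  have hnonneg : 0 ≤ 1 - Real.exp (-(R * (w.1 + w.2))) :=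
    sub_nonneg.2 (Real.exp_le_one_iff.2 (neg_nonpos.2 (by positivity)))
  calc |compensatedKernel K l w - compensatedKernel K l' w|
      ≤ w.1 * (1 - Real.exp (-(R * (w.1 + w.2)))) * |l.1 - l'.1| + w.2 * |l.2 - l'.2| :=
        (abs_sub_le _ _ _).trans (add_le_add hfst hsnd)
    _ ≤ w.1 * (1 - Real.exp (-(R * (w.1 + w.2)))) * dist l l' + w.2 * dist l l' := by
        gcongr
        exacts [le_max_left _ _, le_max_right _ _]
    _ = (w.1 * (1 - Real.exp (-(R * (w.1 + w.2)))) + w.2) * dist l l' := by ring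

theorem compensatedKernel_zero (K : ℝ) (w : ℝ × ℝ) : compensatedKernel K 0 w = 0 := by
  simp [compensatedKernel, laplaceKernel, latticeRate]

theorem laplaceKernel_zero (w : ℝ × ℝ) : laplaceKernel 0 w = 0 := by
  simp [laplaceKernel]

theorem continuous_laplaceKernel (l : ℝ × ℝ) : Continuous (laplaceKernel l) := by
  unfold laplaceKernel
  fun_prop

theorem continuous_compensatedKernel (K : ℝ) (l : ℝ × ℝ) : Continuous (compensatedKernel K l) :=
  (continuous_laplaceKernel l).sub (continuous_fst.mul_const _)

theorem tendsto_laplaceKernel_gridPoint (l : ℝ × ℝ) (b : ℕ × ℕ) {z : ℝ × ℝ} (hz : 0 ≤ z.1) :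
    Tendsto (fun K => laplaceKernel l (gridPoint K b z)) atTop (nhds (laplaceKernel l z)) :=
  ((continuous_laplaceKernel l).tendsto z).comp (tendsto_gridPoint_atTop b hz)

theorem tendsto_compensatedKernel_gridPoint (l : ℝ × ℝ) (b : ℕ × ℕ) {z : ℝ × ℝ} (hz : 0 ≤ z.1) :
    Tendsto (fun K => compensatedKernel K l (gridPoint K b z)) atTop
      (nhds (laplaceKernel l z - z.1 * l.1)) :=
  (tendsto_laplaceKernel_gridPoint l b hz).sub
    ((tendsto_gridPoint_atTop b hz).fst_nhds.mul (tendsto_latticeRate_atTop l.1))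

end Kernels

section Truncation

variable {α : Type*} {G : α → ℝ}

/-- The points of weight `G` at least `K⁻²`. Jumps are discarded outside of this set, which has
finite measure when `G` is integrable, before they are discretised. -/
def truncatedSet (G : α → ℝ) (K : ℝ) : Set α := {z | 1 ≤ K ^ 2 * G z}

theorem eventually_mem_truncatedSet {z : α} (hz : 0 < G z) :
    ∀ᶠ K in atTop, z ∈ truncatedSet G K :=
  ((tendsto_pow_atTop two_ne_zero).atTop_mul_const hz).eventually_ge_atTop 1

variable [MeasurableSpace α]

theorem measurableSet_truncatedSet (hG : Measurable G) (K : ℝ) :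
    MeasurableSet (truncatedSet G K) :=
  measurableSet_le measurable_const (hG.const_mul _)

theorem isFiniteMeasure_restrict_truncatedSet {μ : Measure α} (hG : Integrable G μ) (K : ℝ) :
    IsFiniteMeasure (μ.restrict (truncatedSet G K)) :=
  isFiniteMeasure_restrict.2 ((hG.const_mul (K ^ 2)).measure_ge_lt_top one_pos).ne

end Truncation

section Weights

/-- The weight `z₁ ∧ z₁² + z₂` that `n₁` integrates. -/
def weight1 (z : ℝ × ℝ) : ℝ := min z.1 (z.1 ^ 2) + z.2

/-- The weight `z₁ + |z₂|` that `n₂` integrates. -/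
def weight2 (z : ℝ × ℝ) : ℝ := z.1 + |z.2|

theorem measurable_weight1 : Measurable weight1 := by
  unfold weight1
  fun_prop

theorem measurable_weight2 : Measurable weight2 := by
  unfold weight2
  fun_prop

theorem le_one_add_min_sq (x : ℝ) : x ≤ 1 + min x (x ^ 2) := by
  rw [← sub_le_iff_le_add', le_min_iff]
  constructor <;> nlinarith [sq_nonneg (x - 1)]

theorem snd_nonneg_of_mem_Mset {z : ℝ × ℝ} (hz : z ∈ Mset) : 0 ≤ z.2 := by
  obtain ⟨-, n, hn⟩ := hz
  exact hn ▸ n.cast_nonneg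

theorem weight1_pos {z : ℝ × ℝ} (hz : z ∈ Mset) (hz₀ : z ≠ 0) : 0 < weight1 z := by
  have hz₂ := snd_nonneg_of_mem_Mset hz
  obtain hz₁ | hz₁ := hz.1.eq_or_lt
  · have hz₂' : z.2 ≠ 0 := fun h => hz₀ (Prod.ext hz₁.symm h)
    exact add_pos_of_nonneg_of_pos (le_min hz.1 (sq_nonneg _)) (hz₂.lt_of_ne' hz₂')
  · exact add_pos_of_pos_of_nonneg (lt_min hz₁ (by positivity)) hz₂

theorem weight2_pos {z : ℝ × ℝ} (hz : z ∈ Mm1set) (hz₀ : z ≠ 0) : 0 < weight2 z := by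
  obtain hz₁ | hz₁ := hz.1.eq_or_lt
  · have hz₂ : z.2 ≠ 0 := fun h => hz₀ (Prod.ext hz₁.symm h)
    exact add_pos_of_nonneg_of_pos hz.1 (abs_pos.2 hz₂)
  · exact add_pos_of_pos_of_nonneg hz₁ (abs_nonneg _)

namespace BranchingMechanism

variable (B : BranchingMechanism)

theorem ae_n1 : ∀ᵐ z ∂B.n1, z ∈ Mset ∧ 0 < weight1 z := by
  filter_upwards [mem_ae_iff.2 B.n1_supp, measure_eq_zero_iff_ae_notMem.1 B.n1_zero] with z hz hz₀
  exact ⟨hz, weight1_pos hz hz₀⟩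

theorem ae_n2 : ∀ᵐ z ∂B.n2, z ∈ Mm1set ∧ 0 < weight2 z := by
  filter_upwards [mem_ae_iff.2 B.n2_supp, measure_eq_zero_iff_ae_notMem.1 B.n2_zero] with z hz hz₀
  exact ⟨hz, weight2_pos hz hz₀⟩

theorem integrable_weight1 : Integrable weight1 B.n1 :=
  (lintegral_ofReal_ne_top_iff_integrable measurable_weight1.aestronglyMeasurable
    (B.ae_n1.mono fun _ hz => hz.2.le)).1 B.n1_moment

theorem integrable_weight2 : Integrable weight2 B.n2 :=
  (lintegral_ofReal_ne_top_iff_integrable measurable_weight2.aestronglyMeasurable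
    (B.ae_n2.mono fun _ hz => hz.2.le)).1 B.n2_moment

end BranchingMechanism

end Weights

section JumpIntegrals

theorem mul_one_sub_exp_neg_le {R x : ℝ} (hR : 0 ≤ R) (hx : 0 ≤ x) :
    x * (1 - Real.exp (-(R * x))) ≤ (R + 1) * min x (x ^ 2) := by
  have hle_one : 1 - Real.exp (-(R * x)) ≤ 1 := sub_le_self _ (Real.exp_pos _).le
  have hle_mul : 1 - Real.exp (-(R * x)) ≤ R * x := by
    linarith [Real.add_one_le_exp (-(R * x))]
  rw [mul_min_of_nonneg _ _ (by positivity), le_min_iff]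
  constructor <;> nlinarith [mul_nonneg hR hx, sq_nonneg x]

theorem min_sq_le_of_le_two_mul {x z : ℝ} (hx : 0 ≤ x) (h : x ≤ 2 * z) :
    min x (x ^ 2) ≤ 4 * min z (z ^ 2) := by
  rw [mul_min_of_nonneg _ _ (by norm_num)]
  exact min_le_min (by linarith) (by nlinarith)

/-- This is why jumps are truncated at weight `K⁻²`: adding one particle of mass `1/K` to a retained
jump with `z₂ = 0` at most doubles it. -/
theorem one_div_le_fst_of_mem_truncatedSet {K : ℝ} (hK : 0 < K) {z : ℝ × ℝ} (hz₁ : 0 ≤ z.1)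
    (hz₂ : z.2 = 0) (hzK : z ∈ truncatedSet weight1 K) : 1 / K ≤ z.1 := by
  have hsq : 1 ≤ (K * z.1) ^ 2 := by
    calc 1 ≤ K ^ 2 * weight1 z := hzK
      _ ≤ K ^ 2 * z.1 ^ 2 := by
          rw [weight1, hz₂, add_zero]; gcongr; exact min_le_right _ _
      _ = (K * z.1) ^ 2 := by ring
  rw [div_le_iff₀' hK]
  exact (one_le_sq_iff₀ (by positivity)).1 hsq

theorem gridPoint_mul_one_sub_exp_le {K R : ℝ} (hK : 1 ≤ K) (hR : 0 ≤ R) {z : ℝ × ℝ}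
    (hz : z ∈ Mset) (hzK : z ∈ truncatedSet weight1 K) :
    (gridPoint K (1, 0) z).1 * (1 - Real.exp (-(R * ((gridPoint K (1, 0) z).1 + z.2)))) ≤
      4 * (R + 1) * weight1 z := by
  have hK₀ : 0 < K := one_pos.trans_le hK
  have hx := gridPoint_fst_nonneg hK₀ (1, 0) z
  have hxz := gridPoint_fst_le hK₀ (1, 0) hz.1
  set x := (gridPoint K (1, 0) z).1
  rw [Nat.cast_one] at hxz
  obtain ⟨hz₁, n, hn⟩ := hz
  obtain rfl | hn₀ := n.eq_zero_or_pos
  · have hz₂ : z.2 = 0 := by rw [hn, Nat.cast_zero]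
    have hdouble : x ≤ 2 * z.1 := by
      linarith [one_div_le_fst_of_mem_truncatedSet hK₀ hz₁ hz₂ hzK]
    calc x * (1 - Real.exp (-(R * (x + z.2)))) ≤ (R + 1) * min x (x ^ 2) := by
          rw [hz₂, add_zero]; exact mul_one_sub_exp_neg_le hR hx
      _ ≤ (R + 1) * (4 * min z.1 (z.1 ^ 2)) := by
          gcongr; exact min_sq_le_of_le_two_mul hx hdouble
      _ = 4 * (R + 1) * weight1 z := by rw [weight1, hz₂, add_zero]; ring
  · have hz₂ : 1 ≤ z.2 := by rw [hn]; exact_mod_cast hn₀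
    have hmin : 0 ≤ min z.1 (z.1 ^ 2) := le_min hz₁ (sq_nonneg _)
    calc x * (1 - Real.exp (-(R * (x + z.2)))) ≤ x :=
          mul_le_of_le_one_right hx (sub_le_self _ (Real.exp_pos _).le)
      _ ≤ 2 + min z.1 (z.1 ^ 2) := by
          linarith [le_one_add_min_sq z.1, (div_le_one hK₀).2 hK]
      _ ≤ 4 * weight1 z := by rw [weight1]; linarith
      _ ≤ 4 * (R + 1) * weight1 z := by
          rw [weight1]; nlinarith

theorem abs_compensatedKernel_gridPoint_sub_le {K R : ℝ} (hK : 1 ≤ K) {z : ℝ × ℝ} (hz : z ∈ Mset)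
    (hzK : z ∈ truncatedSet weight1 K) {l l' : ℝ × ℝ} (hl : l ∈ Icc 0 (R, R))
    (hl' : l' ∈ Icc 0 (R, R)) :
    |compensatedKernel K l (gridPoint K (1, 0) z) - compensatedKernel K l' (gridPoint K (1, 0) z)| ≤
      (4 * R + 5) * weight1 z * dist l l' := by
  have hK₀ : 0 < K := one_pos.trans_le hK
  have hR : 0 ≤ R := hl.1.1.trans hl.2.1
  have hmesh : 1 / K ≤ (gridPoint K (1, 0) z).1 := by
    simp only [gridPoint, offspringCount, Nat.cast_add, Nat.cast_one]
    gcongr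
    exact le_add_of_nonneg_left (Nat.cast_nonneg _)
  have hsnd : z.2 ≤ weight1 z := le_add_of_nonneg_left (le_min hz.1 (sq_nonneg _))
  have hz₂ := snd_nonneg_of_mem_Mset hz
  refine (abs_compensatedKernel_sub_le hK₀ hmesh hz₂ hl hl').trans ?_
  gcongr
  calc _ ≤ 4 * (R + 1) * weight1 z + weight1 z :=
        add_le_add (gridPoint_mul_one_sub_exp_le hK hR hz hzK) hsnd
    _ = (4 * R + 5) * weight1 z := by ring

theorem abs_laplaceKernel_gridPoint_sub_le {K R : ℝ} (hK : 0 < K) {z : ℝ × ℝ} (hz : z ∈ Mm1set)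
    {l l' : ℝ × ℝ} (hl : l ∈ Icc 0 (R, R)) (hl' : l' ∈ Icc 0 (R, R)) :
    |laplaceKernel l (gridPoint K (0, 1) z) - laplaceKernel l' (gridPoint K (0, 1) z)| ≤
      Real.exp R * weight2 z * dist l l' := by
  obtain ⟨hz₁, n, hn, hzn⟩ := hz
  have hz₂ : -1 ≤ z.2 := by rw [hzn]; exact_mod_cast hn
  have hx := gridPoint_fst_nonneg hK (0, 1) z
  have hxz := gridPoint_fst_le hK (0, 1) hz₁
  rw [Nat.cast_zero, zero_div, add_zero] at hxz
  have hexponent : ∀ m ∈ Icc (0 : ℝ × ℝ) (R, R),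
      -(m.1 * (gridPoint K (0, 1) z).1 + m.2 * z.2) ≤ R := fun m ⟨hm, hmR⟩ => by
    nlinarith [mul_nonneg hm.1 hx, mul_le_mul_of_nonneg_left hz₂ hm.2, hmR.2]
  refine (abs_laplaceKernel_sub_le (hexponent l hl) (hexponent l' hl')).trans ?_
  rw [mul_assoc]
  gcongr
  refine (abs_mul_add_mul_le_dist l l' _ _).trans ?_
  gcongr
  rw [abs_of_nonneg hx, weight2]
  exact add_le_add_left hxz _

variable (B : BranchingMechanism)

theorem equiLipschitzTendstoOn_setIntegral_compensatedKernel {R : ℝ} (hR : 0 ≤ R) :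
    EquiLipschitzTendstoOn
      (fun k l => ∫ z in truncatedSet weight1 (k + 1),
        compensatedKernel (k + 1) l (gridPoint (k + 1) (1, 0) z) ∂B.n1)
      (fun l => ∫ z, (laplaceKernel l z - z.1 * l.1) ∂B.n1) (Icc 0 (R, R)) := by
  refine .setIntegral (x₀ := 0) (fun k => measurableSet_truncatedSet measurable_weight1 _)
    ?_ ⟨le_rfl, hR, hR⟩ (B.integrable_weight1.const_mul (4 * R + 5)) ?_
    (fun k l => ((continuous_compensatedKernel _ l).measurable.comp
      (measurable_gridPoint _ _)).aestronglyMeasurable)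
    (fun k z => compensatedKernel_zero _ _) ?_ ?_
  · filter_upwards [B.ae_n1] with z hz
    exact tendsto_natCast_add_one_atTop.eventually (eventually_mem_truncatedSet hz.2)
  · filter_upwards [B.ae_n1] with z hz
    exact mul_nonneg (by positivity) hz.2.le
  · intro k l hl l' hl'
    filter_upwards [B.ae_n1] with z hz hzk
    exact abs_compensatedKernel_gridPoint_sub_le (le_add_of_nonneg_left k.cast_nonneg) hz.1 hzk
      hl hl'
  · intro l _
    filter_upwards [B.ae_n1] with z hz
    exact (tendsto_compensatedKernel_gridPoint l _ hz.1.1).comp tendsto_natCast_add_one_atTop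

theorem equiLipschitzTendstoOn_setIntegral_laplaceKernel {R : ℝ} (hR : 0 ≤ R) :
    EquiLipschitzTendstoOn
      (fun k l => ∫ z in truncatedSet weight2 (k + 1),
        laplaceKernel l (gridPoint (k + 1) (0, 1) z) ∂B.n2)
      (fun l => ∫ z, laplaceKernel l z ∂B.n2) (Icc 0 (R, R)) := by
  refine .setIntegral (x₀ := 0) (fun k => measurableSet_truncatedSet measurable_weight2 _)
    ?_ ⟨le_rfl, hR, hR⟩ (B.integrable_weight2.const_mul (Real.exp R)) ?_
    (fun k l => ((continuous_laplaceKernel l).measurable.comp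
      (measurable_gridPoint _ _)).aestronglyMeasurable)
    (fun k z => laplaceKernel_zero _) ?_ ?_
  · filter_upwards [B.ae_n2] with z hz
    exact tendsto_natCast_add_one_atTop.eventually (eventually_mem_truncatedSet hz.2)
  · filter_upwards [B.ae_n2] with z hz
    exact mul_nonneg (Real.exp_pos R).le hz.2.le
  · intro k l hl l' hl'
    filter_upwards [B.ae_n2] with z hz _
    exact abs_laplaceKernel_gridPoint_sub_le k.cast_add_one_pos hz.1 hl hl'
  · intro l _
    filter_upwards [B.ae_n2] with z hz
    exact (tendsto_laplaceKernel_gridPoint l _ hz.1.1).comp tendsto_natCast_add_one_atTop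

end JumpIntegrals

section OffspringRates

theorem biMonomial_sub_biMonomial_offspringCount {K : ℝ} (hK : K ≠ 0) {z : ℝ × ℝ} (hz : z ∈ Mset)
    (l : ℝ × ℝ) :
    biMonomial (expPoint K l) (1, 0) - biMonomial (expPoint K l) (offspringCount K (1, 0) z) =
      compensatedKernel K l (gridPoint K (1, 0) z) +
        ⌊K * z.1⌋₊ * (1 - Real.exp (-l.1 / K)) := by
  obtain ⟨-, n, hn⟩ := hz
  rw [biMonomial_expPoint_offspringCount (n := n) (by simpa using hn)]
  simp only [biMonomial, expPoint, compensatedKernel, laplaceKernel, latticeRate, gridPoint,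
    offspringCount, Nat.cast_add, Nat.cast_one, Nat.cast_zero, add_zero, pow_one, pow_zero]
  field_simp
  ring

theorem exp_mul_biMonomial_sub_biMonomial_offspringCount {K : ℝ} {z : ℝ × ℝ} (hz : z ∈ Mm1set)
    (l : ℝ × ℝ) :
    Real.exp l.2 * (biMonomial (expPoint K l) (0, 1) -
        biMonomial (expPoint K l) (offspringCount K (0, 1) z)) =
      laplaceKernel l (gridPoint K (0, 1) z) := by
  obtain ⟨-, n, hn, hzn⟩ := hz
  obtain ⟨m, hm⟩ := Int.eq_ofNat_of_zero_le (neg_le_iff_add_nonneg.1 hn)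
  have hz₂ : z.2 + (1 : ℕ) = m := by rw [hzn]; exact_mod_cast hm
  rw [biMonomial_expPoint_offspringCount (b := (0, 1)) hz₂, laplaceKernel, mul_sub,
    ← Real.exp_add, biMonomial, expPoint, pow_zero, one_mul, pow_one, ← Real.exp_add,
    add_neg_cancel, Real.exp_zero]
  congr 2
  simp only [gridPoint, Nat.cast_one]
  ring

variable (B : BranchingMechanism)

theorem integrableOn_natFloor_mul_fst {K : ℝ} (hK : 0 ≤ K) :
    IntegrableOn (fun z => (⌊K * z.1⌋₊ : ℝ)) (truncatedSet weight1 K) B.n1 := by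
  have := isFiniteMeasure_restrict_truncatedSet B.integrable_weight1 K
  refine Integrable.mono' (((integrable_const 1).add B.integrable_weight1.restrict).const_mul K)
    (measurable_from_nat.comp
      (Nat.measurable_floor.comp (measurable_fst.const_mul K))).aestronglyMeasurable ?_
  filter_upwards [ae_restrict_of_ae B.ae_n1] with z ⟨hz, _⟩
  calc ‖(⌊K * z.1⌋₊ : ℝ)‖ = ⌊K * z.1⌋₊ := Real.norm_of_nonneg (Nat.cast_nonneg _)
    _ ≤ K * z.1 := Nat.floor_le (mul_nonneg hK hz.1)
    _ ≤ K * (1 + weight1 z) := by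
        gcongr
        rw [weight1]
        linarith [le_one_add_min_sq z.1, snd_nonneg_of_mem_Mset hz]

/-- Rate at which a particle of mass `1/K` splits in two. The term `αK²` produces the branching
`αλ₁²`; the term `|a₁₁|K` only ensures `deathRate ≥ 0` and is negligible against `K²`. -/
def splitRate (K : ℝ) : ℝ := |B.a11| * K + B.alpha * K ^ 2

/-- Rate at which a particle of mass `1/K` dies without offspring: it offsets the splitting and
the mean of the jumps, up to the drift `a₁₁K`. -/
def deathRate (K : ℝ) : ℝ :=
  splitRate B K + B.a11 * K + ∫ z in truncatedSet weight1 K, (⌊K * z.1⌋₊ : ℝ) ∂B.n1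

theorem splitRate_nonneg {K : ℝ} (hK : 0 ≤ K) : 0 ≤ splitRate B K :=
  add_nonneg (mul_nonneg (abs_nonneg _) hK) (mul_nonneg B.alpha_nonneg (sq_nonneg K))

theorem deathRate_nonneg {K : ℝ} (hK : 0 ≤ K) : 0 ≤ deathRate B K := by
  have hdrift : 0 ≤ (|B.a11| + B.a11) * K :=
    mul_nonneg (neg_le_iff_add_nonneg'.1 (neg_abs_le B.a11)) hK
  have hbranching : 0 ≤ B.alpha * K ^ 2 := mul_nonneg B.alpha_nonneg (sq_nonneg K)
  refine add_nonneg ?_ (integral_nonneg fun z => Nat.cast_nonneg _)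
  rw [splitRate]
  linarith

/-- Rates at which a particle of the first type turns into a given offspring, in the `K`-th
approximation. -/
def offspringRates1 (K : ℝ) : Measure (ℕ × ℕ) :=
  (B.n1.restrict (truncatedSet weight1 K)).map (offspringCount K (1, 0)) +
    ((deathRate B K).toNNReal • Measure.dirac (0, 0) +
      (splitRate B K).toNNReal • Measure.dirac (2, 0))

/-- Rates at which a particle of the second type turns into a given offspring, in the `K`-th
approximation. The atom at `(1, 1)` is the immigration `a₂₁λ₁`. -/
def offspringRates2 (K : ℝ) : Measure (ℕ × ℕ) :=
  (B.n2.restrict (truncatedSet weight2 K)).map (offspringCount K (0, 1)) +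
    (B.a21 * K).toNNReal • Measure.dirac (1, 1)

instance isFiniteMeasure_offspringRates1 (K : ℝ) : IsFiniteMeasure (offspringRates1 B K) := by
  have := isFiniteMeasure_restrict_truncatedSet B.integrable_weight1 K
  unfold offspringRates1
  infer_instance

instance isFiniteMeasure_offspringRates2 (K : ℝ) : IsFiniteMeasure (offspringRates2 B K) := by
  have := isFiniteMeasure_restrict_truncatedSet B.integrable_weight2 K
  unfold offspringRates2
  infer_instance

theorem setIntegral_biMonomial_sub_biMonomial_offspringCount {K : ℝ} (hK : 0 < K) {l : ℝ × ℝ}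
    (hl : 0 ≤ l) :
    ∫ z in truncatedSet weight1 K, (biMonomial (expPoint K l) (1, 0) -
        biMonomial (expPoint K l) (offspringCount K (1, 0) z)) ∂B.n1 =
      ∫ z in truncatedSet weight1 K, compensatedKernel K l (gridPoint K (1, 0) z) ∂B.n1 +
        (∫ z in truncatedSet weight1 K, (⌊K * z.1⌋₊ : ℝ) ∂B.n1) *
          (1 - Real.exp (-l.1 / K)) := by
  have := isFiniteMeasure_restrict_truncatedSet B.integrable_weight1 K
  have hfloor := (integrableOn_natFloor_mul_fst B hK.le).mul_const (1 - Real.exp (-l.1 / K))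
  have hmonomial : IntegrableOn (fun z => biMonomial (expPoint K l) (1, 0) -
      biMonomial (expPoint K l) (offspringCount K (1, 0) z)) (truncatedSet weight1 K) B.n1 :=
    (integrable_biMonomial_sub (expPoint_mem_Icc hK hl)).comp_measurable
      (measurable_offspringCount K _)
  rw [← sub_eq_iff_eq_add, ← integral_mul_const, ← integral_sub hmonomial hfloor]
  refine integral_congr_ae ?_
  filter_upwards [ae_restrict_of_ae B.ae_n1] with z hz
  rw [biMonomial_sub_biMonomial_offspringCount hK.ne' hz.1, add_sub_cancel_right]

theorem branchingGenerator_offspringRates1 {K : ℝ} (hK : 0 < K) {l : ℝ × ℝ} (hl : 0 ≤ l) :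
    branchingGenerator (offspringRates1 B K) (1, 0) (expPoint K l) =
      -B.a11 * latticeRate K l.1 -
        (B.alpha + |B.a11| / K) * (latticeRate K l.1 * latticeRate K l.1) +
        ∫ z in truncatedSet weight1 K, compensatedKernel K l (gridPoint K (1, 0) z) ∂B.n1 := by
  have := isFiniteMeasure_restrict_truncatedSet B.integrable_weight1 K
  have hs := expPoint_mem_Icc hK hl
  rw [offspringRates1, branchingGenerator_add hs, branchingGenerator_add hs,
    branchingGenerator_map (measurable_offspringCount K _),
    branchingGenerator_smul_dirac (deathRate_nonneg B hK.le),
    branchingGenerator_smul_dirac (splitRate_nonneg B hK.le),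
    setIntegral_biMonomial_sub_biMonomial_offspringCount B hK hl]
  simp only [deathRate, splitRate, biMonomial, expPoint, latticeRate, pow_zero, pow_one, mul_one]
  field_simp
  ring

theorem exp_mul_branchingGenerator_offspringRates2 {K : ℝ} (hK : 0 < K) {l : ℝ × ℝ}
    (hl : 0 ≤ l) :
    Real.exp l.2 * branchingGenerator (offspringRates2 B K) (0, 1) (expPoint K l) =
      B.a21 * latticeRate K l.1 +
        ∫ z in truncatedSet weight2 K, laplaceKernel l (gridPoint K (0, 1) z) ∂B.n2 := by
  have := isFiniteMeasure_restrict_truncatedSet B.integrable_weight2 K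
  have hjumps : Real.exp l.2 * ∫ z in truncatedSet weight2 K, (biMonomial (expPoint K l) (0, 1) -
        biMonomial (expPoint K l) (offspringCount K (0, 1) z)) ∂B.n2 =
      ∫ z in truncatedSet weight2 K, laplaceKernel l (gridPoint K (0, 1) z) ∂B.n2 := by
    rw [← integral_const_mul]
    refine integral_congr_ae ?_
    filter_upwards [ae_restrict_of_ae B.ae_n2] with z hz
    exact exp_mul_biMonomial_sub_biMonomial_offspringCount hz.1 l
  have hcancel : Real.exp l.2 * Real.exp (-l.2) = 1 := by
    rw [← Real.exp_add, add_neg_cancel, Real.exp_zero]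
  rw [offspringRates2, branchingGenerator_add (expPoint_mem_Icc hK hl),
    branchingGenerator_map (measurable_offspringCount K _),
    branchingGenerator_smul_dirac (mul_nonneg B.a21_nonneg hK.le), mul_add, hjumps, add_comm]
  simp only [biMonomial, expPoint, latticeRate, pow_zero, pow_one, one_mul]
  linear_combination B.a21 * K * (1 - Real.exp (-l.1 / K)) * hcancel

theorem equiLipschitzTendstoOn_branchingGenerator_offspringRates1 {R : ℝ} (hR : 0 ≤ R) :
    EquiLipschitzTendstoOn
      (fun k l => branchingGenerator (offspringRates1 B (k + 1)) (1, 0) (expPoint (k + 1) l))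
      (mPhi1 B) (Icc 0 (R, R)) := by
  have hbdd : Bornology.IsBounded (Icc (0 : ℝ × ℝ) (R, R)) := Metric.isBounded_Icc _ _
  have hrate : EquiLipschitzTendstoOn (fun k (l : ℝ × ℝ) => latticeRate (k + 1) l.1)
      (fun l => l.1) (Icc 0 (R, R)) :=
    equiLipschitzTendstoOn_latticeRate fun l hl => hl.1.1
  have hcoeff : Tendsto (fun k : ℕ => B.alpha + |B.a11| / ((k : ℝ) + 1)) atTop
      (nhds (B.alpha + 0)) :=
    (tendsto_natCast_add_one_atTop.const_div_atTop _).const_add _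
  have hsum := (((EquiLipschitzTendstoOn.of_tendsto_const (tendsto_const_nhds (x := -B.a11))).mul
    hrate hbdd).sub ((EquiLipschitzTendstoOn.of_tendsto_const hcoeff).mul
      (hrate.mul hrate hbdd) hbdd)).add
    (equiLipschitzTendstoOn_setIntegral_compensatedKernel B hR)
  convert! hsum.congr fun k l hl =>
    (branchingGenerator_offspringRates1 B k.cast_add_one_pos hl.1).symm using 2 with l
  have hneg : ∫ z, (Real.exp (-(l.1 * z.1 + l.2 * z.2)) - 1 + l.1 * z.1) ∂B.n1 =
      -∫ z, (laplaceKernel l z - z.1 * l.1) ∂B.n1 := by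
    rw [← integral_neg]
    congr 1 with z
    rw [laplaceKernel]
    ring
  rw [mPhi1, hneg]
  ring

theorem equiLipschitzTendstoOn_exp_mul_branchingGenerator_offspringRates2 {R : ℝ} (hR : 0 ≤ R) :
    EquiLipschitzTendstoOn
      (fun k l => Real.exp l.2 *
        branchingGenerator (offspringRates2 B (k + 1)) (0, 1) (expPoint (k + 1) l))
      (mPhi2 B) (Icc 0 (R, R)) := by
  have hrate : EquiLipschitzTendstoOn (fun k (l : ℝ × ℝ) => latticeRate (k + 1) l.1)
      (fun l => l.1) (Icc 0 (R, R)) :=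
    equiLipschitzTendstoOn_latticeRate fun l hl => hl.1.1
  exact (((EquiLipschitzTendstoOn.of_tendsto_const (tendsto_const_nhds (x := B.a21))).mul hrate
    (Metric.isBounded_Icc _ _)).add (equiLipschitzTendstoOn_setIntegral_laplaceKernel B hR)).congr
      fun k l hl => (exp_mul_branchingGenerator_offspringRates2 B k.cast_add_one_pos hl.1).symm

theorem exists_offspringLaws_of_rates (μ₁ μ₂ : ℕ → Measure (ℕ × ℕ))
    [∀ k, IsFiniteMeasure (μ₁ k)] [∀ k, IsFiniteMeasure (μ₂ k)] :
    ∃ (γ : ℕ → ℝ) (p₁ p₂ : ℕ → ℕ × ℕ → ℝ),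
      (∀ k, 0 < γ k) ∧
      (∀ k i, 0 ≤ p₁ k i) ∧ (∀ k, HasSum (p₁ k) 1) ∧
      (∀ k i, 0 ≤ p₂ k i) ∧ (∀ k, HasSum (p₂ k) 1) ∧
      Tendsto γ atTop atTop ∧
      (∀ k l, 0 ≤ l → Phik1 γ (fun k => pgf2 (p₁ k)) k l =
        branchingGenerator (μ₁ k) (1, 0) (expPoint (k + 1) l)) ∧
      (∀ k l, 0 ≤ l → Phik2 γ (fun k => pgf2 (p₂ k)) k l =
        branchingGenerator (μ₂ k) (0, 1) (expPoint (k + 1) l)) := by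
  have hmass₁ : ∀ k, 0 ≤ (μ₁ k).real univ := fun k => measureReal_nonneg
  have hmass₂ : ∀ k, 0 ≤ (μ₂ k).real univ := fun k => measureReal_nonneg
  have hK : ∀ k : ℕ, (0 : ℝ) < k + 1 := fun k => k.cast_add_one_pos
  let γ : ℕ → ℝ := fun k => k + 1 + ((μ₁ k).real univ + (μ₂ k).real univ)
  have hγK : ∀ k : ℕ, (k : ℝ) + 1 ≤ γ k := fun k =>
    le_add_of_nonneg_right (add_nonneg (hmass₁ k) (hmass₂ k))
  have hγ : ∀ k, 0 < γ k := fun k => (hK k).trans_le (hγK k)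
  have hKγ : ∀ k : ℕ, 0 < ((k : ℝ) + 1) * γ k := fun k => mul_pos (hK k) (hγ k)
  have hγ₁ : ∀ k : ℕ, (μ₁ k).real univ ≤ (k + 1) * γ k := fun k =>
    calc (μ₁ k).real univ ≤ γ k := by linarith [hK k, hmass₂ k]
      _ ≤ (k + 1) * γ k := le_mul_of_one_le_left (hγ k).le (le_add_of_nonneg_left k.cast_nonneg)
  have hγ₂ : ∀ k, (μ₂ k).real univ ≤ γ k := fun k => by linarith [hK k, hmass₁ k]
  refine ⟨γ, fun k => offspringLaw (μ₁ k) (1, 0) ((k + 1) * γ k),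
    fun k => offspringLaw (μ₂ k) (0, 1) (γ k), hγ,
    fun k => offspringLaw_nonneg (hKγ k).le (hγ₁ k), fun k => hasSum_offspringLaw (hKγ k).ne',
    fun k => offspringLaw_nonneg (hγ k).le (hγ₂ k), fun k => hasSum_offspringLaw (hγ k).ne',
    tendsto_atTop_mono hγK tendsto_natCast_add_one_atTop, fun k l hl => ?_, fun k l hl => ?_⟩
  · rw [← mul_biMonomial_sub_pgf2_offspringLaw (hKγ k).ne' (expPoint_mem_Icc (hK k) hl)]
    simp only [Phik1, biMonomial, expPoint, pow_one, pow_zero, mul_one]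
  · rw [← mul_biMonomial_sub_pgf2_offspringLaw (hγ k).ne' (expPoint_mem_Icc (hK k) hl)]
    simp only [Phik2, biMonomial, expPoint, pow_one, pow_zero, one_mul]

end OffspringRates

/-- For any branching mechanism `(Φ₁, Φ₂)` there exist positive reals
`γ_k → ∞` and two-type offspring laws `(g_{k,1}, g_{k,2})` such that conditions
(A), (C), (D) hold, with `Φ_{k,1} → Φ₁` and `e^{λ₂}Φ_{k,2} → Φ₂` pointwise on
`[0,∞)²` as `k → ∞`. -/
theorem existence_of_approximating_sequence_two_type (B : BranchingMechanism) :
    ∃ (γ : ℕ → ℝ) (p1 p2 : ℕ → ℕ × ℕ → ℝ),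
      (∀ k, 0 < γ k) ∧
      (∀ k i, 0 ≤ p1 k i) ∧ (∀ k, HasSum (p1 k) 1) ∧
      (∀ k i, 0 ≤ p2 k i) ∧ (∀ k, HasSum (p2 k) 1) ∧
      -- Condition (A)
      Tendsto γ atTop atTop ∧
      -- Condition (C)
      (∀ R : ℝ, 0 ≤ R → ∃ L : NNReal, ∀ k,
        LipschitzOnWith L (Phik1 γ (fun k => pgf2 (p1 k)) k) (Icc ((0:ℝ),(0:ℝ)) (R,R))) ∧
      (∀ l : ℝ × ℝ, 0 ≤ l.1 → 0 ≤ l.2 →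
        Tendsto (fun k => Phik1 γ (fun k => pgf2 (p1 k)) k l) atTop (nhds (mPhi1 B l))) ∧
      -- Condition (D)
      (∀ R : ℝ, 0 ≤ R → ∃ L : NNReal, ∀ k,
        LipschitzOnWith L (fun l : ℝ × ℝ => Real.exp l.2 * Phik2 γ (fun k => pgf2 (p2 k)) k l)
          (Icc ((0:ℝ),(0:ℝ)) (R,R))) ∧
      (∀ l : ℝ × ℝ, 0 ≤ l.1 → 0 ≤ l.2 →
        Tendsto (fun k => Real.exp l.2 * Phik2 γ (fun k => pgf2 (p2 k)) k l) atTop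
          (nhds (mPhi2 B l))) := by
  obtain ⟨γ, p₁, p₂, hγ, hp₁, hsum₁, hp₂, hsum₂, hγ_top, hΦ₁, hΦ₂⟩ :=
    exists_offspringLaws_of_rates (fun k => offspringRates1 B (k + 1))
      (fun k => offspringRates2 B (k + 1))
  have hC : ∀ R, 0 ≤ R → EquiLipschitzTendstoOn (Phik1 γ fun k => pgf2 (p₁ k)) (mPhi1 B)
      (Icc 0 (R, R)) := fun R hR =>
    (equiLipschitzTendstoOn_branchingGenerator_offspringRates1 B hR).congr
      fun k l hl => (hΦ₁ k l hl.1).symm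
  have hD : ∀ R, 0 ≤ R → EquiLipschitzTendstoOn
      (fun k l => Real.exp l.2 * Phik2 γ (fun k => pgf2 (p₂ k)) k l) (mPhi2 B)
      (Icc 0 (R, R)) := fun R hR =>
    (equiLipschitzTendstoOn_exp_mul_branchingGenerator_offspringRates2 B hR).congr
      fun k l hl => congrArg (Real.exp l.2 * ·) (hΦ₂ k l hl.1).symm
  have hmem : ∀ l : ℝ × ℝ, 0 ≤ l.1 → 0 ≤ l.2 → l ∈ Icc 0 (max l.1 l.2, max l.1 l.2) :=
    fun l h₁ h₂ => ⟨⟨h₁, h₂⟩, le_max_left _ _, le_max_right _ _⟩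
  exact ⟨γ, p₁, p₂, hγ, hp₁, hsum₁, hp₂, hsum₂, hγ_top,
    fun R hR => (hC R hR).lipschitz,
    fun l h₁ h₂ => (hC _ (le_max_of_le_left h₁)).tendsto l (hmem l h₁ h₂),
    fun R hR => (hD R hR).lipschitz,
    fun l h₁ h₂ => (hD _ (le_max_of_le_left h₁)).tendsto l (hmem l h₁ h₂)⟩
end
end

section
/- Assume conditions (A), (C) and (D), and let Φ₁ be the pointwise limit of Φ_{k,1} and Φ₂ the pointwise limit of e^{λ₂}Φ_{k,2}. Define V_{k,1}(t,λ) = −k·log g_{k,1}^{∘⌊γ_k t⌋}(e^{−λ₁/k}, e^{−λ₂}) and V_{k,2}(t,λ) = −log g_{k,2}^{∘⌊γ_k t⌋}(e^{−λ₁/k}, e^{−λ₂}). Then for any a ≥ 0, V_k(t,λ) = (V_{k,1}(t,λ),V_{k,2}(t,λ)) converges as k → ∞, uniformly for (t,λ₁,λ₂) ∈ [0,a]³, to a limit V(t,λ) = (V₁(t,λ),V₂(t,λ)), and the limit satisfies the integral equations V₁(t,λ) = λ₁ + ∫₀ᵗ Φ₁(V(s,λ)) ds and V₂(t,λ) = λ₂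 + ∫₀ᵗ Φ₂(V(s,λ)) ds. -/
open Filter Set

noncomputable section

/-- The pair of iterates `(g₁^{∘n}, g₂^{∘n})` of a two-type offspring law. -/
def pairIter (g1 g2 : ℝ × ℝ → ℝ) : ℕ → ℝ × ℝ → ℝ × ℝ
  | 0, s => s
  | n + 1, s => (g1 (pairIter g1 g2 n s), g2 (pairIter g1 g2 n s))

/-- `V_k(t,λ) = (-k log g_{k,1}^{∘⌊γ_k t⌋}(e^{-λ₁/k}, e^{-λ₂}),
                 -log g_{k,2}^{∘⌊γ_k t⌋}(e^{-λ₁/k}, e^{-λ₂}))`. -/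
def Vk (γ : ℕ → ℝ) (g1 g2 : ℕ → ℝ × ℝ → ℝ) (k : ℕ) (t : ℝ) (l : ℝ × ℝ) : ℝ × ℝ :=
  (-(k + 1 : ℝ) *
      Real.log ((pairIter (g1 k) (g2 k) ⌊γ k * t⌋₊
        (Real.exp (-l.1 / (k + 1 : ℝ)), Real.exp (-l.2))).1),
   -Real.log ((pairIter (g1 k) (g2 k) ⌊γ k * t⌋₊
        (Real.exp (-l.1 / (k + 1 : ℝ)), Real.exp (-l.2))).2))

/-!
In the coordinates `x₁ = -k log s₁`, `x₂ = -log s₂` one generation becomes a map `T_k` of the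
positive quadrant with `T_k x ≈ x + Φ(x) / γ_k`, locally uniformly in `x`, so that
`V_k(t, x) = T_k^{⌊γ_k t⌋} x` is an Euler scheme of step `1 / γ_k` for `V' = Φ(V)`.

The Lipschitz assumptions are only local. What prevents explosion is that `Φ₁ + Φ₂` grows at most
linearly: since generating functions have nonnegative coefficients, convexity in `s₁` and termwise
comparisons in `s₂` bound `Φ_{k,1}` and `e^{λ₂} Φ_{k,2}` from above on the whole quadrant through
their values near the origin. Hence on a bounded time interval the scheme stays in a fixed box,
outside of which `Φ` may be changed into a bounded, globally Lipschitz field.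
-/

namespace pgf2

variable {p : ℕ × ℕ → ℝ} {s t r : ℝ}

lemma hasSum (hp : ∀ i, 0 ≤ p i) (hsum : Summable p) (hs : s ∈ Icc (0 : ℝ) 1)
    (ht : t ∈ Icc (0 : ℝ) 1) : HasSum (fun i => p i * s ^ i.1 * t ^ i.2) (pgf2 p (s, t)) := by
  refine (Summable.of_nonneg_of_le (fun i => ?_) (fun i => ?_) hsum).hasSum
  · exact mul_nonneg (mul_nonneg (hp i) (pow_nonneg hs.1 _)) (pow_nonneg ht.1 _)
  · rw [mul_assoc]
    exact mul_le_of_le_one_right (hp i)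
      (mul_le_one₀ (pow_le_one₀ hs.1 hs.2) (pow_nonneg ht.1 _) (pow_le_one₀ ht.1 ht.2))

lemma apply_one_one : pgf2 p (1, 1) = ∑' i, p i := by simp [pgf2]

lemma le_tsum (hp : ∀ i, 0 ≤ p i) (hsum : Summable p) (hs : s ∈ Icc (0 : ℝ) 1)
    (ht : t ∈ Icc (0 : ℝ) 1) : pgf2 p (s, t) ≤ ∑' i, p i := by
  refine hasSum_le (fun i => ?_) (hasSum hp hsum hs ht) hsum.hasSum
  rw [mul_assoc]
  exact mul_le_of_le_one_right (hp i)
    (mul_le_one₀ (pow_le_one₀ hs.1 hs.2) (pow_nonneg ht.1 _) (pow_le_one₀ ht.1 ht.2))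

lemma pos (hp : ∀ i, 0 ≤ p i) (hsum : Summable p) (hp_pos : 0 < ∑' i, p i)
    (hs : s ∈ Ioc (0 : ℝ) 1) (ht : t ∈ Ioc (0 : ℝ) 1) : 0 < pgf2 p (s, t) := by
  obtain ⟨i, hi⟩ : ∃ i, 0 < p i := by
    by_contra! h
    exact hp_pos.not_ge (tsum_nonpos h)
  have hs0 := hs.1
  have ht0 := ht.1
  exact (hasSum hp hsum (Ioc_subset_Icc_self hs) (Ioc_subset_Icc_self ht)).summable.tsum_pos
    (fun j => by have := hp j; positivity) i (by positivity)

lemma convexOn_fst (hp : ∀ i, 0 ≤ p i) (hsum : Summable p) (ht : t ∈ Icc (0 : ℝ) 1) :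
    ConvexOn ℝ (Icc 0 1) fun s => pgf2 p (s, t) := by
  refine ⟨convex_Icc 0 1, fun x hx y hy a b ha hb hab => ?_⟩
  refine hasSum_le (fun i => ?_)
    (hasSum hp hsum (convex_Icc (0 : ℝ) 1 hx hy ha hb hab) ht)
    (((hasSum hp hsum hx ht).mul_left a).add ((hasSum hp hsum hy ht).mul_left b))
  have hpow := (convexOn_pow (𝕜 := ℝ) i.1).2 hx.1 hy.1 ha hb hab
  calc p i * (a • x + b • y) ^ i.1 * t ^ i.2
      ≤ p i * (a • x ^ i.1 + b • y ^ i.1) * t ^ i.2 :=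
        mul_le_mul_of_nonneg_right (mul_le_mul_of_nonneg_left hpow (hp i)) (pow_nonneg ht.1 _)
    _ = a * (p i * x ^ i.1 * t ^ i.2) + b * (p i * y ^ i.1 * t ^ i.2) := by
        simp only [smul_eq_mul]; ring

lemma supermodular (hp : ∀ i, 0 ≤ p i) (hsum : Summable p) (hs : s ∈ Icc (0 : ℝ) 1)
    (ht : t ∈ Icc (0 : ℝ) 1) :
    pgf2 p (s, 1) + pgf2 p (1, t) ≤ pgf2 p (1, 1) + pgf2 p (s, t) := by
  have h1 : (1 : ℝ) ∈ Icc (0 : ℝ) 1 := right_mem_Icc.2 zero_le_one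
  refine hasSum_le (fun i => ?_) ((hasSum hp hsum hs h1).add (hasSum hp hsum h1 ht))
    ((hasSum hp hsum h1 h1).add (hasSum hp hsum hs ht))
  have hprod : 0 ≤ p i * ((1 - s ^ i.1) * (1 - t ^ i.2)) :=
    mul_nonneg (hp i) (mul_nonneg (sub_nonneg.2 (pow_le_one₀ hs.1 hs.2))
      (sub_nonneg.2 (pow_le_one₀ ht.1 ht.2)))
  simp only [one_pow, mul_one]
  linarith

lemma one_sub_mul_sub_le (hp : ∀ i, 0 ≤ p i) (hsum : Summable p) (hr : r ∈ Icc (0 : ℝ) 1)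
    (ht : t ∈ Icc (0 : ℝ) 1) :
    (1 - r) * (pgf2 p (1, 1) - pgf2 p (1, t)) ≤ pgf2 p (1, 1) - pgf2 p (1, r) := by
  have h1 : (1 : ℝ) ∈ Icc (0 : ℝ) 1 := right_mem_Icc.2 zero_le_one
  have hone := hasSum hp hsum h1 h1
  refine hasSum_le (fun i => ?_) ((hone.sub (hasSum hp hsum h1 ht)).mul_left (1 - r))
    (hone.sub (hasSum hp hsum h1 hr))
  have hterm : (1 - r) * (1 - t ^ i.2) ≤ 1 - r ^ i.2 := by
    rcases Nat.eq_zero_or_pos i.2 with hn | hn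
    · simp [hn]
    · have hrn : r ^ i.2 ≤ r := pow_le_of_le_one hr.1 hr.2 hn.ne'
      have htn : 0 ≤ t ^ i.2 := pow_nonneg ht.1 _
      nlinarith [hr.2]
  simp only [one_pow, mul_one]
  linarith [mul_le_mul_of_nonneg_left hterm (hp i)]

private lemma mul_sub_le_mul_pow {a : ℝ} (ha : a ∈ Icc (0 : ℝ) 1) (ht : t ∈ Icc (0 : ℝ) 1)
    (hr : r ∈ Ioo (0 : ℝ) 1) (n : ℕ) :
    t * (a - (r - r ^ n) ^ 2 / (r * (1 - r)) ^ 2) ≤ a * t ^ n := by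
  have hden : 0 < r * (1 - r) := mul_pos hr.1 (sub_pos.2 hr.2)
  match n with
  | 0 =>
    have hq : 0 ≤ (r - r ^ 0) ^ 2 / (r * (1 - r)) ^ 2 := by positivity
    nlinarith [mul_nonneg ht.1 hq, mul_nonneg ha.1 (sub_nonneg.2 ht.2)]
  | 1 => simp [mul_comm]
  | n + 2 =>
    have hpow : r ^ (n + 2) ≤ r ^ 2 := pow_le_pow_of_le_one hr.1.le hr.2.le (by omega)
    have hq : 1 ≤ (r - r ^ (n + 2)) ^ 2 / (r * (1 - r)) ^ 2 := by
      rw [one_le_div (by positivity)]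
      exact pow_le_pow_left₀ hden.le (by linarith) 2
    exact (mul_nonpos_of_nonneg_of_nonpos ht.1 (by linarith [ha.2])).trans
      (mul_nonneg ha.1 (pow_nonneg ht.1 _))

/- The subtracted quotient is at least the probability of two or more second-type children,
since `r - r ^ n` vanishes at `n = 1` and is at least `r * (1 - r)` for `n ≥ 2`. -/
lemma mul_sub_le (hp : ∀ i, 0 ≤ p i) (hsum : Summable p) (hs : s ∈ Icc (0 : ℝ) 1)
    (ht : t ∈ Icc (0 : ℝ) 1) (hr : r ∈ Ioo (0 : ℝ) 1) :
    t * (pgf2 p (s, 1) -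
        (r ^ 2 * pgf2 p (1, 1) - 2 * r * pgf2 p (1, r) + pgf2 p (1, r ^ 2)) / (r * (1 - r)) ^ 2)
      ≤ pgf2 p (s, t) := by
  have h1 : (1 : ℝ) ∈ Icc (0 : ℝ) 1 := right_mem_Icc.2 zero_le_one
  have hr' := Ioo_subset_Icc_self hr
  have hr2 : r ^ 2 ∈ Icc (0 : ℝ) 1 := ⟨sq_nonneg r, pow_le_one₀ hr'.1 hr'.2⟩
  refine hasSum_le (fun i => ?_) (((hasSum hp hsum hs h1).sub
    (((((hasSum hp hsum h1 h1).mul_left (r ^ 2)).sub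
      ((hasSum hp hsum h1 hr').mul_left (2 * r))).add
      (hasSum hp hsum h1 hr2)).div_const ((r * (1 - r)) ^ 2))).mul_left t)
    (hasSum hp hsum hs ht)
  have hsi : s ^ i.1 ∈ Icc (0 : ℝ) 1 := ⟨pow_nonneg hs.1 _, pow_le_one₀ hs.1 hs.2⟩
  calc _ = p i * (t * (s ^ i.1 - (r - r ^ i.2) ^ 2 / (r * (1 - r)) ^ 2)) := by
        simp only [one_pow, mul_one]; ring
    _ ≤ p i * (s ^ i.1 * t ^ i.2) :=
        mul_le_mul_of_nonneg_left (mul_sub_le_mul_pow hsi ht hr i.2) (hp i)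
    _ = _ := by ring

end pgf2

section Growth

variable {γ : ℕ → ℝ} {p : ℕ → ℕ × ℕ → ℝ} {L : NNReal} {k : ℕ} {x y : ℝ}

lemma abs_le_mul_norm_of_lipschitzOnWith {E : Type*} [SeminormedAddCommGroup E] {f : E → ℝ}
    {S : Set E} (hf : LipschitzOnWith L f S) (h0 : f 0 = 0) (hS : 0 ∈ S) {v : E} (hv : v ∈ S) :
    |f v| ≤ L * ‖v‖ := by
  simpa [h0] using hf.norm_sub_le hv hS

lemma exp_neg_mem_Icc (hx : 0 ≤ x) : Real.exp (-x) ∈ Icc (0 : ℝ) 1 :=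
  ⟨(Real.exp_pos _).le, Real.exp_le_one_iff.2 (neg_nonpos.2 hx)⟩

lemma exp_neg_div_mem_Icc {c : ℝ} (hc : 0 ≤ c) (hx : 0 ≤ x) :
    Real.exp (-x / c) ∈ Icc (0 : ℝ) 1 := by
  rw [neg_div]; exact exp_neg_mem_Icc (div_nonneg hx hc)

lemma one_sub_exp_neg_mul_le (u : ℝ) (hx : 1 ≤ x) :
    1 - Real.exp (-(x * u)) ≤ x * (1 - Real.exp (-u)) := by
  have h := one_add_mul_self_le_rpow_one_add (s := Real.exp (-u) - 1)
    (by linarith [Real.exp_pos (-u)]) hx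
  rw [add_sub_cancel, ← Real.exp_mul] at h
  rw [show -(x * u) = -u * x by ring]
  linarith

/- The chord slopes of `h` ending at `1` are monotone, and `1 - e^{-x/c} ≤ x (1 - e^{-1/c})`. -/
lemma neg_le_mul_abs_of_convexOn {h : ℝ → ℝ} {c : ℝ} (hconv : ConvexOn ℝ (Icc 0 1) h)
    (h_one : h 1 = 0) (hc : 0 < c) (hx : 1 ≤ x) :
    -h (Real.exp (-x / c)) ≤ x * |h (Real.exp (-1 / c))| := by
  have hone := right_mem_Icc.2 (zero_le_one (α := ℝ))
  have hsx := exp_neg_div_mem_Icc hc.le (zero_le_one.trans hx)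
  have hsx1 : Real.exp (-x / c) ≤ Real.exp (-1 / c) := by gcongr
  have hs1 : Real.exp (-1 / c) < 1 := by
    rw [Real.exp_lt_one_iff, neg_div, neg_lt_zero]; positivity
  have hgap : 1 - Real.exp (-x / c) ≤ x * (1 - Real.exp (-1 / c)) := by
    convert one_sub_exp_neg_mul_le (1 / c) hx using 3 <;> ring_nf
  have hslope := hconv.secant_mono hone hsx (exp_neg_div_mem_Icc hc.le zero_le_one)
    (hsx1.trans_lt hs1).ne hs1.ne hsx1
  rw [h_one, sub_zero, sub_zero] at hslope
  set sx := Real.exp (-x / c)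
  set s1 := Real.exp (-1 / c)
  calc -h sx = (1 - sx) * (h sx / (sx - 1)) := by
        field_simp [(sub_neg.2 (hsx1.trans_lt hs1)).ne]; ring
    _ ≤ (1 - sx) * |h s1 / (s1 - 1)| :=
        mul_le_mul_of_nonneg_left (hslope.trans (le_abs_self _)) (sub_nonneg.2 hsx.2)
    _ ≤ x * (1 - s1) * |h s1 / (s1 - 1)| := mul_le_mul_of_nonneg_right hgap (abs_nonneg _)
    _ = x * |h s1| := by
        rw [abs_div, abs_of_neg (sub_neg.2 hs1), neg_sub]
        field_simp [(sub_pos.2 hs1).ne']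

lemma Phik1_zero (hsum : HasSum (p k) 1) : Phik1 γ (fun k => pgf2 (p k)) k 0 = 0 := by
  simp [Phik1, pgf2.apply_one_one, hsum.tsum_eq]

lemma Phik2_zero (hsum : HasSum (p k) 1) : Phik2 γ (fun k => pgf2 (p k)) k 0 = 0 := by
  simp [Phik2, pgf2.apply_one_one, hsum.tsum_eq]

lemma Phik1_le_add (hγ : 0 ≤ γ k) (hp : ∀ i, 0 ≤ p k i) (hsum : HasSum (p k) 1) (hx : 0 ≤ x)
    (hy : 0 ≤ y) :
    Phik1 γ (fun k => pgf2 (p k)) k (x, y) ≤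
      Phik1 γ (fun k => pgf2 (p k)) k (x, 0) + Phik1 γ (fun k => pgf2 (p k)) k (0, y) := by
  have hc : (0 : ℝ) ≤ k + 1 := by positivity
  have h := pgf2.supermodular hp hsum.summable (exp_neg_div_mem_Icc hc hx) (exp_neg_mem_Icc hy)
  rw [pgf2.apply_one_one, hsum.tsum_eq] at h
  simp only [Phik1, neg_zero, zero_div, Real.exp_zero, ← mul_add]
  exact mul_le_mul_of_nonneg_left (by linarith) (mul_nonneg hc hγ)

lemma Phik1_zero_mk_le (hγ : 0 ≤ γ k) (hp : ∀ i, 0 ≤ p k i) (hsum : HasSum (p k) 1)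
    (hy : 0 ≤ y) :
    Phik1 γ (fun k => pgf2 (p k)) k (0, y) ≤ 2 * Phik1 γ (fun k => pgf2 (p k)) k (0, 1) := by
  have hc : (0 : ℝ) ≤ (k + 1) * γ k := by positivity
  have hexp : Real.exp (-1) ≤ 1 / 2 := by
    have := Real.exp_neg_one_lt_d9; linarith
  have hr := exp_neg_mem_Icc zero_le_one
  have hbound := pgf2.one_sub_mul_sub_le hp hsum.summable hr (exp_neg_mem_Icc hy)
  have hle := pgf2.le_tsum hp hsum.summable (right_mem_Icc.2 zero_le_one) (exp_neg_mem_Icc hy)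
  rw [pgf2.apply_one_one, hsum.tsum_eq] at hbound
  rw [hsum.tsum_eq] at hle
  simp only [Phik1, neg_zero, zero_div, Real.exp_zero]
  rw [mul_left_comm]
  exact mul_le_mul_of_nonneg_left (by nlinarith) hc

lemma Phik1_mk_zero_le (hγ : 0 ≤ γ k) (hp : ∀ i, 0 ≤ p k i) (hsum : HasSum (p k) 1)
    (hx : 1 ≤ x) :
    Phik1 γ (fun k => pgf2 (p k)) k (x, 0) ≤ x * |Phik1 γ (fun k => pgf2 (p k)) k (1, 0)| := by
  have hconv : ConvexOn ℝ (Icc 0 1) fun u => pgf2 (p k) (u, 1) - u :=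
    (pgf2.convexOn_fst hp hsum.summable (right_mem_Icc.2 zero_le_one)).sub
      (concaveOn_id (convex_Icc 0 1))
  have hbound := neg_le_mul_abs_of_convexOn (c := k + 1) hconv
    (by simp [pgf2.apply_one_one, hsum.tsum_eq]) (by positivity) hx
  have hcγ : 0 ≤ (k + 1) * γ k := by positivity
  simp only [Phik1, neg_zero, Real.exp_zero, abs_mul, abs_of_nonneg hcγ]
  rw [neg_sub, abs_sub_comm] at hbound
  rw [mul_left_comm]
  exact mul_le_mul_of_nonneg_left hbound hcγ

lemma Phik2_mk_zero_le (hγ : 0 ≤ γ k) (hp : ∀ i, 0 ≤ p k i) (hsum : HasSum (p k) 1)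
    (hx : 1 ≤ x) :
    Phik2 γ (fun k => pgf2 (p k)) k (x, 0) ≤ x * |Phik2 γ (fun k => pgf2 (p k)) k (1, 0)| := by
  have hconv : ConvexOn ℝ (Icc 0 1) fun u => pgf2 (p k) (u, 1) - 1 :=
    (pgf2.convexOn_fst hp hsum.summable (right_mem_Icc.2 zero_le_one)).sub
      (concaveOn_const 1 (convex_Icc 0 1))
  have hbound := neg_le_mul_abs_of_convexOn (c := k + 1) hconv
    (by simp [pgf2.apply_one_one, hsum.tsum_eq]) (by positivity) hx
  simp only [Phik2, neg_zero, Real.exp_zero, abs_mul, abs_of_nonneg hγ]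
  rw [neg_sub, abs_sub_comm] at hbound
  rw [mul_left_comm]
  exact mul_le_mul_of_nonneg_left hbound hγ

/- With `Ψ y = e^y Φ_{k,2}(0, y)`, the bracket `2Ψ(1) - Ψ(2)` is the mean of `γ_k (1 - e^{1-n})²`
over the number `n` of second-type children. -/
lemma exp_mul_Phik2_le_add (hγ : 0 ≤ γ k) (hp : ∀ i, 0 ≤ p k i) (hsum : HasSum (p k) 1)
    (hx : 0 ≤ x) (hy : 0 ≤ y) :
    Real.exp y * Phik2 γ (fun k => pgf2 (p k)) k (x, y) ≤
      Phik2 γ (fun k => pgf2 (p k)) k (x, 0) +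
        (2 * (Real.exp 1 * Phik2 γ (fun k => pgf2 (p k)) k (0, 1)) -
          Real.exp 2 * Phik2 γ (fun k => pgf2 (p k)) k (0, 2)) / (1 - Real.exp (-1)) ^ 2 := by
  have hr : Real.exp (-1) ∈ Ioo (0 : ℝ) 1 := ⟨Real.exp_pos _, by simp⟩
  have hbound := pgf2.mul_sub_le hp hsum.summable
    (exp_neg_div_mem_Icc (c := k + 1) (by positivity) hx) (exp_neg_mem_Icc hy) hr
  have hsq : Real.exp (-2) = Real.exp (-1) ^ 2 := by rw [← Real.exp_nat_mul]; norm_num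
  rw [pgf2.apply_one_one, hsum.tsum_eq] at hbound
  have he1 : Real.exp 1 = (Real.exp (-1))⁻¹ := by rw [Real.exp_neg, inv_inv]
  have he2 : Real.exp 2 = (Real.exp (-1) ^ 2)⁻¹ := by rw [← hsq, Real.exp_neg, inv_inv]
  have hey : Real.exp y = (Real.exp (-y))⁻¹ := by rw [Real.exp_neg, inv_inv]
  have hr1 := (sub_pos.2 hr.2).ne'
  have hr0 := hr.1.ne'
  simp only [Phik2, neg_zero, zero_div, Real.exp_zero, he1, he2, hey, hsq]
  set r := Real.exp (-1)
  set g := pgf2 (p k)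
  set t := Real.exp (-y)
  set s := Real.exp (-x / (k + 1 : ℝ))
  have ht0 : 0 < t := Real.exp_pos _
  calc t⁻¹ * (γ k * (t - g (s, t)))
      ≤ t⁻¹ * (γ k * (t - t * (g (s, 1) -
          (r ^ 2 * 1 - 2 * r * g (1, r) + g (1, r ^ 2)) / (r * (1 - r)) ^ 2))) := by gcongr
    _ = _ := by field_simp; ring

lemma Phik1_le (hγ : 0 ≤ γ k) (hp : ∀ i, 0 ≤ p k i) (hsum : HasSum (p k) 1)
    (hL : LipschitzOnWith L (Phik1 γ (fun k => pgf2 (p k)) k) (Icc 0 (1, 1))) (hx : 0 ≤ x)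
    (hy : 0 ≤ y) : Phik1 γ (fun k => pgf2 (p k)) k (x, y) ≤ L * (x + 2) := by
  have hbound (v : ℝ × ℝ) (hv : v ∈ Icc 0 (1, 1)) := abs_le_mul_norm_of_lipschitzOnWith hL
    (Phik1_zero hsum) (left_mem_Icc.2 zero_le_one) hv
  have hfst : Phik1 γ (fun k => pgf2 (p k)) k (x, 0) ≤ L * x := by
    rcases le_total x 1 with hx1 | hx1
    · simpa [Prod.norm_def, abs_of_nonneg hx, hx] using
        (le_abs_self _).trans (hbound (x, 0) ⟨⟨hx, le_rfl⟩, ⟨hx1, zero_le_one⟩⟩)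
    · have := hbound (1, 0) ⟨⟨zero_le_one, le_rfl⟩, ⟨le_rfl, zero_le_one⟩⟩
      simp only [Prod.norm_def, norm_one, norm_zero, zero_le_one, sup_of_le_left,
        mul_one] at this
      nlinarith [Phik1_mk_zero_le hγ hp hsum hx1]
  have hsnd : Phik1 γ (fun k => pgf2 (p k)) k (0, 1) ≤ L := by
    simpa [Prod.norm_def] using
      (le_abs_self _).trans (hbound (0, 1) ⟨⟨le_rfl, zero_le_one⟩, ⟨zero_le_one, le_rfl⟩⟩)
  linarith [Phik1_le_add hγ hp hsum hx hy, Phik1_zero_mk_le hγ hp hsum hy]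

lemma exp_mul_Phik2_le (hγ : 0 ≤ γ k) (hp : ∀ i, 0 ≤ p k i) (hsum : HasSum (p k) 1)
    (hL : LipschitzOnWith L (fun l => Real.exp l.2 * Phik2 γ (fun k => pgf2 (p k)) k l)
      (Icc 0 (2, 2))) (hx : 0 ≤ x) (hy : 0 ≤ y) :
    Real.exp y * Phik2 γ (fun k => pgf2 (p k)) k (x, y) ≤ L * (x + 16) := by
  have h0 : (0 : ℝ × ℝ) ∈ Icc (0 : ℝ × ℝ) (2, 2) := left_mem_Icc.2 ⟨zero_le_two, zero_le_two⟩
  have hbound (v : ℝ × ℝ) (hv : v ∈ Icc 0 (2, 2)) :=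
    abs_le_mul_norm_of_lipschitzOnWith hL (by simp [Phik2_zero hsum]) h0 hv
  have hfst : Phik2 γ (fun k => pgf2 (p k)) k (x, 0) ≤ L * x := by
    rcases le_total x 1 with hx1 | hx1
    · simpa [Prod.norm_def, abs_of_nonneg hx, hx] using (le_abs_self _).trans
        (hbound (x, 0) ⟨⟨hx, le_rfl⟩, ⟨hx1.trans one_le_two, zero_le_two⟩⟩)
    · have h10 := hbound (1, 0) ⟨⟨zero_le_one, le_rfl⟩, ⟨one_le_two, zero_le_two⟩⟩
      simp only [Prod.norm_def, Real.exp_zero, one_mul, norm_one, norm_zero, zero_le_one,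
        sup_of_le_left, mul_one] at h10
      nlinarith [Phik2_mk_zero_le hγ hp hsum hx1]
  have h01 := hbound (0, 1) ⟨⟨le_rfl, zero_le_one⟩, ⟨zero_le_two, one_le_two⟩⟩
  have h02 := hbound (0, 2) ⟨⟨le_rfl, zero_le_two⟩, ⟨zero_le_two, le_rfl⟩⟩
  simp only [Prod.norm_def, norm_zero, norm_one, Real.norm_ofNat, zero_le_one, zero_le_two,
    sup_of_le_right, mul_one] at h01 h02
  have hden : 1 / 4 ≤ (1 - Real.exp (-1)) ^ 2 := by nlinarith [Real.exp_neg_one_lt_d9]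
  calc _ ≤ _ := exp_mul_Phik2_le_add hγ hp hsum hx hy
    _ ≤ L * x + L * 16 := by
        refine add_le_add hfst (div_le_of_le_mul₀ (sq_nonneg _) (by positivity) ?_)
        nlinarith [le_of_abs_le h01, neg_le_of_abs_le h02, L.coe_nonneg]
    _ = L * (x + 16) := by ring

end Growth

open scoped Topology

lemma le_exp_mul_of_forall_lt_succ_le {u : ℕ → ℝ} {c b : ℝ} {N : ℕ} (hc : 0 ≤ c) (hb : 0 ≤ b)
    (hu0 : 0 ≤ u 0) (hu : ∀ n < N, u (n + 1) ≤ (1 + c) * u n + b) {n : ℕ} (hn : n ≤ N) :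
    u n ≤ Real.exp (n * c) * (u 0 + n * b) := by
  induction n with
  | zero => simp
  | succ n ih =>
    have hexp : (1 + c) * Real.exp (n * c) ≤ Real.exp ((n + 1 : ℕ) * c) := by
      rw [Nat.cast_succ, add_one_mul, Real.exp_add, mul_comm]
      gcongr
      linarith [Real.add_one_le_exp c]
    calc u (n + 1) ≤ (1 + c) * u n + b := hu n hn
      _ ≤ (1 + c) * (Real.exp (n * c) * (u 0 + n * b)) + 1 * b := by
          rw [one_mul]; gcongr; exact ih (by omega)
      _ ≤ Real.exp ((n + 1 : ℕ) * c) * (u 0 + n * b) + Real.exp ((n + 1 : ℕ) * c) * b := by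
          rw [← mul_assoc]
          gcongr
          exact Real.one_le_exp (by positivity)
      _ = Real.exp ((n + 1 : ℕ) * c) * (u 0 + (n + 1 : ℕ) * b) := by push_cast; ring

lemma iterate_le_exp_mul {α : Type*} {T : α → α} {P : Set α} {w : α → ℝ} {c b R : ℝ} {N : ℕ}
    (hT : MapsTo T P P) (hc : 0 ≤ c) (hb : 0 ≤ b) (hR : Real.exp (N * c) * b ≤ R)
    (hw : ∀ y ∈ P, 0 ≤ w y) (hstep : ∀ y ∈ P, w y ≤ R → w (T y) ≤ (1 + c) * w y)
    {x : α} (hx : x ∈ P) (hxb : w x ≤ b) {n : ℕ} (hn : n ≤ N) : w (T^[n] x) ≤ R := by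
  have hgrow : ∀ m ≤ N, w (T^[m] x) ≤ Real.exp (m * c) * b := by
    intro m hm
    induction m with
    | zero => simpa using hxb
    | succ m ih =>
      have him := ih (by omega)
      have hRm : w (T^[m] x) ≤ R :=
        him.trans (le_trans (by gcongr; omega) hR)
      rw [Function.iterate_succ_apply']
      calc w (T (T^[m] x)) ≤ (1 + c) * w (T^[m] x) := hstep _ (hT.iterate m hx) hRm
        _ ≤ Real.exp c * (Real.exp (m * c) * b) :=
            mul_le_mul (by linarith [Real.add_one_le_exp c]) him (hw _ (hT.iterate m hx))
              (Real.exp_pos c).le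
        _ = Real.exp ((m + 1 : ℕ) * c) * b := by
            rw [Nat.cast_succ, add_one_mul, Real.exp_add]; ring
  exact (hgrow n hn).trans (le_trans (by gcongr) hR)

section EulerScheme

variable {E : Type*} [NormedAddCommGroup E] [NormedSpace ℝ E] {F : E → E} {K : NNReal}
  {M a : ℝ} {X : ℝ → E}

lemma exists_isIntegralCurveOn_Icc [CompleteSpace E] (hF : LipschitzWith K F)
    (hM : ∀ x, ‖F x‖ ≤ M) (ha : 0 ≤ a) (x : E) :
    ∃ X : ℝ → E, X 0 = x ∧ IsIntegralCurveOn X (fun _ => F) (Icc 0 a) := by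
  lift M to NNReal using (norm_nonneg _).trans (hM 0)
  lift a to NNReal using ha
  have hPL : IsPicardLindelof (fun _ => F) (⟨0, left_mem_Icc.2 a.2⟩ : Icc (0 : ℝ) a) x (M * a) 0
      M K := .of_time_independent (fun y _ => hM y) hF.lipschitzOnWith (by simp)
  exact hPL.exists_eq_forall_mem_Icc_hasDerivWithinAt₀

lemma eq_add_integral_of_isIntegralCurveOn [CompleteSpace E] (hF : Continuous F)
    (hX : IsIntegralCurveOn X (fun _ => F) (Icc 0 a)) {t : ℝ} (ht : t ∈ Icc 0 a) :
    X t = X 0 + ∫ s in (0 : ℝ)..t, F (X s) := by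
  have hsub : uIcc 0 t ⊆ Icc 0 a := by
    rw [uIcc_of_le ht.1]; exact Icc_subset_Icc_right ht.2
  exact (ODE.picard_eq_of_hasDerivAt (f := fun _ => F) (u := univ)
    (hF.comp continuous_snd).continuousOn (hX.mono hsub) (mapsTo_univ _ _)).symm

lemma norm_integralCurve_sub_le (hM : ∀ x, ‖F x‖ ≤ M)
    (hX : IsIntegralCurveOn X (fun _ => F) (Icc 0 a)) {s t : ℝ} (hs : 0 ≤ s) (hst : s ≤ t)
    (ht : t ≤ a) : ‖X t - X s‖ ≤ M * (t - s) :=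
  norm_image_sub_le_of_norm_deriv_le_segment' (hX.mono (Icc_subset_Icc hs ht))
    (fun _ _ => hM _) t (right_mem_Icc.2 hst)

lemma norm_integralCurve_sub_eulerStep_le (hF : LipschitzWith K F) (hM : ∀ x, ‖F x‖ ≤ M)
    (hX : IsIntegralCurveOn X (fun _ => F) (Icc 0 a)) {s h : ℝ} (hs : 0 ≤ s) (hh : 0 ≤ h)
    (hsh : s + h ≤ a) : ‖X (s + h) - X s - h • F (X s)‖ ≤ h * (K * M * h) := by
  have hM0 : 0 ≤ M := (norm_nonneg _).trans (hM 0)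
  have hderiv : ∀ r ∈ Icc s (s + h), HasDerivWithinAt (fun r => X r - (r - s) • F (X s))
      (F (X r) - F (X s)) (Icc s (s + h)) r := fun r hr => by
    simpa using (hX.mono (Icc_subset_Icc hs hsh) r hr).fun_sub
      (((hasDerivWithinAt_id r _).sub_const s).smul_const (F (X s)))
  have hbound : ∀ r ∈ Ico s (s + h), ‖F (X r) - F (X s)‖ ≤ K * M * h := fun r hr =>
    calc ‖F (X r) - F (X s)‖ ≤ K * ‖X r - X s‖ := hF.norm_sub_le _ _
      _ ≤ K * (M * h) := by
          gcongr
          exact (norm_integralCurve_sub_le hM hX hs hr.1 (by linarith [hr.2])).trans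
            (mul_le_mul_of_nonneg_left (by linarith [hr.2]) hM0)
      _ = K * M * h := by ring
  have hle := norm_image_sub_le_of_norm_deriv_le_segment' hderiv hbound (s + h)
    (right_mem_Icc.2 (by linarith))
  rw [add_sub_cancel_left, sub_self, zero_smul, sub_zero, mul_comm (_ * _)] at hle
  rwa [sub_right_comm]

lemma norm_step_sub_integralCurve_le (hF : LipschitzWith K F) (hM : ∀ x, ‖F x‖ ≤ M)
    (hX : IsIntegralCurveOn X (fun _ => F) (Icc 0 a)) {y y' : E} {s h ε : ℝ} (hs : 0 ≤ s)
    (hh : 0 < h) (hsh : s + h ≤ a) (hy : ‖h⁻¹ • (y' - y) - F y‖ ≤ ε) :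
    ‖y' - X (s + h)‖ ≤ (1 + h * K) * ‖y - X s‖ + h * (ε + K * M * h) := by
  have hlocal := norm_integralCurve_sub_eulerStep_le hF hM hX hs hh.le hsh
  have hincr : ‖y' - y - h • F y‖ ≤ h * ε := by
    rw [show y' - y - h • F y = h • (h⁻¹ • (y' - y) - F y) by
      rw [smul_sub, smul_inv_smul₀ hh.ne'], norm_smul, Real.norm_of_nonneg hh.le]
    exact mul_le_mul_of_nonneg_left hy hh.le
  have hfield : ‖h • (F y - F (X s))‖ ≤ h * (K * ‖y - X s‖) := by
    rw [norm_smul, Real.norm_of_nonneg hh.le]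
    exact mul_le_mul_of_nonneg_left (hF.norm_sub_le y (X s)) hh.le
  calc ‖y' - X (s + h)‖
      = ‖(y' - y - h • F y) + h • (F y - F (X s)) + (y - X s)
          - (X (s + h) - X s - h • F (X s))‖ := by congr 1; module
    _ ≤ h * ε + h * (K * ‖y - X s‖) + ‖y - X s‖ + h * (K * M * h) :=
        (norm_sub_le _ _).trans (add_le_add ((norm_add_le _ _).trans
          (add_le_add_left ((norm_add_le _ _).trans (add_le_add hincr hfield)) _)) hlocal)
    _ = _ := by ring

lemma norm_iterate_sub_integralCurve_le (hF : LipschitzWith K F) (hM : ∀ x, ‖F x‖ ≤ M)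
    (hX : IsIntegralCurveOn X (fun _ => F) (Icc 0 a)) {T : E → E} {B : Set E} {h ε : ℝ}
    (hh : 0 < h) (hε : 0 ≤ ε) (hcons : ∀ y ∈ B, ‖h⁻¹ • (T y - y) - F y‖ ≤ ε) {N : ℕ}
    (hN : N * h ≤ a) (hB : ∀ n < N, T^[n] (X 0) ∈ B) :
    ‖T^[N] (X 0) - X (N * h)‖ ≤ Real.exp (a * K) * (a * (ε + K * M * h)) := by
  have hM0 : 0 ≤ M := (norm_nonneg _).trans (hM 0)
  have hstep : ∀ n < N, ‖T^[n + 1] (X 0) - X ((n + 1 : ℕ) * h)‖ ≤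
      (1 + h * K) * ‖T^[n] (X 0) - X (n * h)‖ + h * (ε + K * M * h) := fun n hn => by
    have htime : ((n + 1 : ℕ) : ℝ) * h = n * h + h := by push_cast; ring
    have hnh : ((n + 1 : ℕ) : ℝ) * h ≤ a :=
      (mul_le_mul_of_nonneg_right (by exact_mod_cast hn) hh.le).trans hN
    rw [Function.iterate_succ_apply', htime]
    exact norm_step_sub_integralCurve_le hF hM hX (by positivity) hh (htime ▸ hnh)
      (hcons _ (hB n hn))
  have hgronwall := le_exp_mul_of_forall_lt_succ_le (u := fun n => ‖T^[n] (X 0) - X (n * h)‖)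
    (by positivity) (by positivity) (norm_nonneg _) hstep le_rfl
  simp only [Function.iterate_zero, id_eq, Nat.cast_zero, zero_mul, sub_self, norm_zero, zero_add,
    ← mul_assoc (N : ℝ)] at hgronwall
  exact hgronwall.trans (by gcongr)

lemma norm_iterate_floor_sub_integralCurve_le (hF : LipschitzWith K F) (hM : ∀ x, ‖F x‖ ≤ M)
    (hX : IsIntegralCurveOn X (fun _ => F) (Icc 0 a)) {T : E → E} {B : Set E} {γ ε : ℝ}
    (hγ : 0 < γ) (hε : 0 ≤ ε) (hcons : ∀ y ∈ B, ‖γ • (T y - y) - F y‖ ≤ ε)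
    (hB : ∀ n : ℕ, n ≤ γ * a → T^[n] (X 0) ∈ B) {t : ℝ} (ht : t ∈ Icc 0 a) :
    ‖T^[⌊γ * t⌋₊] (X 0) - X t‖ ≤ Real.exp (a * K) * (a * (ε + K * M * γ⁻¹)) + M * γ⁻¹ := by
  have hM0 : 0 ≤ M := (norm_nonneg _).trans (hM 0)
  have hfloor_le : (⌊γ * t⌋₊ : ℝ) ≤ γ * t := Nat.floor_le (mul_nonneg hγ.le ht.1)
  have hgrid_le : ⌊γ * t⌋₊ * γ⁻¹ ≤ t := by
    rwa [← div_eq_mul_inv, div_le_iff₀' hγ]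
  have hgrid_gap : t - ⌊γ * t⌋₊ * γ⁻¹ ≤ γ⁻¹ := by
    rw [sub_le_iff_le_add, ← one_add_mul, ← div_eq_mul_inv, le_div_iff₀' hγ, add_comm]
    exact (Nat.lt_floor_add_one _).le
  have hgrid := norm_iterate_sub_integralCurve_le hF hM hX (inv_pos.2 hγ) hε
    (by simpa only [inv_inv] using hcons) (hgrid_le.trans ht.2)
    fun n hn => hB n ((Nat.cast_le.2 hn.le).trans (hfloor_le.trans (by gcongr; exact ht.2)))
  have hflow := norm_integralCurve_sub_le hM hX (by positivity) hgrid_le ht.2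
  rw [norm_sub_rev] at hflow
  exact (norm_sub_le_norm_sub_add_norm_sub _ _ _).trans
    (add_le_add hgrid (hflow.trans (mul_le_mul_of_nonneg_left hgrid_gap hM0)))

theorem tendstoUniformlyOn_iterate_floor {ι : Type*} {l : Filter ι} {γ : ι → ℝ}
    {T : ι → E → E} {B S : Set E} {X : E → ℝ → E} (hF : LipschitzWith K F)
    (hM : ∀ x, ‖F x‖ ≤ M) (ha : 0 ≤ a) (hγ : Tendsto γ l atTop)
    (hcons : TendstoUniformlyOn (fun k x => γ k • (T k x - x)) F l B)
    (hB : ∀ᶠ k in l, ∀ x ∈ S, ∀ n : ℕ, n ≤ γ k * a → (T k)^[n] x ∈ B)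
    (hX0 : ∀ x ∈ S, X x 0 = x)
    (hX : ∀ x ∈ S, IsIntegralCurveOn (X x) (fun _ => F) (Icc 0 a)) :
    TendstoUniformlyOn (fun k (q : ℝ × E) => (T k)^[⌊γ k * q.1⌋₊] q.2) (fun q => X q.2 q.1) l
      (Icc 0 a ×ˢ S) := by
  rw [Metric.tendstoUniformlyOn_iff] at hcons ⊢
  intro δ hδ
  have hlim : Tendsto
      (fun r : ℝ => Real.exp (a * K) * (a * (r + K * M * r)) + M * r) (𝓝[>] 0) (𝓝 0) := by
    exact tendsto_nhdsWithin_of_tendsto_nhds (Continuous.tendsto' (by fun_prop) _ _ (by simp))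
  obtain ⟨ε, hεδ, hε⟩ := ((hlim.eventually_lt_const hδ).and self_mem_nhdsWithin).exists
  have hε : 0 < ε := hε
  have hM0 : 0 ≤ M := (norm_nonneg _).trans (hM 0)
  filter_upwards [hcons ε hε, hB, hγ.eventually_gt_atTop 0, hγ.eventually_ge_atTop ε⁻¹]
    with k hk hBk hγk hγε q hq
  have hinv : (γ k)⁻¹ ≤ ε := inv_le_of_inv_le₀ hε hγε
  have hle := norm_iterate_floor_sub_integralCurve_le hF hM (hX _ hq.2) hγk hε.le
    (fun y hy => by rw [← dist_eq_norm, dist_comm]; exact (hk y hy).le)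
    (by simpa only [hX0 _ hq.2] using hBk q.2 hq.2) hq.1
  rw [hX0 _ hq.2] at hle
  rw [dist_comm, dist_eq_norm]
  refine (hle.trans ?_).trans_lt hεδ
  gcongr

end EulerScheme

section PlanarScheme

variable {ι : Type*} {f : Filter ι} {γ : ι → ℝ} {T : ι → ℝ × ℝ → ℝ × ℝ} {Φ : ℝ × ℝ → ℝ × ℝ}
  {a C : ℝ}

lemma exists_bounded_lipschitzWith_eqOn_Icc {E : Type*} [SeminormedAddCommGroup E]
    {Φ : ℝ × ℝ → E} {K : NNReal} {R : ℝ} (hR : 0 ≤ R)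
    (hΦ : LipschitzOnWith K Φ (Icc 0 (R, R))) :
    ∃ (F : ℝ × ℝ → E) (M : ℝ), LipschitzWith K F ∧ (∀ x, ‖F x‖ ≤ M) ∧ EqOn F Φ (Icc 0 (R, R)) := by
  set clip : ℝ × ℝ → ℝ × ℝ := fun x => (projIcc 0 R hR x.1, projIcc 0 R hR x.2)
  have hclip_lip : LipschitzWith 1 clip := by
    simpa using ((LipschitzWith.subtype_val _).comp
      ((LipschitzWith.projIcc hR).comp LipschitzWith.prod_fst)).prodMk
      ((LipschitzWith.subtype_val _).comp ((LipschitzWith.projIcc hR).comp LipschitzWith.prod_snd))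
  have hclip_mem (x : ℝ × ℝ) : clip x ∈ Icc 0 (R, R) :=
    ⟨⟨(projIcc 0 R hR x.1).2.1, (projIcc 0 R hR x.2).2.1⟩,
      ⟨(projIcc 0 R hR x.1).2.2, (projIcc 0 R hR x.2).2.2⟩⟩
  have hclip_eq : EqOn clip id (Icc 0 (R, R)) := fun x hx => by
    simp [clip, projIcc_of_mem hR ⟨hx.1.1, hx.2.1⟩, projIcc_of_mem hR ⟨hx.1.2, hx.2.2⟩]
  obtain ⟨M, hM⟩ := isCompact_Icc.exists_bound_of_continuousOn hΦ.continuousOn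
  refine ⟨Φ ∘ clip, M, ?_, fun x => hM _ (hclip_mem x), fun x hx => congrArg Φ (hclip_eq hx)⟩
  rw [← lipschitzOnWith_univ]
  simpa using hΦ.comp (hclip_lip.lipschitzOnWith (s := univ)) fun x _ => hclip_mem x

lemma eventually_iterate_mem_Icc (hγ : Tendsto γ f atTop)
    (hT : ∀ k, MapsTo (T k) (Ici 0) (Ici 0)) (ha : 0 ≤ a) (hC : 0 ≤ C) {R : ℝ}
    (hR : Real.exp ((C + 2) * a) * (1 + 2 * a) ≤ R)
    (hgrowth : ∀ x ∈ Ici 0, (Φ x).1 + (Φ x).2 ≤ C * (1 + x.1 + x.2))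
    (hcons : TendstoUniformlyOn (fun k x => γ k • (T k x - x)) Φ f (Icc 0 (R, R))) :
    ∀ᶠ k in f, ∀ x ∈ Icc 0 (a, a), ∀ n : ℕ, n ≤ γ k * a → (T k)^[n] x ∈ Icc 0 (R, R) := by
  rw [Metric.tendstoUniformlyOn_iff] at hcons
  filter_upwards [hcons 1 one_pos, hγ.eventually_gt_atTop 0] with k hk hγk x hx n hn
  have hnonneg : ∀ y ∈ Ici (0 : ℝ × ℝ), 0 ≤ y.1 ∧ 0 ≤ y.2 := fun y hy => hy
  have hbox : ∀ y ∈ Ici (0 : ℝ × ℝ), 1 + y.1 + y.2 ≤ R → y ∈ Icc 0 (R, R) := fun y hy hyR => by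
    obtain ⟨hy1, hy2⟩ := hnonneg y hy
    exact ⟨hy, Prod.mk_le_mk.2 ⟨by linarith, by linarith⟩⟩
  have hNa : (⌊γ k * a⌋₊ : ℝ) * ((C + 2) / γ k) ≤ (C + 2) * a := by
    rw [mul_div_assoc', div_le_iff₀ hγk]
    nlinarith [Nat.floor_le (mul_nonneg hγk.le ha)]
  have hstep : ∀ y ∈ Ici (0 : ℝ × ℝ), 1 + y.1 + y.2 ≤ R →
      1 + (T k y).1 + (T k y).2 ≤ (1 + (C + 2) / γ k) * (1 + y.1 + y.2) := fun y hy hyR => by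
    have hdist := hk y (hbox y hy hyR)
    rw [Prod.dist_eq, max_lt_iff, Real.dist_eq, Real.dist_eq] at hdist
    have h1 : γ k * ((T k y).1 - y.1) - (Φ y).1 < 1 := (abs_sub_lt_iff.1 hdist.1).2
    have h2 : γ k * ((T k y).2 - y.2) - (Φ y).2 < 1 := (abs_sub_lt_iff.1 hdist.2).2
    have hincr : γ k * (((T k y).1 - y.1) + ((T k y).2 - y.2)) ≤ (C + 2) * (1 + y.1 + y.2) := by
      linarith [hgrowth y hy, (hnonneg y hy).1, (hnonneg y hy).2]
    rw [← le_div_iff₀' hγk] at hincr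
    linear_combination hincr
  have hiter_nonneg := (hT k).iterate n hx.1
  refine hbox _ hiter_nonneg (iterate_le_exp_mul (N := ⌊γ k * a⌋₊) (b := 1 + 2 * a)
    (w := fun y : ℝ × ℝ => 1 + y.1 + y.2) (hT k) (by positivity) (by positivity) ?_
    (fun y hy => by linarith [(hnonneg y hy).1, (hnonneg y hy).2]) hstep hx.1
    (by linarith [hx.2.1, hx.2.2]) (Nat.le_floor hn))
  exact le_trans (by gcongr) hR

lemma exists_limit_iterate_floor_on_Icc [f.NeBot] (hγ : Tendsto γ f atTop)
    (hT : ∀ k, MapsTo (T k) (Ici 0) (Ici 0)) (hC : 0 ≤ C)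
    (hgrowth : ∀ x ∈ Ici 0, (Φ x).1 + (Φ x).2 ≤ C * (1 + x.1 + x.2))
    (hlip : ∀ R : ℝ, 0 ≤ R → ∃ K, LipschitzOnWith K Φ (Icc 0 (R, R)))
    (hcons : ∀ R : ℝ, 0 ≤ R →
      TendstoUniformlyOn (fun k x => γ k • (T k x - x)) Φ f (Icc 0 (R, R)))
    (ha : 0 ≤ a) :
    ∃ X : ℝ × ℝ → ℝ → ℝ × ℝ,
      TendstoUniformlyOn (fun k (q : ℝ × (ℝ × ℝ)) => (T k)^[⌊γ k * q.1⌋₊] q.2)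
        (fun q => X q.2 q.1) f (Icc 0 a ×ˢ Icc 0 (a, a)) ∧
      ∀ x ∈ Icc 0 (a, a), ∀ t ∈ Icc 0 a,
        IntervalIntegrable (fun s => Φ (X x s)) MeasureTheory.volume 0 t ∧
        X x t = x + ∫ s in (0 : ℝ)..t, Φ (X x s) := by
  set R := Real.exp ((C + 2) * a) * (1 + 2 * a) with hR
  have hR0 : 0 ≤ R := by positivity
  have hstay := eventually_iterate_mem_Icc hγ hT ha hC hR.ge hgrowth (hcons R hR0)
  obtain ⟨K, hK⟩ := hlip R hR0
  obtain ⟨F, M, hF, hM, hFΦ⟩ := exists_bounded_lipschitzWith_eqOn_Icc hR0 hK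
  choose X hX0 hX using exists_isIntegralCurveOn_Icc hF hM ha
  have hconv := tendstoUniformlyOn_iterate_floor hF hM ha hγ ((hcons R hR0).congr_right hFΦ.symm)
    hstay (fun x _ => hX0 x) (fun x _ => hX x)
  refine ⟨X, hconv, fun x hx t ht => ?_⟩
  have hXmem : ∀ s ∈ Icc 0 a, X x s ∈ Icc 0 (R, R) := fun s hs => by
    refine isClosed_Icc.mem_of_tendsto (hconv.tendsto_at (x := (s, x)) ⟨hs, hx⟩) ?_
    filter_upwards [hstay, hγ.eventually_ge_atTop 0] with k hk hγk
    exact hk x hx _ ((Nat.floor_le (mul_nonneg hγk hs.1)).trans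
      (mul_le_mul_of_nonneg_left hs.2 hγk))
  have hsub : uIcc 0 t ⊆ Icc 0 a := by
    rw [uIcc_of_le ht.1]; exact Icc_subset_Icc_right ht.2
  have hcongr : EqOn (fun s => Φ (X x s)) (fun s => F (X x s)) (uIcc 0 t) := fun s hs =>
    (hFΦ (hXmem s (hsub hs))).symm
  have hint : ContinuousOn (fun s => F (X x s)) (uIcc 0 t) :=
    hF.continuous.comp_continuousOn ((hX x).continuousOn.mono hsub)
  refine ⟨(hint.congr hcongr).intervalIntegrable, ?_⟩
  rw [intervalIntegral.integral_congr hcongr]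
  simpa only [hX0 x] using eq_add_integral_of_isIntegralCurveOn hF.continuous (hX x) ht

theorem exists_limit_iterate_floor [f.NeBot] (hγ : Tendsto γ f atTop)
    (hT : ∀ k, MapsTo (T k) (Ici 0) (Ici 0)) (hC : 0 ≤ C)
    (hgrowth : ∀ x ∈ Ici 0, (Φ x).1 + (Φ x).2 ≤ C * (1 + x.1 + x.2))
    (hlip : ∀ R : ℝ, 0 ≤ R → ∃ K, LipschitzOnWith K Φ (Icc 0 (R, R)))
    (hcons : ∀ R : ℝ, 0 ≤ R →
      TendstoUniformlyOn (fun k x => γ k • (T k x - x)) Φ f (Icc 0 (R, R))) :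
    ∃ V : ℝ → ℝ × ℝ → ℝ × ℝ,
      (∀ a : ℝ, 0 ≤ a → TendstoUniformlyOn
        (fun k (q : ℝ × (ℝ × ℝ)) => (T k)^[⌊γ k * q.1⌋₊] q.2) (fun q => V q.1 q.2) f
        (Icc 0 a ×ˢ Icc 0 (a, a))) ∧
      ∀ t : ℝ, 0 ≤ t → ∀ x ∈ Ici 0,
        IntervalIntegrable (fun s => Φ (V s x)) MeasureTheory.volume 0 t ∧
        V t x = x + ∫ s in (0 : ℝ)..t, Φ (V s x) := by
  choose! X hXlim hXint using fun (a : ℝ) (ha : 0 ≤ a) =>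
    exists_limit_iterate_floor_on_Icc hγ hT hC hgrowth hlip hcons ha
  set V : ℝ → ℝ × ℝ → ℝ × ℝ := fun t x => limUnder f fun k => (T k)^[⌊γ k * t⌋₊] x
  have hVX (a : ℝ) (ha : 0 ≤ a) (t : ℝ) (ht : t ∈ Icc 0 a) (x : ℝ × ℝ) (hx : x ∈ Icc 0 (a, a)) :
      V t x = X a x t :=
    ((hXlim a ha).tendsto_at (x := (t, x)) ⟨ht, hx⟩).limUnder_eq
  refine ⟨V, fun a ha => (hXlim a ha).congr_right fun q hq => (hVX a ha _ hq.1 _ hq.2).symm,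
    fun t ht x hx => ?_⟩
  set a := max t (max x.1 x.2)
  have hta : t ≤ a := le_max_left _ _
  have ha : 0 ≤ a := ht.trans hta
  have hxa : x ∈ Icc 0 (a, a) :=
    ⟨hx, ⟨(le_max_left _ _).trans (le_max_right _ _), (le_max_right _ _).trans (le_max_right _ _)⟩⟩
  have hcongr : EqOn (fun s => Φ (V s x)) (fun s => Φ (X a x s)) (uIcc 0 t) := fun s hs => by
    rw [uIcc_of_le ht] at hs
    exact congrArg Φ (hVX a ha s ⟨hs.1, hs.2.trans hta⟩ x hxa)
  obtain ⟨hint, heq⟩ := hXint a ha x hxa t ⟨ht, hta⟩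
  rw [intervalIntegral.integral_congr hcongr, hVX a ha t ⟨ht, hta⟩ x hxa]
  exact ⟨(intervalIntegrable_congr (hcongr.mono uIoc_subset_uIcc)).2 hint, heq⟩

end PlanarScheme

section ContinuousConvergence

variable {ι α β : Type*} {f : Filter ι} {s : Set α}

lemma tendsto_prod_nhdsWithin_of_lipschitzOnWith [PseudoMetricSpace α] [PseudoMetricSpace β]
    {F : ι → α → β} {K : NNReal} {x : α} {y : β} (hF : ∀ i, LipschitzOnWith K (F i) s)
    (hx : x ∈ s) (hy : Tendsto (fun i => F i x) f (𝓝 y)) :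
    Tendsto (fun q : ι × α => F q.1 q.2) (f ×ˢ 𝓝[s] x) (𝓝 y) := by
  have hsnd : Tendsto Prod.snd (f ×ˢ 𝓝[s] x) (𝓝[s] x) := tendsto_snd
  refine tendsto_of_tendsto_of_dist (hy.comp tendsto_fst) (squeeze_zero' (.of_forall fun _ =>
    dist_nonneg) ((hsnd.eventually self_mem_nhdsWithin).mono fun q hq =>
      (hF q.1).dist_le_mul x hx q.2 hq) ?_)
  have hdist : Tendsto (fun q : ι × α => dist x q.2) (f ×ˢ 𝓝[s] x) (𝓝 (dist x x)) :=
    tendsto_const_nhds.dist (hsnd.mono_right nhdsWithin_le_nhds)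
  simpa using hdist.const_mul (K : ℝ)

lemma tendstoUniformlyOn_of_forall_tendsto_prod [TopologicalSpace α] [UniformSpace β]
    {F : ι → α → β} {g : α → β} (hs : IsCompact s) (hg : ContinuousOn g s)
    (h : ∀ x ∈ s, Tendsto (fun q : ι × α => F q.1 q.2) (f ×ˢ 𝓝[s] x) (𝓝 (g x))) :
    TendstoUniformlyOn F g f s := by
  rw [← tendstoLocallyUniformlyOn_iff_tendstoUniformlyOn_of_compact hs,
    tendstoLocallyUniformlyOn_iff_forall_tendsto]
  intro x hx
  have hgx : Tendsto g (𝓝[s] x) (𝓝 (g x)) := hg x hx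
  exact ((hgx.comp tendsto_snd).prodMk_nhds (h x hx)).mono_right (nhds_le_uniformity _)

lemma lipschitzOnWith_of_tendsto [PseudoMetricSpace α] [PseudoMetricSpace β] [f.NeBot]
    {F : ι → α → β} {g : α → β} {K : NNReal} (hF : ∀ i, LipschitzOnWith K (F i) s)
    (hg : ∀ x ∈ s, Tendsto (fun i => F i x) f (𝓝 (g x))) : LipschitzOnWith K g s :=
  .of_dist_le_mul fun x hx y hy =>
    le_of_tendsto ((hg x hx).dist (hg y hy)) (.of_forall fun i => (hF i).dist_le_mul x hx y hy)

lemma tendsto_neg_mul_log_one_sub_div {c w : ι → ℝ} {w₀ : ℝ} (hc : Tendsto c f atTop)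
    (hw : Tendsto w f (𝓝 w₀)) :
    Tendsto (fun i => -(c i * Real.log (1 - w i / c i))) f (𝓝 w₀) := by
  have hsmall : Tendsto (fun i => -(w i / c i)) f (𝓝 0) := by simpa using (hw.div_atTop hc).neg
  have hlog := (hasDerivAt_iff_isLittleO_nhds_zero.1 (Real.hasDerivAt_log one_ne_zero)).comp_tendsto
    hsmall
  have hrem : (fun i => c i * (Real.log (1 - w i / c i) + w i / c i)) =o[f] fun _ => (1 : ℝ) := by
    refine (((Asymptotics.isBigO_refl c f).mul_isLittleO hlog).congr' ?_ ?_).trans_isBigO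
      (hw.neg.isBigO_one ℝ)
    · exact .of_forall fun i => by simp [sub_eq_add_neg]
    · filter_upwards [hc.eventually_ne_atTop 0] with i hi
      simp [mul_div_cancel₀, hi]
  rw [Asymptotics.isLittleO_one_iff] at hrem
  refine (by simpa using hw.sub hrem : Tendsto _ f (𝓝 w₀)).congr' ?_
  filter_upwards [hc.eventually_ne_atTop 0] with i hi
  rw [mul_add, mul_div_cancel₀ _ hi]
  ring

end ContinuousConvergence

section LogCoordinates

/-- The coordinates `(e^{-x₁/c}, e^{-x₂})` of `x`, in which the generating functions are iterated;
`c` is the scaling of the first type. -/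
def expCoord (c : ℝ) (x : ℝ × ℝ) : ℝ × ℝ := (Real.exp (-x.1 / c), Real.exp (-x.2))

/-- The inverse `(-c log s₁, -log s₂)` of `expCoord c` on `(0, 1]²`. -/
def logCoord (c : ℝ) (s : ℝ × ℝ) : ℝ × ℝ := (-c * Real.log s.1, -Real.log s.2)

/-- One generation `s ↦ (g₁ s, g₂ s)` written in the coordinates `logCoord c`. -/
def logStep (c : ℝ) (g₁ g₂ : ℝ × ℝ → ℝ) (x : ℝ × ℝ) : ℝ × ℝ :=
  logCoord c (g₁ (expCoord c x), g₂ (expCoord c x))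

variable {c : ℝ} {g₁ g₂ : ℝ × ℝ → ℝ} {p₁ p₂ : ℕ × ℕ → ℝ} {x s : ℝ × ℝ}

lemma expCoord_mem (hc : 0 ≤ c) (hx : 0 ≤ x) : expCoord c x ∈ Ioc (0 : ℝ) 1 ×ˢ Ioc (0 : ℝ) 1 :=
  ⟨⟨Real.exp_pos _, (exp_neg_div_mem_Icc hc hx.1).2⟩, ⟨Real.exp_pos _, (exp_neg_mem_Icc hx.2).2⟩⟩

lemma logCoord_nonneg (hc : 0 ≤ c) (hs : s ∈ Ioc (0 : ℝ) 1 ×ˢ Ioc (0 : ℝ) 1) :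
    0 ≤ logCoord c s :=
  ⟨mul_nonneg_of_nonpos_of_nonpos (neg_nonpos.2 hc) (Real.log_nonpos hs.1.1.le hs.1.2),
    neg_nonneg.2 (Real.log_nonpos hs.2.1.le hs.2.2)⟩

lemma expCoord_logCoord (hc : c ≠ 0) (hs : s ∈ Ioc (0 : ℝ) 1 ×ˢ Ioc (0 : ℝ) 1) :
    expCoord c (logCoord c s) = s := by
  simp [expCoord, logCoord, hc, Real.exp_log hs.1.1, Real.exp_log hs.2.1]

lemma logCoord_expCoord (hc : c ≠ 0) : logCoord c (expCoord c x) = x := by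
  simp [expCoord, logCoord, mul_div_cancel₀, hc]

lemma mapsTo_pgf2_prodMk (hp₁ : ∀ i, 0 ≤ p₁ i) (hp₁_sum : HasSum p₁ 1) (hp₂ : ∀ i, 0 ≤ p₂ i)
    (hp₂_sum : HasSum p₂ 1) :
    MapsTo (fun s => (pgf2 p₁ s, pgf2 p₂ s)) (Ioc 0 1 ×ˢ Ioc 0 1) (Ioc 0 1 ×ˢ Ioc 0 1) := by
  have hmem {p : ℕ × ℕ → ℝ} (hp : ∀ i, 0 ≤ p i) (hsum : HasSum p 1) {s : ℝ × ℝ}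
      (hs : s ∈ Ioc (0 : ℝ) 1 ×ˢ Ioc (0 : ℝ) 1) : pgf2 p s ∈ Ioc 0 1 :=
    ⟨pgf2.pos hp hsum.summable (by simp [hsum.tsum_eq]) hs.1 hs.2,
      hsum.tsum_eq ▸ pgf2.le_tsum hp hsum.summable (Ioc_subset_Icc_self hs.1)
        (Ioc_subset_Icc_self hs.2)⟩
  exact fun s hs => ⟨hmem hp₁ hp₁_sum hs, hmem hp₂ hp₂_sum hs⟩

lemma mapsTo_logStep (hc : 0 ≤ c)
    (hg : MapsTo (fun s => (g₁ s, g₂ s)) (Ioc 0 1 ×ˢ Ioc 0 1) (Ioc 0 1 ×ˢ Ioc 0 1)) :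
    MapsTo (logStep c g₁ g₂) (Ici 0) (Ici 0) :=
  fun _ hx => logCoord_nonneg hc (hg (expCoord_mem hc hx))

lemma pairIter_mem {U : Set (ℝ × ℝ)} (hg : MapsTo (fun s => (g₁ s, g₂ s)) U U) (hs : s ∈ U)
    (n : ℕ) : pairIter g₁ g₂ n s ∈ U := by
  induction n with
  | zero => exact hs
  | succ n ih => exact hg ih

lemma iterate_logStep (hc : 0 < c)
    (hg : MapsTo (fun s => (g₁ s, g₂ s)) (Ioc 0 1 ×ˢ Ioc 0 1) (Ioc 0 1 ×ˢ Ioc 0 1)) (hx : 0 ≤ x)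
    (n : ℕ) : (logStep c g₁ g₂)^[n] x = logCoord c (pairIter g₁ g₂ n (expCoord c x)) := by
  induction n with
  | zero => simp [pairIter, logCoord_expCoord hc.ne']
  | succ n ih =>
    rw [Function.iterate_succ_apply', ih, logStep,
      expCoord_logCoord hc.ne' (pairIter_mem hg (expCoord_mem hc.le hx) n)]
    rfl

lemma smul_logStep_sub (hc : c ≠ 0) (hs : 0 < g₁ (expCoord c x) ∧ 0 < g₂ (expCoord c x)) {γ : ℝ}
    (hγ : γ ≠ 0) :
    γ • (logStep c g₁ g₂ x - x) =
      (-(c * γ * Real.log (1 - Real.exp (x.1 / c) *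
          (c * γ * (Real.exp (-x.1 / c) - g₁ (expCoord c x))) / (c * γ))),
       -(γ * Real.log (1 - Real.exp x.2 *
          (γ * (Real.exp (-x.2) - g₂ (expCoord c x))) / γ))) := by
  have hlog (y a G : ℝ) (ha : a ≠ 0) (hG : 0 < G) :
      Real.log (1 - Real.exp y * (a * (Real.exp (-y) - G)) / a) = y + Real.log G := by
    have : Real.exp y * Real.exp (-y) = 1 := by rw [← Real.exp_add, add_neg_cancel, Real.exp_zero]
    rw [← Real.log_exp y, ← Real.log_mul (Real.exp_pos y).ne' hG.ne', Real.log_exp]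
    congr 1
    field_simp
    linear_combination -this
  rw [neg_div, hlog _ _ _ (mul_ne_zero hc hγ) hs.1, hlog _ _ _ hγ hs.2]
  ext
  · simp only [logStep, logCoord, Prod.smul_fst, Prod.fst_sub, smul_eq_mul]
    field_simp
    ring
  · simp only [logStep, logCoord, Prod.smul_snd, Prod.snd_sub, smul_eq_mul]
    ring

end LogCoordinates

section CumulantSemigroup

variable {γ : ℕ → ℝ} {g₁ g₂ : ℕ → ℝ × ℝ → ℝ} {Φ₁ Φ₂ : ℝ × ℝ → ℝ} {x : ℝ × ℝ}

lemma Vk_eq_iterate_logStep {k : ℕ}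
    (hg : MapsTo (fun s => (g₁ k s, g₂ k s)) (Ioc 0 1 ×ˢ Ioc 0 1) (Ioc 0 1 ×ˢ Ioc 0 1))
    (hx : 0 ≤ x) (t : ℝ) :
    Vk γ g₁ g₂ k t x = (logStep (k + 1) (g₁ k) (g₂ k))^[⌊γ k * t⌋₊] x :=
  (iterate_logStep k.cast_add_one_pos hg hx _).symm

lemma tendsto_smul_logStep_sub {l : Filter (ℕ × (ℝ × ℝ))}
    (hγ : Tendsto γ atTop atTop)
    (hg : ∀ k, MapsTo (fun s => (g₁ k s, g₂ k s)) (Ioc 0 1 ×ˢ Ioc 0 1) (Ioc 0 1 ×ˢ Ioc 0 1))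
    (hfst : Tendsto Prod.fst l atTop) (hsnd : Tendsto Prod.snd l (𝓝 x))
    (hpos : ∀ᶠ q in l, 0 ≤ q.2)
    (h₁ : Tendsto (fun q => Phik1 γ g₁ q.1 q.2) l (𝓝 (Φ₁ x)))
    (h₂ : Tendsto (fun q => Real.exp q.2.2 * Phik2 γ g₂ q.1 q.2) l (𝓝 (Φ₂ x))) :
    Tendsto (fun q => γ q.1 • (logStep (q.1 + 1) (g₁ q.1) (g₂ q.1) q.2 - q.2)) l
      (𝓝 (Φ₁ x, Φ₂ x)) := by
  have hc : Tendsto (fun q : ℕ × (ℝ × ℝ) => (q.1 + 1 : ℝ)) l atTop :=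
    tendsto_atTop_add_const_right _ _ (tendsto_natCast_atTop_atTop.comp hfst)
  have hγl : Tendsto (fun q : ℕ × (ℝ × ℝ) => γ q.1) l atTop := hγ.comp hfst
  have hexp : Tendsto (fun q : ℕ × (ℝ × ℝ) => Real.exp (q.2.1 / (q.1 + 1))) l (𝓝 1) := by
    simpa only [Real.exp_zero] using (hsnd.fst_nhds.div_atTop hc).rexp
  refine ((tendsto_neg_mul_log_one_sub_div (hc.atTop_mul_atTop₀ hγl)
    (by simpa using hexp.mul h₁)).prodMk_nhds (tendsto_neg_mul_log_one_sub_div hγl h₂)).congr' ?_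
  filter_upwards [hpos, hγl.eventually_ne_atTop 0] with q hq hγq
  have hgq := hg q.1 (expCoord_mem q.1.cast_add_one_pos.le hq)
  exact (smul_logStep_sub q.1.cast_add_one_ne_zero ⟨hgq.1.1, hgq.2.1⟩ hγq).symm

lemma tendstoUniformlyOn_smul_logStep_sub {s : Set (ℝ × ℝ)} {L₁ L₂ : NNReal} (hs : IsCompact s)
    (hs_nonneg : s ⊆ Ici 0) (hγ : Tendsto γ atTop atTop)
    (hg : ∀ k, MapsTo (fun s => (g₁ k s, g₂ k s)) (Ioc 0 1 ×ˢ Ioc 0 1) (Ioc 0 1 ×ˢ Ioc 0 1))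
    (hL₁ : ∀ k, LipschitzOnWith L₁ (Phik1 γ g₁ k) s)
    (hL₂ : ∀ k, LipschitzOnWith L₂ (fun l => Real.exp l.2 * Phik2 γ g₂ k l) s)
    (h₁ : ∀ x ∈ s, Tendsto (fun k => Phik1 γ g₁ k x) atTop (𝓝 (Φ₁ x)))
    (h₂ : ∀ x ∈ s, Tendsto (fun k => Real.exp x.2 * Phik2 γ g₂ k x) atTop (𝓝 (Φ₂ x))) :
    TendstoUniformlyOn (fun k x => γ k • (logStep (k + 1) (g₁ k) (g₂ k) x - x))
      (fun x => (Φ₁ x, Φ₂ x)) atTop s := by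
  refine tendstoUniformlyOn_of_forall_tendsto_prod hs
    ((lipschitzOnWith_of_tendsto hL₁ h₁).continuousOn.prodMk
      (lipschitzOnWith_of_tendsto hL₂ h₂).continuousOn) fun x hx => ?_
  have hsnd : Tendsto Prod.snd ((atTop : Filter ℕ) ×ˢ 𝓝[s] x) (𝓝[s] x) := tendsto_snd
  exact tendsto_smul_logStep_sub hγ hg tendsto_fst (hsnd.mono_right nhdsWithin_le_nhds)
    ((hsnd.eventually self_mem_nhdsWithin).mono fun _ hq => hs_nonneg hq)
    (tendsto_prod_nhdsWithin_of_lipschitzOnWith hL₁ hx (h₁ x hx))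
    (tendsto_prod_nhdsWithin_of_lipschitzOnWith hL₂ hx (h₂ x hx))

lemma add_le_mul_of_tendsto_Phik {p₁ p₂ : ℕ → ℕ × ℕ → ℝ} {L₁ L₂ : NNReal} (hγ : ∀ k, 0 ≤ γ k)
    (hp₁ : ∀ k i, 0 ≤ p₁ k i) (hp₁_sum : ∀ k, HasSum (p₁ k) 1)
    (hp₂ : ∀ k i, 0 ≤ p₂ k i) (hp₂_sum : ∀ k, HasSum (p₂ k) 1)
    (hL₁ : ∀ k, LipschitzOnWith L₁ (Phik1 γ (fun k => pgf2 (p₁ k)) k) (Icc 0 (1, 1)))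
    (hL₂ : ∀ k, LipschitzOnWith L₂
      (fun l => Real.exp l.2 * Phik2 γ (fun k => pgf2 (p₂ k)) k l) (Icc 0 (2, 2)))
    (h₁ : ∀ x ∈ Ici 0, Tendsto (fun k => Phik1 γ (fun k => pgf2 (p₁ k)) k x) atTop (𝓝 (Φ₁ x)))
    (h₂ : ∀ x ∈ Ici 0, Tendsto (fun k => Real.exp x.2 * Phik2 γ (fun k => pgf2 (p₂ k)) k x) atTop
      (𝓝 (Φ₂ x))) :
    ∀ x ∈ Ici (0 : ℝ × ℝ), Φ₁ x + Φ₂ x ≤ 16 * (L₁ + L₂) * (1 + x.1 + x.2) := by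
  intro x hx
  have hle₁ : Φ₁ x ≤ L₁ * (x.1 + 2) := le_of_tendsto' (h₁ x hx) fun k =>
    Phik1_le (hγ k) (hp₁ k) (hp₁_sum k) (hL₁ k) hx.1 hx.2
  have hle₂ : Φ₂ x ≤ L₂ * (x.1 + 16) := le_of_tendsto' (h₂ x hx) fun k =>
    exp_mul_Phik2_le (hγ k) (hp₂ k) (hp₂_sum k) (hL₂ k) hx.1 hx.2
  have hx₁ : 0 ≤ x.1 := hx.1
  have hx₂ : 0 ≤ x.2 := hx.2
  calc Φ₁ x + Φ₂ x ≤ L₁ * (x.1 + 2) + L₂ * (x.1 + 16) := add_le_add hle₁ hle₂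
    _ ≤ L₁ * (16 * (1 + x.1 + x.2)) + L₂ * (16 * (1 + x.1 + x.2)) := by gcongr <;> linarith
    _ = 16 * (L₁ + L₂) * (1 + x.1 + x.2) := by ring

lemma fst_snd_eq_add_integral {F G : ℝ → ℝ} {v x : ℝ × ℝ} {t : ℝ}
    (hint : IntervalIntegrable (fun s => (F s, G s)) MeasureTheory.volume 0 t)
    (hv : v = x + ∫ s in (0 : ℝ)..t, (F s, G s)) :
    v.1 = x.1 + ∫ s in (0 : ℝ)..t, F s ∧ v.2 = x.2 + ∫ s in (0 : ℝ)..t, G s := by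
  subst hv
  exact ⟨congrArg (x.1 + ·) ((ContinuousLinearMap.fst ℝ ℝ ℝ).intervalIntegral_comp_comm hint).symm,
    congrArg (x.2 + ·) ((ContinuousLinearMap.snd ℝ ℝ ℝ).intervalIntegral_comp_comm hint).symm⟩

end CumulantSemigroup

/-- Under conditions (A), (C), (D), with `Φ₁` the pointwise limit of
`Φ_{k,1}` and `Φ₂` the pointwise limit of `e^{λ₂}Φ_{k,2}`, the functions
`V_k(t,λ)` converge, uniformly on `[0,a]³` for every `a ≥ 0`, to a limit `V(t,λ)`
which satisfies the cumulant integral equations. -/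
theorem Vk_uniform_convergence
    (γ : ℕ → ℝ) (p1 p2 : ℕ → ℕ × ℕ → ℝ) (Φ1 Φ2 : ℝ × ℝ → ℝ)
    (hp1_nonneg : ∀ k i, 0 ≤ p1 k i) (hp1_sum : ∀ k, HasSum (p1 k) 1)
    (hp2_nonneg : ∀ k i, 0 ≤ p2 k i) (hp2_sum : ∀ k, HasSum (p2 k) 1)
    (hγ_pos : ∀ k, 0 < γ k)
    -- Condition (A)
    (hA : Tendsto γ atTop atTop)
    -- Condition (C)
    (hC_lip : ∀ R : ℝ, 0 ≤ R → ∃ L : NNReal, ∀ k,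
      LipschitzOnWith L (Phik1 γ (fun k => pgf2 (p1 k)) k) (Icc ((0:ℝ),(0:ℝ)) (R,R)))
    (hΦ1_cont : ContinuousOn Φ1 {l : ℝ × ℝ | 0 ≤ l.1 ∧ 0 ≤ l.2})
    (hC_conv : ∀ l : ℝ × ℝ, 0 ≤ l.1 → 0 ≤ l.2 →
      Tendsto (fun k => Phik1 γ (fun k => pgf2 (p1 k)) k l) atTop (nhds (Φ1 l)))
    -- Condition (D)
    (hD_lip : ∀ R : ℝ, 0 ≤ R → ∃ L : NNReal, ∀ k,
      LipschitzOnWith L (fun l : ℝ × ℝ => Real.exp l.2 * Phik2 γ (fun k => pgf2 (p2 k)) k l)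
        (Icc ((0:ℝ),(0:ℝ)) (R,R)))
    (hΦ2_cont : ContinuousOn Φ2 {l : ℝ × ℝ | 0 ≤ l.1 ∧ 0 ≤ l.2})
    (hD_conv : ∀ l : ℝ × ℝ, 0 ≤ l.1 → 0 ≤ l.2 →
      Tendsto (fun k => Real.exp l.2 * Phik2 γ (fun k => pgf2 (p2 k)) k l) atTop
        (nhds (Φ2 l))) :
    ∃ V : ℝ → ℝ × ℝ → ℝ × ℝ,
      (∀ a : ℝ, 0 ≤ a →
        TendstoUniformlyOn
          (fun k (q : ℝ × (ℝ × ℝ)) =>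
            Vk γ (fun k => pgf2 (p1 k)) (fun k => pgf2 (p2 k)) k q.1 q.2)
          (fun q => V q.1 q.2) atTop
          (Icc (0:ℝ) a ×ˢ Icc ((0:ℝ),(0:ℝ)) (a,a))) ∧
      (∀ t : ℝ, 0 ≤ t → ∀ l : ℝ × ℝ, 0 ≤ l.1 → 0 ≤ l.2 →
        (V t l).1 = l.1 + ∫ s in (0:ℝ)..t, Φ1 (V s l) ∧
        (V t l).2 = l.2 + ∫ s in (0:ℝ)..t, Φ2 (V s l)) := by
  have hg k := mapsTo_pgf2_prodMk (hp1_nonneg k) (hp1_sum k) (hp2_nonneg k) (hp2_sum k)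
  choose! L₁ hL₁ using hC_lip
  choose! L₂ hL₂ using hD_lip
  have hC {l : ℝ × ℝ} (hl : 0 ≤ l) := hC_conv l hl.1 hl.2
  have hD {l : ℝ × ℝ} (hl : 0 ≤ l) := hD_conv l hl.1 hl.2
  have hlip R (hR : 0 ≤ R) := (lipschitzOnWith_of_tendsto (hL₁ R hR) fun _ hl => hC hl.1).prodMk
    (lipschitzOnWith_of_tendsto (hL₂ R hR) fun _ hl => hD hl.1)
  have hgrowth := add_le_mul_of_tendsto_Phik (fun k => (hγ_pos k).le) hp1_nonneg hp1_sum
    hp2_nonneg hp2_sum (hL₁ 1 zero_le_one) (hL₂ 2 zero_le_two) (fun _ => hC) fun _ => hD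
  have hconsistent R (hR : 0 ≤ R) := tendstoUniformlyOn_smul_logStep_sub isCompact_Icc
    Icc_subset_Ici_self hA hg (hL₁ R hR) (hL₂ R hR) (fun _ hl => hC hl.1) fun _ hl => hD hl.1
  obtain ⟨V, hV, hVint⟩ := exists_limit_iterate_floor hA
    (fun k => mapsTo_logStep k.cast_add_one_pos.le (hg k)) (by positivity) hgrowth
    (fun R hR => ⟨_, hlip R hR⟩) hconsistent
  refine ⟨V, fun a ha => (hV a ha).congr (.of_forall fun k q hq => (Vk_eq_iterate_logStep
    (g₁ := fun k => pgf2 (p1 k)) (g₂ := fun k => pgf2 (p2 k)) (hg k) hq.2.1 q.1).symm),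
    fun t ht l hl1 hl2 => ?_⟩
  obtain ⟨hint, heq⟩ := hVint t ht l ⟨hl1, hl2⟩
  exact fst_snd_eq_add_integral hint heq
end
end

section
/- Let (Φ₁,Φ₂) be a branching mechanism. Then for every λ ∈ [0,∞)², the cumulant equations (3.8) have a unique continuous [0,∞)²-valued solution t ↦ V(t,λ) on [0,∞); moreover the solutions satisfy the semigroup (flow) property V(r+t,λ) = V(r, V(t,λ)) for all r, t ≥ 0. -/
open MeasureTheory Filter Set

noncomputable section

/-- `V : t ↦ V(t,λ)` is a continuous `[0,∞)²`-valued solution of the cumulant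
equations (3.8) with initial value `λ = l`. -/
def SolvesCumulant (B : BranchingMechanism) (l : ℝ × ℝ) (V : ℝ → ℝ × ℝ) : Prop :=
  ContinuousOn V (Ici 0) ∧
  (∀ t : ℝ, 0 ≤ t → 0 ≤ (V t).1 ∧ 0 ≤ (V t).2) ∧
  (∀ t : ℝ, 0 ≤ t →
    (V t).1 = l.1 + ∫ s in (0:ℝ)..t, mPhi1 B (V s) ∧
    (V t).2 = l.2 + ∫ s in (0:ℝ)..t, mPhi2 B (V s))

/-!
In differential form the cumulant equations are the autonomous system `V' = (Φ₁, Φ₂)(V)`. Each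
integrand of `Φᵢ` is, on bounded parts of the quadrant, Lipschitz in `λ` with a constant
proportional to the corresponding moment integrand, so `(Φ₁, Φ₂)` is locally Lipschitz; Grönwall's
inequality on the compact range of two solutions gives uniqueness, and uniqueness gives the flow
property. For existence, truncate the coordinates to `[0, R]`, which makes the field globally
Lipschitz. The field does not point outwards on the faces of the quadrant (`Φᵢ ≥ 0` where
`λᵢ = 0`), so the truncated solution stays nonnegative; convexity of the exponential bounds
`Φ₁ + Φ₂` linearly in `λ₁ + λ₂`, so the mass grows at most exponentially and, for `R` chosen
accordingly, the truncation is never active.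
-/

open scoped NNReal Topology

theorem Icc_mem_nhdsWithin_Ici {a b t : ℝ} (h : t < b) : Icc a b ∈ 𝓝[Ici a] t :=
  inter_mem self_mem_nhdsWithin (mem_nhdsWithin_of_mem_nhds (Iic_mem_nhds h))

/-! ### Semiflows of locally Lipschitz vector fields -/

section Semiflow

variable {E : Type*} [NormedAddCommGroup E] [NormedSpace ℝ E]
variable {F : E → E} {s : Set E} {J : Set ℝ} {x : E} {T : ℝ}

/-- `V` solves the autonomous Cauchy problem `V' = F V`, `V 0 = x` on the time set `J`, with values
in `s`. -/
structure IsSolutionIn (F : E → E) (s : Set E) (J : Set ℝ) (x : E) (V : ℝ → E) : Prop where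
  initial : V 0 = x
  mapsTo : MapsTo V J s
  isIntegralCurveOn : IsIntegralCurveOn V (fun _ ↦ F) J

/-- `V` is a forward semiflow of `F` on `s`: `t ↦ V t x` is the only `s`-valued solution of
`v' = F v` on `[0, ∞)` started at `x`, and `V (r + t) = V r ∘ V t` on `s`. -/
structure IsUniqueSemiflow (F : E → E) (s : Set E) (V : ℝ → E → E) : Prop where
  isSolutionIn : ∀ ⦃x⦄, x ∈ s → IsSolutionIn F s (Ici 0) x fun t ↦ V t x
  eqOn : ∀ ⦃x⦄, x ∈ s → ∀ ⦃W⦄, IsSolutionIn F s (Ici 0) x W → EqOn W (fun t ↦ V t x) (Ici 0)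
  add : ∀ ⦃x⦄, x ∈ s → ∀ ⦃r t⦄, 0 ≤ r → 0 ≤ t → V (r + t) x = V r (V t x)

namespace IsSolutionIn

variable {V W : ℝ → E}

theorem mono (hV : IsSolutionIn F s J x V) {J' : Set ℝ} (hJ : J' ⊆ J) :
    IsSolutionIn F s J' x V :=
  ⟨hV.initial, hV.mapsTo.mono_left hJ, hV.isIntegralCurveOn.mono hJ⟩

theorem eqOn_Icc (hF : LocallyLipschitzOn s F) (hV : IsSolutionIn F s (Icc 0 T) x V)
    (hW : IsSolutionIn F s (Icc 0 T) x W) : EqOn V W (Icc 0 T) := by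
  have hVc := hV.isIntegralCurveOn.continuousOn
  have hWc := hW.isIntegralCurveOn.continuousOn
  have hsub : V '' Icc 0 T ∪ W '' Icc 0 T ⊆ s :=
    union_subset hV.mapsTo.image_subset hW.mapsTo.image_subset
  obtain ⟨K, hK⟩ := (hF.mono hsub).exists_lipschitzOnWith_of_compact
    ((isCompact_Icc.image_of_continuousOn hVc).union (isCompact_Icc.image_of_continuousOn hWc))
  exact ODE_solution_unique_of_mem_Icc_right (v := fun _ ↦ F) (fun _ _ ↦ hK)
    hVc (fun t ht ↦ (hV.isIntegralCurveOn t (Ico_subset_Icc_self ht)).mono_of_mem_nhdsWithin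
      (Icc_mem_nhdsGE_of_mem ht))
    (fun t ht ↦ .inl (mem_image_of_mem V (Ico_subset_Icc_self ht)))
    hWc (fun t ht ↦ (hW.isIntegralCurveOn t (Ico_subset_Icc_self ht)).mono_of_mem_nhdsWithin
      (Icc_mem_nhdsGE_of_mem ht))
    (fun t ht ↦ .inr (mem_image_of_mem W (Ico_subset_Icc_self ht)))
    (hV.initial.trans hW.initial.symm)

theorem eqOn_Ici (hF : LocallyLipschitzOn s F) (hV : IsSolutionIn F s (Ici 0) x V)
    (hW : IsSolutionIn F s (Ici 0) x W) : EqOn V W (Ici 0) := fun _ ht ↦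
  (hV.mono Icc_subset_Ici_self).eqOn_Icc hF (hW.mono Icc_subset_Ici_self)
    (right_mem_Icc.2 ht)

theorem shift (hV : IsSolutionIn F s (Ici 0) x V) {t : ℝ} (ht : 0 ≤ t) :
    IsSolutionIn F s (Ici 0) (V t) fun r ↦ V (r + t) where
  initial := by rw [zero_add]
  mapsTo _ hr := hV.mapsTo (add_nonneg hr ht)
  isIntegralCurveOn := (hV.isIntegralCurveOn.comp_add t).mono fun r hr ↦ by
    rw [mem_vadd_set_iff_neg_vadd_mem, neg_neg]
    exact add_nonneg ht hr

end IsSolutionIn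

theorem exists_isSolutionIn_Ici (hF : LocallyLipschitzOn s F)
    (h : ∀ T ≥ 0, ∃ V, IsSolutionIn F s (Icc 0 T) x V) :
    ∃ V, IsSolutionIn F s (Ici 0) x V := by
  choose! S hS using h
  have agree : ∀ T ≥ 0, EqOn (fun t ↦ S t t) (S T) (Icc 0 T) := fun T hT t ht ↦
    (hS t ht.1).eqOn_Icc hF ((hS T hT).mono (Icc_subset_Icc_right ht.2)) (right_mem_Icc.2 ht.1)
  refine ⟨fun t ↦ S t t, (hS 0 le_rfl).initial, fun t ht ↦ (hS t ht).mapsTo (right_mem_Icc.2 ht),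
    fun t ht ↦ ?_⟩
  have hT : 0 ≤ t + 1 := add_nonneg ht zero_le_one
  have htT : t ∈ Icc 0 (t + 1) := ⟨ht, (lt_add_one t).le⟩
  have hderiv := ((hS _ hT).isIntegralCurveOn t htT).congr (agree _ hT) (agree _ hT htT)
  rw [← agree _ hT htT] at hderiv
  exact hderiv.mono_of_mem_nhdsWithin
    (Icc_mem_nhdsWithin_Ici (lt_add_one t))

theorem exists_isUniqueSemiflow_of_forall_Icc (hF : LocallyLipschitzOn s F)
    (h : ∀ x ∈ s, ∀ T ≥ 0, ∃ V, IsSolutionIn F s (Icc 0 T) x V) :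
    ∃ V, IsUniqueSemiflow F s V := by
  choose! S hS using fun x hx ↦ exists_isSolutionIn_Ici hF (h x hx)
  exact ⟨fun t x ↦ S x t, hS, fun x hx W hW ↦ hW.eqOn_Ici hF (hS x hx), fun x hx r t hr ht ↦
    ((hS x hx).shift ht).eqOn_Ici hF (hS _ ((hS x hx).mapsTo ht)) hr⟩

end Semiflow

section FundamentalTheorem

variable {E : Type*} [NormedAddCommGroup E] [NormedSpace ℝ E] [CompleteSpace E]
variable {a : ℝ} {c : E} {v g : ℝ → E}

theorem forall_eq_add_integral_iff (hg : ContinuousOn g (Ici a)) :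
    (∀ t ≥ a, v t = c + ∫ s in a..t, g s) ↔
      v a = c ∧ ∀ t ∈ Ici a, HasDerivWithinAt v (g t) (Ici a) t := by
  have hInt : ∀ t ≥ a, IntervalIntegrable g volume a t := fun t ht ↦
    (hg.mono Icc_subset_Ici_self).intervalIntegrable_of_Icc ht
  constructor
  · intro hv
    refine ⟨by simp [hv a le_rfl], fun t ht ↦ ?_⟩
    have htT : t ∈ Icc a (t + 1) := ⟨ht, (lt_add_one t).le⟩
    have hgc := hg.mono (Icc_subset_Ici_self : Icc a (t + 1) ⊆ Ici a)
    have : Fact (t ∈ Icc a (t + 1)) := ⟨htT⟩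
    have hderiv : HasDerivWithinAt (fun u ↦ c + ∫ s in a..u, g s) (g t) (Icc a (t + 1)) t :=
      (intervalIntegral.integral_hasDerivWithinAt_right (hInt t ht)
        (hgc.stronglyMeasurableAtFilter_nhdsWithin measurableSet_Icc t) (hgc t htT)).const_add c
    exact (hderiv.congr (fun u hu ↦ hv u hu.1) (hv t ht)).mono_of_mem_nhdsWithin
      (Icc_mem_nhdsWithin_Ici (lt_add_one t))
  · rintro ⟨rfl, hv⟩ t ht
    rw [intervalIntegral.integral_eq_sub_of_hasDeriv_right_of_le ht
      (fun u hu ↦ ((hv u hu.1).continuousWithinAt).mono Icc_subset_Ici_self)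
      (fun u hu ↦ (hv u hu.1.le).mono (Ioi_subset_Ici hu.1.le)) (hInt t ht), add_sub_cancel]

theorem forall_prod_eq_add_integral_iff {E' : Type*} [NormedAddCommGroup E'] [NormedSpace ℝ E']
    [CompleteSpace E'] {c : E × E'} {v g : ℝ → E × E'} (hg : ContinuousOn g (Ici a)) :
    (∀ t ≥ a, (v t).1 = c.1 + ∫ s in a..t, (g s).1 ∧ (v t).2 = c.2 + ∫ s in a..t, (g s).2) ↔
      v a = c ∧ ∀ t ∈ Ici a, HasDerivWithinAt v (g t) (Ici a) t := by
  rw [forall₂_and, forall_eq_add_integral_iff (v := fun t ↦ (v t).1) hg.fst,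
    forall_eq_add_integral_iff (v := fun t ↦ (v t).2) hg.snd]
  constructor
  · rintro ⟨⟨hfst, hfst'⟩, hsnd, hsnd'⟩
    exact ⟨Prod.ext hfst hsnd, fun t ht ↦ (hfst' t ht).prodMk (hsnd' t ht)⟩
  · rintro ⟨rfl, hv⟩
    exact ⟨⟨rfl, fun t ht ↦ (hv t ht).fst⟩, rfl, fun t ht ↦ (hv t ht).snd⟩

end FundamentalTheorem

/-! ### Quasi-positive vector fields on the orthant -/

section ScalarComparison

variable {a b C : ℝ} {f f' : ℝ → ℝ}

theorem nonneg_of_deriv_right_nonneg_of_nonpos (hf : ContinuousOn f (Icc a b))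
    (hf' : ∀ t ∈ Ico a b, HasDerivWithinAt f (f' t) (Ici t) t) (ha : 0 ≤ f a)
    (hnonneg : ∀ t ∈ Ico a b, f t ≤ 0 → 0 ≤ f' t) : ∀ t ∈ Icc a b, 0 ≤ f t := by
  intro t ht
  have hpos : 0 < t - a + 1 := by linarith [ht.1]
  -- Compare `-f` with the strict supersolution `ε (t - a + 1)`.
  have barrier : ∀ ε > 0, -f t ≤ ε * (t - a + 1) := fun ε hε ↦
    image_le_of_deriv_right_lt_deriv_boundary (B := fun t ↦ ε * (t - a + 1)) (B' := fun _ ↦ ε)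
      hf.neg (fun u hu ↦ (hf' u hu).neg) (by simp only [Pi.neg_apply, sub_self]; linarith)
      (fun u ↦ by simpa using (((hasDerivAt_id u).sub_const a).add_const 1).const_mul ε)
      (fun u hu heq ↦ by
        have : 0 ≤ ε * (u - a + 1) := mul_nonneg hε.le (by linarith [hu.1])
        have := hnonneg u hu (by simp only [Pi.neg_apply] at heq; linarith)
        linarith) ht
  refine neg_nonpos.1 (le_of_forall_pos_le_add fun δ hδ ↦ ?_)
  simpa [div_mul_cancel₀ δ hpos.ne'] using barrier (δ / (t - a + 1)) (div_pos hδ hpos)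

theorem le_mul_exp_of_deriv_right_le_mul (hf : ContinuousOn f (Icc a b))
    (hf' : ∀ t ∈ Ico a b, HasDerivWithinAt f (f' t) (Ici t) t)
    (hle : ∀ t ∈ Ico a b, f' t ≤ C * f t) :
    ∀ t ∈ Icc a b, f t ≤ f a * Real.exp (C * (t - a)) := by
  intro t ht
  rw [← gronwallBound_ε0]
  refine le_gronwallBound_of_liminf_deriv_right_le hf (fun u hu r hr ↦ ?_) le_rfl
    (fun u hu ↦ by simpa only [add_zero] using hle u hu) t ht
  exact (hf' u hu).liminf_right_slope_le hr

end ScalarComparison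

section Orthant

variable {E : Type*} [NormedAddCommGroup E] [NormedSpace ℝ E]
variable {F : E → E} {x : E} {T : ℝ}

theorem exists_isSolutionIn_univ [CompleteSpace E] {K L : ℝ≥0} (hF : LipschitzWith K F)
    (hL : ∀ y, ‖F y‖ ≤ L) (x : E) (hT : 0 ≤ T) : ∃ V, IsSolutionIn F univ (Icc 0 T) x V := by
  have hPL : IsPicardLindelof (fun _ ↦ F) (⟨0, left_mem_Icc.2 hT⟩ : Icc 0 T) x
      (L * T.toNNReal) 0 L K :=
    { lipschitzOnWith := fun _ _ ↦ hF.lipschitzOnWith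
      continuousOn := fun _ _ ↦ continuousOn_const
      norm_le := fun _ _ y _ ↦ hL y
      mul_max_le := by simp [hT] }
  obtain ⟨V, hV₀, hV⟩ := hPL.exists_eq_forall_mem_Icc_hasDerivWithinAt₀
  exact ⟨V, hV₀, mapsTo_univ _ _, hV⟩

variable {ι : Type*} (e : E ≃L[ℝ] (ι → ℝ)) {R : ℝ}

/-- Truncation of every coordinate to `[0, R]`, in the linear coordinates `e` on `E`. It turns a
locally Lipschitz field `F` on the orthant into the globally Lipschitz field `F ∘ truncate e R`. -/
def truncate (R : ℝ) (x : E) : E := e.symm fun i ↦ max 0 (min (e x i) R)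

/-- Quasi-positivity of a vector field in the linear coordinates `e`: on each face of the
nonnegative orthant the field does not point outwards. -/
def IsQuasiPositive (F : E → E) : Prop := ∀ x, 0 ≤ e x → ∀ i, e x i = 0 → 0 ≤ e (F x) i

variable {e}

theorem coord_truncate (x : E) (i : ι) : e (truncate e R x) i = max 0 (min (e x i) R) := by
  rw [truncate, e.apply_symm_apply]

theorem coord_truncate_nonneg (x : E) : 0 ≤ e (truncate e R x) := fun i ↦
  (le_max_left _ _).trans_eq (coord_truncate x i).symm

theorem coord_truncate_le (hx : 0 ≤ e x) : e (truncate e R x) ≤ e x := fun i ↦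
  (coord_truncate x i).trans_le (max_le (hx i) (min_le_left _ _))

theorem truncate_mem_image_Icc (hR : 0 ≤ R) (x : E) :
    truncate e R x ∈ e.symm '' Icc 0 fun _ ↦ R :=
  mem_image_of_mem _ ⟨fun _ ↦ le_max_left _ _, fun _ ↦ max_le hR (min_le_right _ _)⟩

variable (e) in
theorem exists_lipschitzWith_truncate [Finite ι] (R : ℝ) : ∃ K, LipschitzWith K (truncate e R) := by
  cases nonempty_fintype ι
  have hclamp : LipschitzWith 1 fun (y : ι → ℝ) i ↦ max 0 (min (y i) R) :=
    LipschitzWith.of_dist_le_mul fun y z ↦ (dist_pi_le_iff (by positivity)).2 fun i ↦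
      (((LipschitzWith.id.min_const R).const_max 0).dist_le_mul (y i) (z i)).trans <| by
        gcongr
        exact dist_le_pi_dist y z i
  exact ⟨_, e.symm.lipschitz.comp (hclamp.comp e.lipschitz)⟩

theorem exists_lipschitzWith_comp_truncate [Finite ι]
    (hF : LocallyLipschitzOn {y | 0 ≤ e y} F) (hR : 0 ≤ R) :
    ∃ K L : ℝ≥0, LipschitzWith K (F ∘ truncate e R) ∧ ∀ y, ‖(F ∘ truncate e R) y‖ ≤ L := by
  let box : Set E := e.symm '' Icc 0 fun _ ↦ R
  have hbox : IsCompact box := isCompact_Icc.image e.symm.continuous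
  have hF : LocallyLipschitzOn box F := hF.mono <| by
    rintro _ ⟨y, hy, rfl⟩
    simpa using hy.1
  obtain ⟨K, hK⟩ := hF.exists_lipschitzOnWith_of_compact hbox
  obtain ⟨K', hK'⟩ := exists_lipschitzWith_truncate e R
  obtain ⟨L, hL⟩ := hbox.exists_bound_of_continuousOn hF.continuousOn
  have hmaps : ∀ y, truncate e R y ∈ box := truncate_mem_image_Icc hR
  exact ⟨K * K', L.toNNReal,
    lipschitzOnWith_univ.1 (hK.comp hK'.lipschitzOnWith fun y _ ↦ hmaps y),
    fun y ↦ (hL _ (hmaps y)).trans L.le_coe_toNNReal⟩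

theorem IsSolutionIn.continuousOn_coord {s : Set E} {V : ℝ → E}
    (hV : IsSolutionIn F s (Icc 0 T) x V) (i : ι) : ContinuousOn (fun t ↦ e (V t) i) (Icc 0 T) :=
  ((continuous_apply i).comp e.continuous).comp_continuousOn hV.isIntegralCurveOn.continuousOn

theorem IsSolutionIn.hasDerivWithinAt_coord {s : Set E} {V : ℝ → E}
    (hV : IsSolutionIn F s (Icc 0 T) x V) (i : ι) :
    ∀ t ∈ Ico 0 T, HasDerivWithinAt (fun t ↦ e (V t) i) (e (F (V t)) i) (Ici t) t := fun t ht ↦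
  ((ContinuousLinearMap.proj i).comp (e : E →L[ℝ] ι → ℝ)).hasFDerivAt.comp_hasDerivWithinAt t
    ((hV.isIntegralCurveOn t (Ico_subset_Icc_self ht)).mono_of_mem_nhdsWithin
      (Icc_mem_nhdsGE_of_mem ht))

theorem IsSolutionIn.nonneg_of_isQuasiPositive {V : ℝ → E} (hF : IsQuasiPositive e F)
    (hV : IsSolutionIn (F ∘ truncate e R) univ (Icc 0 T) x V) (hx : 0 ≤ e x) :
    ∀ t ∈ Icc 0 T, 0 ≤ e (V t) := by
  refine fun t ht i ↦ nonneg_of_deriv_right_nonneg_of_nonpos (hV.continuousOn_coord i)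
    (hV.hasDerivWithinAt_coord i) (by rw [hV.initial]; exact hx i) (fun u _ hu ↦ ?_) t ht
  refine hF _ (coord_truncate_nonneg _) i ?_
  rw [coord_truncate, max_eq_left ((min_le_left _ _).trans hu)]

variable [Fintype ι]

theorem truncate_eq_self (hx : 0 ≤ e x) (hR : ∑ i, e x i ≤ R) : truncate e R x = x := by
  refine e.injective (funext fun i ↦ ?_)
  have hi : e x i ≤ R :=
    (Finset.single_le_sum (fun j _ ↦ hx j) (Finset.mem_univ i)).trans hR
  rw [coord_truncate, min_eq_left hi, max_eq_right]
  exact hx i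

theorem IsSolutionIn.sum_coord_le {C : ℝ} {V : ℝ → E} (hC : 0 ≤ C)
    (hgrowth : ∀ y, 0 ≤ e y → ∑ i, e (F y) i ≤ C * (1 + ∑ i, e y i))
    (hV : IsSolutionIn (F ∘ truncate e R) univ (Icc 0 T) x V)
    (hnonneg : ∀ t ∈ Icc 0 T, 0 ≤ e (V t)) :
    ∀ t ∈ Icc 0 T, ∑ i, e (V t) i ≤ (1 + ∑ i, e x i) * Real.exp (C * T) := by
  intro t ht
  have hexp := le_mul_exp_of_deriv_right_le_mul (f := fun t ↦ 1 + ∑ i, e (V t) i) (C := C)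
    (continuousOn_const.add (continuousOn_finsetSum _ fun i _ ↦ hV.continuousOn_coord i))
    (fun u hu ↦ (HasDerivWithinAt.fun_sum fun i _ ↦ hV.hasDerivWithinAt_coord i u hu).const_add 1)
    (fun u hu ↦ (hgrowth _ (coord_truncate_nonneg _)).trans <| by
      gcongr with i
      exact coord_truncate_le (hnonneg u (Ico_subset_Icc_self hu)) i) t ht
  have hx : 0 ≤ ∑ i, e x i := by
    rw [← hV.initial]
    exact Finset.sum_nonneg fun i _ ↦ hnonneg 0 ⟨le_rfl, ht.1.trans ht.2⟩ i
  calc ∑ i, e (V t) i ≤ 1 + ∑ i, e (V t) i := le_add_of_nonneg_left zero_le_one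
    _ ≤ (1 + ∑ i, e x i) * Real.exp (C * (t - 0)) := by simpa only [hV.initial] using hexp
    _ ≤ (1 + ∑ i, e x i) * Real.exp (C * T) := by
      gcongr
      linarith [ht.2]

theorem IsQuasiPositive.exists_isSolutionIn {C : ℝ} (hpos : IsQuasiPositive e F) (hC : 0 ≤ C)
    (hgrowth : ∀ y, 0 ≤ e y → ∑ i, e (F y) i ≤ C * (1 + ∑ i, e y i))
    (hF : LocallyLipschitzOn {y | 0 ≤ e y} F) (hx : 0 ≤ e x) (hT : 0 ≤ T) :
    ∃ V, IsSolutionIn F {y | 0 ≤ e y} (Icc 0 T) x V := by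
  have : FiniteDimensional ℝ E := e.symm.toLinearEquiv.finiteDimensional
  have : CompleteSpace E := FiniteDimensional.complete ℝ E
  set R : ℝ := (1 + ∑ i, e x i) * Real.exp (C * T)
  have hR : 0 ≤ R := mul_nonneg
    (add_nonneg zero_le_one (Finset.sum_nonneg fun i _ ↦ hx i)) (Real.exp_nonneg _)
  obtain ⟨K, L, hK, hL⟩ := exists_lipschitzWith_comp_truncate hF hR
  obtain ⟨V, hV⟩ := exists_isSolutionIn_univ hK hL x hT
  have hnonneg := hV.nonneg_of_isQuasiPositive hpos hx
  have htruncate : ∀ t ∈ Icc 0 T, truncate e R (V t) = V t := fun t ht ↦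
    truncate_eq_self (hnonneg t ht) (hV.sum_coord_le hC hgrowth hnonneg t ht)
  refine ⟨V, hV.initial, hnonneg, fun t ht ↦ ?_⟩
  simpa only [Function.comp_apply, htruncate t ht] using hV.isIntegralCurveOn t ht

theorem IsQuasiPositive.exists_isUniqueSemiflow {C : ℝ} (hpos : IsQuasiPositive e F) (hC : 0 ≤ C)
    (hgrowth : ∀ y, 0 ≤ e y → ∑ i, e (F y) i ≤ C * (1 + ∑ i, e y i))
    (hF : LocallyLipschitzOn {y | 0 ≤ e y} F) : ∃ V, IsUniqueSemiflow F {y | 0 ≤ e y} V :=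
  exists_isUniqueSemiflow_of_forall_Icc hF fun _ hx _ hT ↦
    hpos.exists_isSolutionIn hC hgrowth hF hx hT

end Orthant

theorem exists_isUniqueSemiflow_Ici_zero {F : ℝ × ℝ → ℝ × ℝ} {C : ℝ}
    (hpos₁ : ∀ y, 0 ≤ y → y.1 = 0 → 0 ≤ (F y).1) (hpos₂ : ∀ y, 0 ≤ y → y.2 = 0 → 0 ≤ (F y).2)
    (hC : 0 ≤ C) (hgrowth : ∀ y, 0 ≤ y → (F y).1 + (F y).2 ≤ C * (1 + (y.1 + y.2)))
    (hF : LocallyLipschitzOn (Ici 0) F) : ∃ V, IsUniqueSemiflow F (Ici 0) V := by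
  let e := (ContinuousLinearEquiv.finTwoArrow ℝ ℝ).symm
  have nonneg_iff (y : ℝ × ℝ) : 0 ≤ e y ↔ 0 ≤ y := Fin.forall_fin_two
  have orthant_eq : {y | 0 ≤ e y} = Ici 0 := Set.ext nonneg_iff
  have hpos : IsQuasiPositive e F := fun y hy ↦
    Fin.forall_fin_two.2 ⟨hpos₁ y ((nonneg_iff y).1 hy), hpos₂ y ((nonneg_iff y).1 hy)⟩
  rw [← orthant_eq] at hF ⊢
  refine hpos.exists_isUniqueSemiflow hC (fun y hy ↦ ?_) hF
  rw [Fin.sum_univ_two, Fin.sum_univ_two]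
  exact hgrowth y ((nonneg_iff y).1 hy)

/-! ### Regularity and growth of the cumulant field -/

section RealInequalities

variable {p q : ℝ}

theorem abs_exp_neg_sub_exp_neg_le {c : ℝ} (hp : -c ≤ p) (hq : -c ≤ q) :
    |Real.exp (-p) - Real.exp (-q)| ≤ Real.exp c * |p - q| :=
  (convex_Ici (-c)).norm_image_sub_le_of_norm_hasDerivWithin_le
    (f := fun u ↦ Real.exp (-u)) (f' := fun u ↦ -Real.exp (-u))
    (fun u _ ↦ by simpa using ((hasDerivAt_id u).neg.exp).hasDerivWithinAt)
    (fun u hu ↦ by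
      rw [norm_neg, Real.norm_eq_abs, Real.abs_exp]
      exact Real.exp_le_exp.2 (neg_le.1 hu))
    hq hp

theorem abs_exp_neg_add_sub_le {M : ℝ} (hp : p ∈ Icc 0 M) (hq : q ∈ Icc 0 M) :
    |(Real.exp (-p) + p) - (Real.exp (-q) + q)| ≤ min 1 M * |p - q| :=
  (convex_Icc 0 M).norm_image_sub_le_of_norm_hasDerivWithin_le
    (f := fun u ↦ Real.exp (-u) + u) (f' := fun u ↦ -Real.exp (-u) + 1)
    (fun u _ ↦ by
      simpa using ((hasDerivAt_id u).neg.exp.fun_add (hasDerivAt_id u)).hasDerivWithinAt)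
    (fun u hu ↦ by
      have hle : Real.exp (-u) ≤ 1 := Real.exp_le_one_iff.2 (neg_nonpos.2 hu.1)
      rw [Real.norm_eq_abs, abs_of_nonneg (by linarith)]
      exact le_min (by linarith [Real.exp_pos (-u)])
        (by linarith [Real.add_one_le_exp (-u), hu.2]))
    hq hp

theorem min_one_mul_add_le {R x y : ℝ} (hR : 0 ≤ R) (hx : 0 ≤ x) (hy : 0 ≤ y) :
    min 1 (R * (x + y)) * (x + y) + y ≤ (R + 3) * (min x (x ^ 2) + y) := by
  set m := min 1 (R * (x + y))
  have hm₀ : 0 ≤ m := le_min zero_le_one (by positivity)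
  have hm₁ : m ≤ 1 := min_le_left _ _
  have hm₂ : m ≤ R * (x + y) := min_le_right _ _
  have hw : 0 ≤ min x (x ^ 2) := le_min hx (sq_nonneg x)
  have hmx : m * x ≤ (R + 1) * (min x (x ^ 2) + y) := by
    rcases le_total 1 x with h | h
    · rw [min_eq_left (by nlinarith)]
      nlinarith [mul_nonneg hR hx, mul_nonneg hR hy]
    · rw [min_eq_right (by nlinarith)]
      nlinarith [mul_nonneg hR hy, sq_nonneg x]
  have hmy : m * y ≤ y := mul_le_of_le_one_left hy hm₁
  calc m * (x + y) + y = m * x + m * y + y := by ring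
    _ ≤ (R + 1) * (min x (x ^ 2) + y) + y + y := by gcongr
    _ ≤ (R + 3) * (min x (x ^ 2) + y) := by linarith

end RealInequalities

section LipschitzIntegral

theorem lipschitzOnWith_integral {α X G : Type*} [MeasurableSpace α] {μ : Measure α}
    [PseudoMetricSpace X] [NormedAddCommGroup G] [NormedSpace ℝ G] {f : X → α → G} {w : α → ℝ}
    {s : Set X} (hf : ∀ x ∈ s, Integrable (f x) μ) (hw : Integrable w μ)
    (hle : ∀ x ∈ s, ∀ y ∈ s, ∀ᵐ a ∂μ, ‖f x a - f y a‖ ≤ w a * dist x y) :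
    LipschitzOnWith (∫ a, w a ∂μ).toNNReal (fun x ↦ ∫ a, f x a ∂μ) s := by
  refine LipschitzOnWith.of_dist_le_mul fun x hx y hy ↦ ?_
  calc dist (∫ a, f x a ∂μ) (∫ a, f y a ∂μ) = ‖∫ a, (f x a - f y a) ∂μ‖ := by
        rw [dist_eq_norm, integral_sub (hf x hx) (hf y hy)]
    _ ≤ ∫ a, w a * dist x y ∂μ := norm_integral_le_of_norm_le (hw.mul_const _) (hle x hx y hy)
    _ = (∫ a, w a ∂μ) * dist x y := integral_mul_const _ _
    _ ≤ (∫ a, w a ∂μ).toNNReal * dist x y := by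
        gcongr
        exact Real.le_coe_toNNReal _

theorem locallyLipschitzOn_of_forall_closedBall {X Y : Type*} [PseudoMetricSpace X]
    [PseudoEMetricSpace Y] {f : X → Y} {s : Set X} (c : X)
    (h : ∀ R, ∃ K, LipschitzOnWith K f (s ∩ Metric.closedBall c R)) : LocallyLipschitzOn s f := by
  intro x _
  obtain ⟨K, hK⟩ := h (dist x c + 1)
  exact ⟨K, _, inter_mem self_mem_nhdsWithin (mem_nhdsWithin_of_mem_nhds
    (Metric.closedBall_mem_nhds_of_mem (Metric.mem_ball.2 (lt_add_one _)))), hK⟩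

end LipschitzIntegral

section CumulantField

/-- The pairing `⟨λ, z⟩ = λ₁ z₁ + λ₂ z₂`. -/
def pairing (l z : ℝ × ℝ) : ℝ := l.1 * z.1 + l.2 * z.2

/-- The integrand `e^{-⟨λ, z⟩} - 1 + λ₁ z₁` of `Φ₁`; only the first coordinate is compensated. -/
def compensatedExp (l z : ℝ × ℝ) : ℝ := Real.exp (-pairing l z) - 1 + l.1 * z.1

/-- The integrand `1 - e^{-⟨λ, z⟩}` of `Φ₂`. -/
def expDefect (l z : ℝ × ℝ) : ℝ := 1 - Real.exp (-pairing l z)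

/-- The vector field `(Φ₁, Φ₂)`, for arbitrary measures `n₁, n₂` on `ℝ²`; the arguments `a`, `α`,
`b` are the paper's `a₁₁`, `α`, `a₂₁`. -/
def cumulantField (a α b : ℝ) (n₁ n₂ : Measure (ℝ × ℝ)) (l : ℝ × ℝ) : ℝ × ℝ :=
  (-a * l.1 - α * l.1 ^ 2 - ∫ z, compensatedExp l z ∂n₁, b * l.1 + ∫ z, expDefect l z ∂n₂)

variable {l m z : ℝ × ℝ} {R : ℝ} {c : ℝ≥0}

theorem abs_pairing_sub_le (l m z : ℝ × ℝ) :
    |pairing l z - pairing m z| ≤ ‖l - m‖ * (|z.1| + |z.2|) :=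
  calc |pairing l z - pairing m z| = |(l.1 - m.1) * z.1 + (l.2 - m.2) * z.2| := by
        rw [pairing, pairing]; congr 1; ring
    _ ≤ |l.1 - m.1| * |z.1| + |l.2 - m.2| * |z.2| := by
        rw [← abs_mul, ← abs_mul]; exact abs_add_le _ _
    _ ≤ ‖l - m‖ * |z.1| + ‖l - m‖ * |z.2| := by
        gcongr
        exacts [norm_fst_le (l - m), norm_snd_le (l - m)]
    _ = ‖l - m‖ * (|z.1| + |z.2|) := (mul_add _ _ _).symm

theorem pairing_mem_Icc (hl : 0 ≤ l) (hlR : ‖l‖ ≤ R) (hz : 0 ≤ z) :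
    pairing l z ∈ Icc 0 (R * (z.1 + z.2)) := by
  have hl₁ : l.1 ≤ R := (le_abs_self _).trans ((norm_fst_le l).trans hlR)
  have hl₂ : l.2 ≤ R := (le_abs_self _).trans ((norm_snd_le l).trans hlR)
  rw [mul_add]
  exact ⟨add_nonneg (mul_nonneg hl.1 hz.1) (mul_nonneg hl.2 hz.2),
    add_le_add (mul_le_mul_of_nonneg_right hl₁ hz.1) (mul_le_mul_of_nonneg_right hl₂ hz.2)⟩

theorem neg_mul_le_pairing (hl : 0 ≤ l) (hlR : ‖l‖ ≤ R) (hz₁ : 0 ≤ z.1) (hz₂ : -(c : ℝ) ≤ z.2) :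
    -(c * R) ≤ pairing l z := by
  have hl₂ : l.2 ≤ R := (le_abs_self _).trans ((norm_snd_le l).trans hlR)
  calc -(c * R) ≤ -(c * l.2) := neg_le_neg (mul_le_mul_of_nonneg_left hl₂ c.2)
    _ = l.2 * -c := by ring
    _ ≤ l.2 * z.2 := mul_le_mul_of_nonneg_left hz₂ hl.2
    _ ≤ pairing l z := le_add_of_nonneg_left (mul_nonneg hl.1 hz₁)

theorem continuous_compensatedExp (l : ℝ × ℝ) : Continuous (compensatedExp l) := by
  unfold compensatedExp pairing; fun_prop

theorem continuous_expDefect (l : ℝ × ℝ) : Continuous (expDefect l) := by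
  unfold expDefect pairing; fun_prop

theorem compensatedExp_zero_left (z : ℝ × ℝ) : compensatedExp 0 z = 0 := by
  simp [compensatedExp, pairing]

theorem expDefect_zero_left (z : ℝ × ℝ) : expDefect 0 z = 0 := by
  simp [expDefect, pairing]

theorem abs_compensatedExp_sub_le (hl : 0 ≤ l) (hlR : ‖l‖ ≤ R) (hm : 0 ≤ m) (hmR : ‖m‖ ≤ R)
    (hz : 0 ≤ z) :
    |compensatedExp l z - compensatedExp m z| ≤
      (R + 3) * (min z.1 (z.1 ^ 2) + z.2) * ‖l - m‖ := by
  have hR : 0 ≤ R := (norm_nonneg l).trans hlR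
  set M := R * (z.1 + z.2)
  have hM₀ : 0 ≤ M := mul_nonneg hR (add_nonneg hz.1 hz.2)
  have hexp := abs_exp_neg_add_sub_le (pairing_mem_Icc hl hlR hz) (pairing_mem_Icc hm hmR hz)
  have hpairing := abs_pairing_sub_le l m z
  rw [abs_of_nonneg hz.1, abs_of_nonneg hz.2] at hpairing
  have hsnd : |(l.2 - m.2) * z.2| ≤ ‖l - m‖ * z.2 := by
    rw [abs_mul, abs_of_nonneg hz.2]
    exact mul_le_mul_of_nonneg_right (norm_snd_le (l - m)) hz.2
  calc |compensatedExp l z - compensatedExp m z|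
      = |(Real.exp (-pairing l z) + pairing l z) - (Real.exp (-pairing m z) + pairing m z)
          - (l.2 - m.2) * z.2| := by
        simp only [compensatedExp, pairing]; congr 1; ring
    _ ≤ min 1 M * |pairing l z - pairing m z| + ‖l - m‖ * z.2 :=
        (abs_sub _ _).trans (add_le_add hexp hsnd)
    _ ≤ min 1 M * (‖l - m‖ * (z.1 + z.2)) + ‖l - m‖ * z.2 := by gcongr
    _ = (min 1 M * (z.1 + z.2) + z.2) * ‖l - m‖ := by ring
    _ ≤ (R + 3) * (min z.1 (z.1 ^ 2) + z.2) * ‖l - m‖ := by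
        gcongr
        exact min_one_mul_add_le hR hz.1 hz.2

theorem abs_expDefect_sub_le (hl : 0 ≤ l) (hlR : ‖l‖ ≤ R) (hm : 0 ≤ m) (hmR : ‖m‖ ≤ R)
    (hz₁ : 0 ≤ z.1) (hz₂ : -(c : ℝ) ≤ z.2) :
    |expDefect l z - expDefect m z| ≤ Real.exp (c * R) * (z.1 + |z.2|) * ‖l - m‖ :=
  calc |expDefect l z - expDefect m z|
      = |Real.exp (-pairing l z) - Real.exp (-pairing m z)| := by
        rw [expDefect, expDefect, sub_sub_sub_cancel_left, abs_sub_comm]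
    _ ≤ Real.exp (c * R) * |pairing l z - pairing m z| :=
        abs_exp_neg_sub_exp_neg_le (neg_mul_le_pairing hl hlR hz₁ hz₂)
          (neg_mul_le_pairing hm hmR hz₁ hz₂)
    _ ≤ Real.exp (c * R) * (‖l - m‖ * (|z.1| + |z.2|)) := by
        gcongr
        exact abs_pairing_sub_le l m z
    _ = Real.exp (c * R) * (z.1 + |z.2|) * ‖l - m‖ := by rw [abs_of_nonneg hz₁]; ring

variable {a α b : ℝ} {n₁ n₂ : Measure (ℝ × ℝ)}

theorem integrable_compensatedExp (hn₁ : ∀ᵐ z ∂n₁, 0 ≤ z)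
    (hw₁ : Integrable (fun z ↦ min z.1 (z.1 ^ 2) + z.2) n₁) (hl : 0 ≤ l) :
    Integrable (compensatedExp l) n₁ := by
  refine ((hw₁.const_mul (‖l‖ + 3)).mul_const ‖l‖).mono'
    (continuous_compensatedExp l).aestronglyMeasurable (hn₁.mono fun z hz ↦ ?_)
  simpa [compensatedExp_zero_left] using
    abs_compensatedExp_sub_le hl le_rfl le_rfl (by simp) hz

theorem integrable_expDefect (hn₂ : ∀ᵐ z ∂n₂, 0 ≤ z.1 ∧ -(c : ℝ) ≤ z.2)
    (hw₂ : Integrable (fun z ↦ z.1 + |z.2|) n₂) (hl : 0 ≤ l) : Integrable (expDefect l) n₂ := by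
  refine ((hw₂.const_mul (Real.exp (c * ‖l‖))).mul_const ‖l‖).mono'
    (continuous_expDefect l).aestronglyMeasurable (hn₂.mono fun z hz ↦ ?_)
  simpa [expDefect_zero_left] using
    abs_expDefect_sub_le hl le_rfl le_rfl (by simp) hz.1 hz.2

theorem locallyLipschitzOn_integral_compensatedExp (hn₁ : ∀ᵐ z ∂n₁, 0 ≤ z)
    (hw₁ : Integrable (fun z ↦ min z.1 (z.1 ^ 2) + z.2) n₁) :
    LocallyLipschitzOn (Ici 0) fun l ↦ ∫ z, compensatedExp l z ∂n₁ :=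
  locallyLipschitzOn_of_forall_closedBall 0 fun R ↦
    ⟨_, lipschitzOnWith_integral (fun _ hl ↦ integrable_compensatedExp hn₁ hw₁ hl.1)
      (hw₁.const_mul (R + 3)) fun l hl m hm ↦ hn₁.mono fun z hz ↦ by
        rw [dist_eq_norm]
        exact abs_compensatedExp_sub_le hl.1 (mem_closedBall_zero_iff.1 hl.2) hm.1
          (mem_closedBall_zero_iff.1 hm.2) hz⟩

theorem locallyLipschitzOn_integral_expDefect (hn₂ : ∀ᵐ z ∂n₂, 0 ≤ z.1 ∧ -(c : ℝ) ≤ z.2)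
    (hw₂ : Integrable (fun z ↦ z.1 + |z.2|) n₂) :
    LocallyLipschitzOn (Ici 0) fun l ↦ ∫ z, expDefect l z ∂n₂ :=
  locallyLipschitzOn_of_forall_closedBall 0 fun R ↦
    ⟨_, lipschitzOnWith_integral (fun _ hl ↦ integrable_expDefect hn₂ hw₂ hl.1)
      (hw₂.const_mul (Real.exp (c * R))) fun l hl m hm ↦ hn₂.mono fun z hz ↦ by
        rw [dist_eq_norm]
        exact abs_expDefect_sub_le hl.1 (mem_closedBall_zero_iff.1 hl.2) hm.1
          (mem_closedBall_zero_iff.1 hm.2) hz.1 hz.2⟩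

theorem locallyLipschitzOn_cumulantField (hn₁ : ∀ᵐ z ∂n₁, 0 ≤ z)
    (hw₁ : Integrable (fun z ↦ min z.1 (z.1 ^ 2) + z.2) n₁)
    (hn₂ : ∀ᵐ z ∂n₂, 0 ≤ z.1 ∧ -(c : ℝ) ≤ z.2) (hw₂ : Integrable (fun z ↦ z.1 + |z.2|) n₂) :
    LocallyLipschitzOn (Ici 0) (cumulantField a α b n₁ n₂) := by
  have hpoly₁ : ContDiff ℝ 1 fun l : ℝ × ℝ ↦ -a * l.1 - α * l.1 ^ 2 := by fun_prop
  have hpoly₂ : ContDiff ℝ 1 fun l : ℝ × ℝ ↦ b * l.1 := by fun_prop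
  have hΦ₁ := (hpoly₁.locallyLipschitz.locallyLipschitzOn).sub
    (locallyLipschitzOn_integral_compensatedExp hn₁ hw₁)
  have hΦ₂ := (hpoly₂.locallyLipschitz.locallyLipschitzOn).add
    (locallyLipschitzOn_integral_expDefect hn₂ hw₂)
  intro l hl
  obtain ⟨K₁, t₁, ht₁, hK₁⟩ := hΦ₁ hl
  obtain ⟨K₂, t₂, ht₂, hK₂⟩ := hΦ₂ hl
  exact ⟨_, _, inter_mem ht₁ ht₂,
    (hK₁.mono inter_subset_left).prodMk (hK₂.mono inter_subset_right)⟩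

theorem cumulantField_fst_nonneg (hn₁ : ∀ᵐ z ∂n₁, 0 ≤ z) (hl : 0 ≤ l) (hl₁ : l.1 = 0) :
    0 ≤ (cumulantField a α b n₁ n₂ l).1 := by
  have hint : ∫ z, compensatedExp l z ∂n₁ ≤ 0 := integral_nonpos_of_ae <| hn₁.mono fun z hz ↦ by
    simpa [compensatedExp, pairing, hl₁] using mul_nonneg hl.2 hz.2
  simpa [cumulantField, hl₁] using hint

theorem cumulantField_snd_nonneg (hb : 0 ≤ b) (hn₂ : ∀ᵐ z ∂n₂, 0 ≤ z.1) (hl : 0 ≤ l)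
    (hl₂ : l.2 = 0) : 0 ≤ (cumulantField a α b n₁ n₂ l).2 :=
  add_nonneg (mul_nonneg hb hl.1) <| integral_nonneg_of_ae <| hn₂.mono fun z hz ↦ by
    simpa [expDefect, pairing, hl₂] using mul_nonneg hl.1 hz

theorem cumulantField_fst_le (hα : 0 ≤ α) (hn₁ : ∀ᵐ z ∂n₁, 0 ≤ z)
    (hw₁ : Integrable (fun z ↦ min z.1 (z.1 ^ 2) + z.2) n₁) (hl : 0 ≤ l) :
    (cumulantField a α b n₁ n₂ l).1 ≤
      |a| * l.1 + (∫ z, min z.1 (z.1 ^ 2) + z.2 ∂n₁) * l.2 := by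
  have hlower : ∀ᵐ z ∂n₁, -((min z.1 (z.1 ^ 2) + z.2) * l.2) ≤ compensatedExp l z :=
    hn₁.mono fun z hz ↦ by
      have hmin : 0 ≤ min z.1 (z.1 ^ 2) * l.2 := mul_nonneg (le_min hz.1 (sq_nonneg _)) hl.2
      have hexp := Real.add_one_le_exp (-pairing l z)
      simp only [compensatedExp, pairing] at hexp ⊢
      linarith
  have hint := integral_mono_ae (hw₁.mul_const l.2).neg
    (integrable_compensatedExp hn₁ hw₁ hl) hlower
  simp only [Pi.neg_apply, integral_neg, integral_mul_const] at hint
  have hlin : -a * l.1 ≤ |a| * l.1 := mul_le_mul_of_nonneg_right (neg_le_abs a) hl.1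
  have hquad : 0 ≤ α * l.1 ^ 2 := mul_nonneg hα (sq_nonneg _)
  simp only [cumulantField]
  linarith

theorem cumulantField_snd_le (hn₂ : ∀ᵐ z ∂n₂, 0 ≤ z.1 ∧ -(c : ℝ) ≤ z.2)
    (hw₂ : Integrable (fun z ↦ z.1 + |z.2|) n₂) (hl : 0 ≤ l) :
    (cumulantField a α b n₁ n₂ l).2 ≤ b * l.1 + (∫ z, z.1 + |z.2| ∂n₂) * (l.1 + l.2) := by
  have hupper : ∀ᵐ z ∂n₂, expDefect l z ≤ (z.1 + |z.2|) * (l.1 + l.2) := hn₂.mono fun z hz ↦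
    calc expDefect l z ≤ pairing l z := by
          rw [expDefect]; linarith [Real.add_one_le_exp (-pairing l z)]
      _ ≤ l.1 * z.1 + l.2 * |z.2| :=
          add_le_add_right (mul_le_mul_of_nonneg_left (le_abs_self _) hl.2) _
      _ ≤ (z.1 + |z.2|) * (l.1 + l.2) := by
          nlinarith [mul_nonneg hl.1 (abs_nonneg z.2), mul_nonneg hl.2 hz.1]
  have hint := integral_mono_ae (integrable_expDefect hn₂ hw₂ hl)
    (hw₂.mul_const (l.1 + l.2)) hupper
  rw [integral_mul_const] at hint
  exact add_le_add_right hint _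

end CumulantField

theorem cumulant_equation_unique_solution_and_flow_general {a α b : ℝ} {c : ℝ≥0} (hα : 0 ≤ α)
    (hb : 0 ≤ b) {n₁ n₂ : Measure (ℝ × ℝ)} (hn₁ : ∀ᵐ z ∂n₁, 0 ≤ z)
    (hw₁ : Integrable (fun z ↦ min z.1 (z.1 ^ 2) + z.2) n₁)
    (hn₂ : ∀ᵐ z ∂n₂, 0 ≤ z.1 ∧ -(c : ℝ) ≤ z.2) (hw₂ : Integrable (fun z ↦ z.1 + |z.2|) n₂) :
    ∃ V, IsUniqueSemiflow (cumulantField a α b n₁ n₂) (Ici 0) V := by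
  set I₁ : ℝ := ∫ z, min z.1 (z.1 ^ 2) + z.2 ∂n₁
  set I₂ : ℝ := ∫ z, z.1 + |z.2| ∂n₂
  have hI₁₀ : 0 ≤ I₁ := integral_nonneg_of_ae <| hn₁.mono fun z hz ↦
    add_nonneg (le_min hz.1 (sq_nonneg _)) hz.2
  have hI₂₀ : 0 ≤ I₂ := integral_nonneg_of_ae <| hn₂.mono fun z hz ↦
    add_nonneg hz.1 (abs_nonneg _)
  refine exists_isUniqueSemiflow_Ici_zero (C := |a| + I₁ + b + I₂)
    (fun _ hl ↦ cumulantField_fst_nonneg hn₁ hl)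
    (fun _ hl ↦ cumulantField_snd_nonneg hb (hn₂.mono fun _ hz ↦ hz.1) hl)
    (by positivity) (fun l hl ↦ ?_) (locallyLipschitzOn_cumulantField hn₁ hw₁ hn₂ hw₂)
  have hl₁ : 0 ≤ l.1 := hl.1
  have hl₂ : 0 ≤ l.2 := hl.2
  calc (cumulantField a α b n₁ n₂ l).1 + (cumulantField a α b n₁ n₂ l).2
      ≤ (|a| * l.1 + I₁ * l.2) + (b * l.1 + I₂ * (l.1 + l.2)) :=
        add_le_add (cumulantField_fst_le hα hn₁ hw₁ hl) (cumulantField_snd_le hn₂ hw₂ hl)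
    _ ≤ (|a| + I₁ + b + I₂) * (1 + (l.1 + l.2)) := by
        have : 0 ≤ |a| * (1 + l.2) + I₁ * (1 + l.1) + b * (1 + l.2) + I₂ := by positivity
        linarith

/-! ### Branching mechanisms -/

namespace BranchingMechanism

variable (B : BranchingMechanism)

theorem ae_n1_nonneg : ∀ᵐ z ∂B.n1, 0 ≤ z := by
  have hsupp : ∀ᵐ z ∂B.n1, z ∈ Mset := B.n1_supp
  filter_upwards [hsupp] with z ⟨hz₁, n, hn⟩
  exact ⟨hz₁, hn ▸ n.cast_nonneg⟩

theorem ae_n2_mem : ∀ᵐ z ∂B.n2, 0 ≤ z.1 ∧ -((1 : ℝ≥0) : ℝ) ≤ z.2 := by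
  have hsupp : ∀ᵐ z ∂B.n2, z ∈ Mm1set := B.n2_supp
  filter_upwards [hsupp] with z ⟨hz₁, n, hn, hz₂⟩
  exact ⟨hz₁, by simpa [hz₂] using (Int.cast_le (R := ℝ)).2 hn⟩

theorem integrable_n1 : Integrable (fun z ↦ min z.1 (z.1 ^ 2) + z.2) B.n1 :=
  (lintegral_ofReal_ne_top_iff_integrable (by fun_prop) <| B.ae_n1_nonneg.mono fun _ hz ↦
    add_nonneg (le_min hz.1 (sq_nonneg _)) hz.2).1 B.n1_moment

theorem integrable_n2 : Integrable (fun z ↦ z.1 + |z.2|) B.n2 :=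
  (lintegral_ofReal_ne_top_iff_integrable (by fun_prop) <| B.ae_n2_mem.mono fun _ hz ↦
    add_nonneg hz.1 (abs_nonneg _)).1 B.n2_moment

/-- The vector field `(Φ₁, Φ₂)` of a branching mechanism. -/
abbrev field : ℝ × ℝ → ℝ × ℝ := cumulantField B.a11 B.alpha B.a21 B.n1 B.n2

theorem locallyLipschitzOn_field : LocallyLipschitzOn (Ici 0) B.field :=
  locallyLipschitzOn_cumulantField B.ae_n1_nonneg B.integrable_n1 B.ae_n2_mem B.integrable_n2

variable {B}

theorem solvesCumulant_iff {l : ℝ × ℝ} {V : ℝ → ℝ × ℝ} :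
    SolvesCumulant B l V ↔ IsSolutionIn B.field (Ici 0) (Ici 0) l V := by
  have integral_iff (hV : ContinuousOn V (Ici 0)) (hmaps : MapsTo V (Ici 0) (Ici 0)) :=
    forall_prod_eq_add_integral_iff (c := l) (v := V)
      (B.locallyLipschitzOn_field.continuousOn.comp hV hmaps)
  constructor
  · rintro ⟨hV, hmaps, hint⟩
    obtain ⟨hinit, hderiv⟩ := (integral_iff hV hmaps).1 hint
    exact ⟨hinit, hmaps, hderiv⟩
  · rintro ⟨hinit, hmaps, hderiv⟩
    exact ⟨hderiv.continuousOn, hmaps, (integral_iff hderiv.continuousOn hmaps).2 ⟨hinit, hderiv⟩⟩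

end BranchingMechanism

/-- For a branching mechanism `(Φ₁,Φ₂)`, for every `λ ∈ [0,∞)²` the
cumulant equations (3.8) have a unique continuous `[0,∞)²`-valued solution on
`[0,∞)`, and the solutions satisfy the semigroup property
`V(r+t,λ) = V(r, V(t,λ))`. -/
theorem cumulant_equation_unique_solution_and_flow (B : BranchingMechanism) :
    ∃ V : ℝ → (ℝ × ℝ) → ℝ × ℝ,
      (∀ l : ℝ × ℝ, 0 ≤ l.1 → 0 ≤ l.2 →
        SolvesCumulant B l (fun t => V t l) ∧
        ∀ W : ℝ → ℝ × ℝ, SolvesCumulant B l W → ∀ t : ℝ, 0 ≤ t → W t = V t l) ∧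
      (∀ l : ℝ × ℝ, 0 ≤ l.1 → 0 ≤ l.2 → ∀ r t : ℝ, 0 ≤ r → 0 ≤ t →
        V (r + t) l = V r (V t l)) := by
  obtain ⟨V, hV⟩ := cumulant_equation_unique_solution_and_flow_general (a := B.a11)
    B.alpha_nonneg B.a21_nonneg B.ae_n1_nonneg B.integrable_n1 B.ae_n2_mem B.integrable_n2
  exact ⟨V, fun l h₁ h₂ ↦
    ⟨BranchingMechanism.solvesCumulant_iff.2 (hV.isSolutionIn ⟨h₁, h₂⟩), fun W hW t ht ↦
      hV.eqOn ⟨h₁, h₂⟩ (BranchingMechanism.solvesCumulant_iff.1 hW) ht⟩,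
    fun l h₁ h₂ r t hr ht ↦ hV.add ⟨h₁, h₂⟩ hr ht⟩
end
end
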